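/- arXiv:1604.01762 — 3 statements merged into one kernel-verified Lean document; each statement's English description precedes it below -/
import Mathlib

section
/- Let m ≥ n ≥ 2. Let v₁, v₂, ..., vₙ, v_{n+1} ∈ ℝⁿ be n-independent (i.e., every n of them are linearly independent), and let F : ℝⁿ → ℝᵐ be an injection that maps each line in ℒ(v₁, ..., v_{n+1}) onto a line, and assume that parallel lines in this family are mapped onto parallel lines. Then F is affine-additive. Moreover, there exist linearly independent vectors u₁, ..., uₙ ∈ ℝⁿ, linearly independent vectors w₁, ..., wₙ ∈ ℝᵐ, and an additive bijection f : ℝ → ℝ with f(1) = 1, such that for every x = Σᵢ αᵢuᵢ one has F(x) − F(0) = Σᵢ f(αᵢ)wᵢ. -/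
/-- The line through `a` in direction `b`. -/
def lineThru {k : ℕ} (a b : Fin k → ℝ) : Set (Fin k → ℝ) :=
  {x | ∃ t : ℝ, x = a + t • b}

/-- A subset of `ℝᵏ` is a line if it is of the form `a + ℝ b` with `b ≠ 0`. -/
def IsLine {k : ℕ} (s : Set (Fin k → ℝ)) : Prop :=
  ∃ a b : Fin k → ℝ, b ≠ 0 ∧ s = lineThru a b

/-!
If `x` and `y` lie in two different given directions, the alternating sum of `F` over the
parallelogram `a, a + x, a + x + y, a + y` lies in both of the image directions, which are
disjoint because `F` is injective. So it vanishes, i.e. `x` is a period of `a ↦ F (a + y) - F a`.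
The other `n` directions span the space, so for `y` in a given direction this difference is
constant; exchanging the roles of `x` and `y` makes it constant for all `y`, whence `F - F 0` is
an additive map `A`.

Rescale the given vectors to `e i` with `∑ i, e i = 0`, which is their only linear relation up to
scaling. On each line `A (t • e i) = f i t • A (e i)`, and applying `A` to `∑ i, t • e i = 0` gives
`∑ i, f i t • A (e i) = 0`. This relation is proportional to `∑ i, A (e i) = 0`, so all the `f i`
agree.
-/

open Module Function Submodule

section MapsCosetsOnto

variable {K K' V W : Type*} [Ring K] [AddCommGroup V] [Module K V]
  [Ring K'] [AddCommGroup W] [Module K' W]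

/-- `F` maps each affine subspace with direction `P` onto an affine subspace with direction `Q`.
For `P = K ∙ v` and `Q = K' ∙ w` these are the lines parallel to `v` and to `w`. The scalars of
the source and of the target need not be the same. -/
def MapsCosetsOnto (F : V → W) (P : Submodule K V) (Q : Submodule K' W) : Prop :=
  ∀ a, F '' AffineSubspace.mk' a P = AffineSubspace.mk' (F a) Q

namespace MapsCosetsOnto

variable {F : V → W} {P P' : Submodule K V} {Q Q' : Submodule K' W}

theorem map_add_sub_map_mem (h : MapsCosetsOnto F P Q) (a : V) {x : V} (hx : x ∈ P) :
    F (a + x) - F a ∈ Q := by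
  have hmem : F (a + x) ∈ F '' AffineSubspace.mk' a P :=
    Set.mem_image_of_mem F (by simpa [AffineSubspace.mem_mk'] using hx)
  rw [h a] at hmem
  exact hmem

theorem exists_map_add_eq (h : MapsCosetsOnto F P Q) (a : V) {y : W} (hy : y ∈ Q) :
    ∃ x ∈ P, F (a + x) = F a + y := by
  have hmem : F a + y ∈ (AffineSubspace.mk' (F a) Q : Set W) := by
    simpa [AffineSubspace.mem_mk'] using hy
  rw [← h a] at hmem
  obtain ⟨b, hb, hFb⟩ := hmem
  exact ⟨b - a, hb, by rw [add_sub_cancel, hFb]⟩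

theorem disjoint (h : MapsCosetsOnto F P Q) (h' : MapsCosetsOnto F P' Q') (hinj : Injective F)
    (hdisj : Disjoint P P') : Disjoint Q Q' := by
  refine disjoint_def.2 fun y hy hy' ↦ ?_
  obtain ⟨x, hx, hFx⟩ := h.exists_map_add_eq 0 hy
  obtain ⟨x', hx', hFx'⟩ := h'.exists_map_add_eq 0 hy'
  obtain rfl : x = x' := add_left_cancel (hinj (hFx.trans hFx'.symm))
  simpa [disjoint_def.1 hdisj x hx hx'] using hFx

theorem periodic_fwdDiff (h : MapsCosetsOnto F P Q) (h' : MapsCosetsOnto F P' Q')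
    (hinj : Injective F) (hdisj : Disjoint P P') {x y : V} (hx : x ∈ P) (hy : y ∈ P') :
    Periodic (fwdDiff y F) x := by
  intro a
  have hQ : F (a + x + y) - F (a + x) - (F (a + y) - F a) ∈ Q := by
    convert Q.sub_mem (h.map_add_sub_map_mem (a + y) hx) (h.map_add_sub_map_mem a hx) using 1
    rw [add_right_comm, sub_sub_sub_comm]
  have hQ' : F (a + x + y) - F (a + x) - (F (a + y) - F a) ∈ Q' :=
    Q'.sub_mem (h'.map_add_sub_map_mem _ hy) (h'.map_add_sub_map_mem _ hy)
  exact sub_eq_zero.1 (disjoint_def.1 (h.disjoint h' hinj hdisj) _ hQ hQ')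

theorem image_eq_of_forall_eq_add (h : MapsCosetsOnto F P Q) {A : V →+ W}
    (hA : ∀ x, F x = A x + F 0) : A '' P = Q := by
  refine Set.Subset.antisymm (Set.image_subset_iff.2 fun x hx ↦ ?_) fun y hy ↦ ?_
  · simpa [hA x] using h.map_add_sub_map_mem 0 hx
  · obtain ⟨x, hx, hFx⟩ := h.exists_map_add_eq 0 hy
    exact ⟨x, hx, by simpa [hA x, add_comm (F 0)] using hFx⟩

end MapsCosetsOnto

theorem periodic_fwdDiff_comm {G H : Type*} [AddCommGroup G] [AddCommGroup H] {F : G → H}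
    {x y : G} : Periodic (fwdDiff y F) x ↔ Periodic (fwdDiff x F) y := by
  refine forall_congr' fun a ↦ ?_
  simp only [fwdDiff, sub_eq_sub_iff_add_eq_add, add_right_comm a x y]
  rw [add_comm (F (a + y)) (F (a + x))]

theorem exists_addMonoidHom_of_periodic_fwdDiff {G H : Type*} [AddCommGroup G] [AddCommGroup H]
    {F : G → H} (h : ∀ x y, Periodic (fwdDiff y F) x) : ∃ A : G →+ H, ∀ x, F x = A x + F 0 := by
  refine ⟨AddMonoidHom.mk' (fun x ↦ F x - F 0) fun x y ↦ ?_, fun x ↦ by simp⟩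
  have hxy : F (x + y) - F x = F y - F 0 := by simpa [fwdDiff] using h x y 0
  rw [← hxy]
  abel

theorem exists_addMonoidHom_of_mapsCosetsOnto {ι : Type*} [Nonempty ι] {F : V → W}
    {P : ι → Submodule K V} {Q : ι → Submodule K' W} (hinj : Injective F)
    (hF : ∀ j, MapsCosetsOnto F (P j) (Q j)) (hdisj : Pairwise (Disjoint on P))
    (hspan : ∀ j, ⨆ k : ({j}ᶜ : Set ι), P k = ⊤) :
    ∃ A : V →+ W, ∀ x, F x = A x + F 0 := by
  have periodic_of_forall_mem (j : ι) {g : V → W} (hg : ∀ k ≠ j, ∀ x ∈ P k, Periodic g x)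
      (x : V) : Periodic g x :=
    iSup_induction (fun k : ({j}ᶜ : Set ι) ↦ P k) (motive := Periodic g) (hspan j ▸ mem_top)
      (fun k ↦ hg k k.2) (periodic_with_period_zero g) fun _ _ ↦ Periodic.add_period
  refine exists_addMonoidHom_of_periodic_fwdDiff fun x y ↦ periodic_fwdDiff_comm.2 ?_
  refine periodic_of_forall_mem (Classical.arbitrary ι) (fun j _ y hy ↦ ?_) y
  refine periodic_fwdDiff_comm.1 (periodic_of_forall_mem j (fun k hkj x hx ↦ ?_) x)
  exact (hF k).periodic_fwdDiff (hF j) hinj (hdisj hkj) hx hy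

end MapsCosetsOnto

section LinearRelations

variable {V ι : Type*} [AddCommGroup V] {v : ι → V}

section Ring

variable {R : Type*} [Ring R] [Module R V]

theorem disjoint_span_singleton_of_linearIndepOn {s : Set ι} (hv : LinearIndepOn R v s)
    {j k : ι} (hj : j ∈ s) (hk : k ∈ s) (hjk : j ≠ k) :
    Disjoint (R ∙ v j) (R ∙ v k) := by
  have hdisj : Disjoint ({⟨j, hj⟩} : Set s) {⟨k, hk⟩} := by simpa using hjk
  simpa using hv.linearIndependent.disjoint_span_image hdisj

variable [Fintype ι]

theorem eq_zero_of_sum_smul_eq_zero_of_apply_eq_zero {j : ι} (hv : LinearIndepOn R v {j}ᶜ)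
    {d : ι → R} (hd : ∑ i, d i • v i = 0) (hj : d j = 0) (i : ι) : d i = 0 := by
  classical
  by_cases hij : i = j
  · rwa [hij]
  have hsum : ∑ i ∈ ({j}ᶜ : Finset ι), d i • v i = 0 := by
    rw [← hd, Fintype.sum_eq_add_sum_compl j, hj, zero_smul, zero_add]
  have hv' : LinearIndepOn R v ({j}ᶜ : Finset ι) := by simpa using hv
  exact linearIndepOn_finset_iff.1 hv' d hsum i (by simpa using hij)

theorem coeff_eq_of_sum_eq_zero {j : ι} (hv : LinearIndepOn R v {j}ᶜ) (hsum : ∑ i, v i = 0)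
    {c : ι → R} (hc : ∑ i, c i • v i = 0) (i : ι) : c i = c j := by
  refine sub_eq_zero.1 <|
    eq_zero_of_sum_smul_eq_zero_of_apply_eq_zero hv (d := fun i ↦ c i - c j) ?_ (sub_self _) i
  simp only [sub_smul, Finset.sum_sub_distrib, hc, ← Finset.smul_sum, hsum, smul_zero, sub_zero]

end Ring

variable {K : Type*} [DivisionRing K] [Module K V] [FiniteDimensional K V] [Fintype ι]

theorem exists_rescaling_sum_eq_zero (hv : ∀ j, LinearIndepOn K v {j}ᶜ)
    (hcard : finrank K V < Fintype.card ι) :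
    ∃ e : ι → V, (∀ j, K ∙ e j = K ∙ v j) ∧ (∀ j, LinearIndepOn K e {j}ᶜ) ∧ ∑ j, e j = 0 := by
  obtain ⟨d, hsum, l, hl⟩ := Fintype.not_linearIndependent_iff.1 fun hli : LinearIndependent K v ↦
    hcard.not_ge hli.fintype_card_le_finrank
  have hd (j : ι) : d j ≠ 0 := fun hj ↦
    hl (eq_zero_of_sum_smul_eq_zero_of_apply_eq_zero (hv j) hsum hj l)
  exact ⟨fun j ↦ d j • v j, fun j ↦ span_singleton_smul_eq (hd j).isUnit (v j),
    fun j ↦ LinearIndependent.units_smul (hv j) fun k ↦ Units.mk0 (d k) (hd k), hsum⟩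

theorem iSup_span_singleton_compl_eq_top {j : ι} (hv : LinearIndepOn K v {j}ᶜ)
    (hcard : Fintype.card ι = finrank K V + 1) :
    ⨆ k : ({j}ᶜ : Set ι), K ∙ v k = ⊤ := by
  classical
  rw [← span_range_eq_iSup]
  refine hv.linearIndependent.span_eq_top_of_card_eq_finrank' ?_
  rw [Fintype.card_compl_set, hcard, Fintype.card_unique, Nat.add_sub_cancel]

end LinearRelations

section AdditiveMaps

theorem linearIndependent_addMonoidHom_comp {R S V W ι : Type*} [Ring R] [AddCommGroup V]
    [Module R V] [Ring S] [AddCommGroup W] [Module S W] {A : V →+ W} {e : ι → V}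
    (he : LinearIndependent R e) (hA : Injective A) {g : ι → R ≃+ S}
    (hg : ∀ i t, A (t • e i) = g i t • A (e i)) : LinearIndependent S (fun i ↦ A (e i)) := by
  refine linearIndependent_iff'.2 fun s c hc i hi ↦ ?_
  have hsum : A (∑ i ∈ s, (g i).symm (c i) • e i) = 0 := by
    simpa only [map_sum, hg, AddEquiv.apply_symm_apply] using hc
  have hzero := linearIndependent_iff'.1 he s _ ((map_eq_zero_iff A hA).1 hsum) i hi
  exact (map_eq_zero_iff _ (g i).symm.injective).1 hzero

variable {K K' V W : Type*} [DivisionRing K] [AddCommGroup V] [Module K V]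
  [DivisionRing K'] [AddCommGroup W] [Module K' W] {A : V →+ W}

theorem exists_addEquiv_map_smul (hA : Injective A) {x : V} (hx : x ≠ 0) {y : W}
    (hxy : A '' (K ∙ x) = (K' ∙ y)) :
    ∃ f : K ≃+ K', f 1 = 1 ∧ ∀ t : K, A (t • x) = f t • A x := by
  have hAx : A x ≠ 0 := (map_ne_zero_iff A hA).2 hx
  have hAxy : K' ∙ A x = K' ∙ y := by
    have hmem : A x ∈ (K' ∙ y : Set W) := hxy ▸ Set.mem_image_of_mem A (mem_span_singleton_self x)
    obtain ⟨c, hc⟩ := mem_span_singleton.1 hmem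
    have hc0 : c ≠ 0 := by
      rintro rfl
      exact hAx (by rw [← hc, zero_smul])
    rw [← hc, span_singleton_smul_eq hc0.isUnit]
  rw [← hAxy] at hxy
  have hmap (t : K) : ∃ s : K', s • A x = A (t • x) :=
    mem_span_singleton.1 <| hxy.subset ⟨t • x, smul_mem _ t (mem_span_singleton_self x), rfl⟩
  choose f hf using hmap
  have smul_left_inj {s t : K'} (h : s • A x = t • A x) : s = t := smul_left_injective K' hAx h
  have hadd (s t : K) : f (s + t) = f s + f t :=
    smul_left_inj (by simp only [add_smul, hf, map_add])
  have hbij : Bijective f := by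
    refine ⟨fun s t hst ↦ smul_left_injective K hx (hA ?_), fun s ↦ ?_⟩
    · simp only [← hf, hst]
    · obtain ⟨_, hz, hAz⟩ := hxy.superset (smul_mem _ s (mem_span_singleton_self (A x)))
      obtain ⟨t, rfl⟩ := mem_span_singleton.1 hz
      exact ⟨t, smul_left_inj (by rw [hf, hAz])⟩
  exact ⟨.ofBijective (AddMonoidHom.mk' f hadd) hbij,
    smul_left_inj ((hf 1).trans (by rw [one_smul, one_smul])), fun t ↦ (hf t).symm⟩

theorem exists_addEquiv_forall_map_smul {ι : Type*} [Fintype ι] [Nontrivial ι] {e : ι → V}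
    (he : ∀ j, LinearIndepOn K e {j}ᶜ) (hsum : ∑ i, e i = 0) (hA : Injective A) {w : ι → W}
    (hAw : ∀ i, A '' (K ∙ e i) = (K' ∙ w i)) :
    ∃ f : K ≃+ K', f 1 = 1 ∧ ∀ i (t : K), A (t • e i) = f t • A (e i) := by
  have he0 (i : ι) : e i ≠ 0 := by
    obtain ⟨j, hji⟩ := exists_ne i
    exact (he j).ne_zero hji.symm
  choose g hg1 hg using fun i ↦ exists_addEquiv_map_smul hA (he0 i) (hAw i)
  obtain ⟨j⟩ : Nonempty ι := inferInstance
  have hAe : LinearIndepOn K' (fun i ↦ A (e i)) {j}ᶜ :=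
    linearIndependent_addMonoidHom_comp (he j) hA fun i ↦ hg i
  have hAsum : ∑ i, A (e i) = 0 := by rw [← map_sum, hsum, map_zero]
  have hgsum (t : K) : ∑ i, g i t • A (e i) = 0 := by
    simp only [← hg, ← map_sum, ← Finset.smul_sum, hsum, smul_zero, map_zero]
  refine ⟨g j, hg1 j, fun i t ↦ ?_⟩
  rw [hg, coeff_eq_of_sum_eq_zero hAe hAsum (hgsum t) i]

end AdditiveMaps

theorem affine_additive_of_parallelism_nPlusOne_directions_general
    {K K' V W : Type*} [DivisionRing K] [AddCommGroup V] [Module K V]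
    [DivisionRing K'] [AddCommGroup W] [Module K' W]
    {n : ℕ} (hn : 2 ≤ n) (hV : finrank K V = n)
    {v : Fin (n + 1) → V} (hv : ∀ j, LinearIndepOn K v {j}ᶜ)
    {F : V → W} (hinj : Injective F)
    {w : Fin (n + 1) → W} (hF : ∀ j, MapsCosetsOnto F (K ∙ v j) (K' ∙ w j)) :
    (∃ (A : V →+ W) (c : W), ∀ x, F x = A x + c) ∧
    ∃ (u : Basis (Fin n) K V) (w : Fin n → W) (f : K ≃+ K'),
      LinearIndependent K' w ∧ f 1 = 1 ∧
      ∀ α : Fin n → K, F (∑ i, α i • u i) - F 0 = ∑ i, f (α i) • w i := by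
  have : FiniteDimensional K V := .of_finrank_pos (by omega)
  have hcard : Fintype.card (Fin (n + 1)) = finrank K V + 1 := by simp [hV]
  obtain ⟨e, hspan, he, hsum⟩ := exists_rescaling_sum_eq_zero hv (by omega)
  simp only [← hspan] at hF
  have hdisj : Pairwise (Disjoint on fun j ↦ K ∙ e j) := fun j k hjk ↦ by
    obtain ⟨l, hlj, hlk⟩ := Fin.exists_ne_and_ne_of_two_lt j k (by omega)
    exact disjoint_span_singleton_of_linearIndepOn (he l) hlj.symm hlk.symm hjk
  obtain ⟨A, hA⟩ := exists_addMonoidHom_of_mapsCosetsOnto hinj hF hdisj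
    fun j ↦ iSup_span_singleton_compl_eq_top (he j) hcard
  have hAinj : Injective A := fun x y hxy ↦ hinj (by rw [hA x, hA y, hxy])
  have : Nontrivial (Fin (n + 1)) := Fin.nontrivial_iff_two_le.2 (by omega)
  obtain ⟨f, hf1, hf⟩ := exists_addEquiv_forall_map_smul he hsum hAinj
    fun j ↦ (hF j).image_eq_of_forall_eq_add hA
  have hu : LinearIndependent K (e ∘ Fin.castSucc) :=
    (he (Fin.last n)).linearIndependent.comp
      (fun i : Fin n ↦ (⟨i.castSucc, i.castSucc_ne_last⟩ : ({Fin.last n}ᶜ : Set (Fin (n + 1)))))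
      fun _ _ hij ↦ Fin.castSucc_injective n (congrArg Subtype.val hij)
  refine ⟨⟨A, F 0, hA⟩, basisOfLinearIndependentOfCardEqFinrank' _ hu (by simp [hV]),
    fun i ↦ A (e i.castSucc), f, ?_, hf1, fun α ↦ ?_⟩
  · exact linearIndependent_addMonoidHom_comp hu hAinj fun i ↦ hf i.castSucc
  · rw [hA]
    simp [hf]

theorem coe_mk'_span_singleton_eq_lineThru {k : ℕ} (a b : Fin k → ℝ) :
    (AffineSubspace.mk' a (ℝ ∙ b) : Set (Fin k → ℝ)) = lineThru a b := by
  ext x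
  simp only [SetLike.mem_coe, AffineSubspace.mem_mk', mem_span_singleton, vsub_eq_sub, lineThru,
    Set.mem_ofPred_eq, eq_sub_iff_add_eq', eq_comm]

theorem exists_mapsCosetsOnto_of_image_lineThru {n m : ℕ} {F : (Fin n → ℝ) → (Fin m → ℝ)}
    {v : Fin n → ℝ} (hpar : ∀ a₁ a₂, ∃ w c₁ c₂, F '' lineThru a₁ v = lineThru c₁ w ∧
      F '' lineThru a₂ v = lineThru c₂ w) :
    ∃ w, MapsCosetsOnto F (ℝ ∙ v) (ℝ ∙ w) := by
  simp only [← coe_mk'_span_singleton_eq_lineThru] at hpar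
  obtain ⟨w, c, -, hc, -⟩ := hpar 0 0
  refine ⟨w, fun a ↦ ?_⟩
  obtain ⟨w', c₁, c₂, h₁, h₂⟩ := hpar 0 a
  have hdir : ℝ ∙ w = ℝ ∙ w' := by
    simpa using congrArg AffineSubspace.direction (SetLike.coe_injective (hc.symm.trans h₁))
  have hFa : F a ∈ AffineSubspace.mk' c₂ (ℝ ∙ w') :=
    h₂.subset (Set.mem_image_of_mem F (AffineSubspace.self_mem_mk' _ _))
  rw [h₂, ← AffineSubspace.mk'_eq hFa, AffineSubspace.direction_mk', hdir]

/-- **Theorem (fundamental theorem under a parallelism condition, n+1 directions).**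
If `m ≥ n ≥ 2`, `v₁, …, v_{n+1} ∈ ℝⁿ` are `n`-independent and `F : ℝⁿ → ℝᵐ` is an
injection mapping each line in `ℒ(v₁,…,v_{n+1})` onto a line, so that parallel lines
of the family go to parallel lines, then `F` is affine-additive; moreover there are
linearly independent `u₁,…,uₙ ∈ ℝⁿ`, linearly independent `w₁,…,wₙ ∈ ℝᵐ`, and an
additive bijection `f : ℝ → ℝ` with `f 1 = 1` such that
`F (∑ αᵢ uᵢ) - F 0 = ∑ f (αᵢ) wᵢ`. -/
theorem affine_additive_of_parallelism_nPlusOne_directions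
    {n m : ℕ} (hn : 2 ≤ n) (hnm : n ≤ m)
    (v : Fin (n + 1) → (Fin n → ℝ))
    (hv : ∀ s : Finset (Fin (n + 1)), s.card = n →
      LinearIndependent ℝ (fun i : s => v i.1))
    (F : (Fin n → ℝ) → (Fin m → ℝ))
    (hinj : Function.Injective F)
    (honto : ∀ (i : Fin (n + 1)) (a : Fin n → ℝ), IsLine (F '' lineThru a (v i)))
    (hpar : ∀ (i : Fin (n + 1)) (a₁ a₂ : Fin n → ℝ), ∃ w : Fin m → ℝ, w ≠ 0 ∧
      ∃ c₁ c₂ : Fin m → ℝ,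
        F '' lineThru a₁ (v i) = lineThru c₁ w ∧
        F '' lineThru a₂ (v i) = lineThru c₂ w) :
    (∃ (A : (Fin n → ℝ) → (Fin m → ℝ)) (c : Fin m → ℝ),
      (∀ x y, A (x + y) = A x + A y) ∧ ∀ x, F x = A x + c) ∧
    ∃ (u : Fin n → (Fin n → ℝ)) (w : Fin n → (Fin m → ℝ)) (f : ℝ → ℝ),
      LinearIndependent ℝ u ∧ LinearIndependent ℝ w ∧
      Function.Bijective f ∧ (∀ a b : ℝ, f (a + b) = f a + f b) ∧ f 1 = 1 ∧
      ∀ α : Fin n → ℝ, F (∑ i, α i • u i) - F 0 = ∑ i, f (α i) • w i := by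
  have hindep (j : Fin (n + 1)) : LinearIndepOn ℝ v {j}ᶜ := by
    have hli : LinearIndepOn ℝ v ({j}ᶜ : Finset _) := hv {j}ᶜ (by simp [Finset.card_compl])
    simpa only [Finset.coe_compl, Finset.coe_singleton] using hli
  choose w hw using fun i ↦ exists_mapsCosetsOnto_of_image_lineThru fun a₁ a₂ ↦
    (hpar i a₁ a₂).imp fun _ ↦ And.right
  obtain ⟨⟨A, c, hA⟩, u, w, f, hwli, hf1, hrep⟩ :=
    affine_additive_of_parallelism_nPlusOne_directions_general hn (finrank_fin_fun ℝ) hindep hinj hw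
  exact ⟨⟨A, c, A.map_add, hA⟩,
    u, w, f, u.linearIndependent, hwli, f.bijective, f.map_add, hf1, hrep⟩
end

section
/- Let m ≥ n ≥ 2. Let v₁, v₂, ..., vₙ ∈ ℝⁿ be linearly independent, and let F : ℝⁿ → ℝᵐ be an injection that maps each line in ℒ(v₁, ..., vₙ) onto a line, and moreover assume that parallel lines in this family are mapped onto parallel lines. Then there exist linearly independent vectors u₁, ..., uₙ ∈ ℝⁿ (one may take uᵢ = vᵢ), linearly independent vectors w₁, ..., wₙ ∈ ℝᵐ, and bijective functions f₁, ..., fₙ : ℝ → ℝ with fᵢ(0) = 0 and fᵢ(1) = 1, such that for every x = Σᵢ αᵢuᵢ one has F(x) − F(0) = Σᵢ fᵢ(αᵢ)wᵢ. -/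
/-!
Changing a point by a vector of `span {vⱼ | j ∈ S}` changes its image by an arbitrary vector of
`span {wⱼ | j ∈ S}`, where `wⱼ = F vⱼ - F 0` spans the common direction of the images of the lines
parallel to `vⱼ`. Hence, if `wᵢ` were in the span of the other `wⱼ`, then `F 0 + wᵢ` would be
attained both on the line `ℝ vᵢ` and on the span of the other `vⱼ`, against injectivity. Finally,
the increment of `F` along `t vᵢ` is a multiple of `wᵢ`, and moving the base point inside the span
of the other `vⱼ` alters it by a vector of the span of the other `wⱼ`; by independence it is not
altered at all. So the increments along the axes add up.
-/

open AffineSubspace Submodule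

section GeneralSpaces

variable {ι K L V W : Type*} [Ring K] [AddCommGroup V] [Module K V] [AddCommGroup W]

/-- The map `F` sends every line parallel to `v i` onto a line parallel to `w i`: the parallelism
condition with the image directions fixed once and for all. Basing the image line at `F a` loses
nothing, since it passes through that point. -/
def MapsLinesOntoLines (K L : Type*) [Ring K] [Module K V] [Ring L] [Module L W]
    (F : V → W) (v : ι → V) (w : ι → W) : Prop :=
  ∀ i a, F '' (mk' a (K ∙ v i) : Set V) = mk' (F a) (L ∙ w i)

namespace MapsLinesOntoLines

section Ring

variable [Ring L] [Module L W] {F : V → W} {v : ι → V} {w : ι → W}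

theorem sub_mem_span_singleton (h : MapsLinesOntoLines K L F v w) (i : ι) (a : V) (t : K) :
    F (a + t • v i) - F a ∈ L ∙ w i := by
  have hmem : F (a + t • v i) ∈ F '' (mk' a (K ∙ v i) : Set V) :=
    Set.mem_image_of_mem F (by simp [smul_mem, mem_span_singleton_self])
  rwa [h i a] at hmem

theorem exists_apply_add_smul_eq (h : MapsLinesOntoLines K L F v w) (i : ι) (a : V) (s : L) :
    ∃ t : K, F (a + t • v i) = F a + s • w i := by
  have hmem : F a + s • w i ∈ (mk' (F a) (L ∙ w i) : Set W) := by
    simp [smul_mem, mem_span_singleton_self]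
  rw [← h i a] at hmem
  obtain ⟨x, hx, hFx⟩ := hmem
  obtain ⟨t, ht⟩ := mem_span_singleton.mp (mem_mk'.mp hx)
  exact ⟨t, by rw [ht, vsub_eq_sub, add_sub_cancel, hFx]⟩

theorem sub_mem_span_image (h : MapsLinesOntoLines K L F v w) {S : Set ι} {b : V}
    (hb : b ∈ span K (v '' S)) (a : V) : F (a + b) - F a ∈ span L (w '' S) := by
  induction hb using Submodule.closure_induction generalizing a with
  | zero => simp
  | add x y _ _ hx hy =>
    have hsum := add_mem (hy (a + x)) (hx a)
    rwa [sub_add_sub_cancel, add_assoc] at hsum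
  | smul_mem t x hx =>
    obtain ⟨i, hi, rfl⟩ := hx
    exact span_mono (Set.singleton_subset_iff.mpr (Set.mem_image_of_mem w hi))
      (h.sub_mem_span_singleton i a t)

theorem exists_mem_span_image_apply_add_eq (h : MapsLinesOntoLines K L F v w) {S : Set ι} {y : W}
    (hy : y ∈ span L (w '' S)) (a : V) : ∃ b ∈ span K (v '' S), F (a + b) = F a + y := by
  induction hy using Submodule.closure_induction generalizing a with
  | zero => exact ⟨0, zero_mem _, by simp⟩
  | add y z _ _ hy hz =>
    obtain ⟨b, hb, hFb⟩ := hy a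
    obtain ⟨c, hc, hFc⟩ := hz (a + b)
    exact ⟨b + c, add_mem hb hc, by rw [← add_assoc, hFc, hFb, add_assoc]⟩
  | smul_mem s y hy =>
    obtain ⟨i, hi, rfl⟩ := hy
    obtain ⟨t, ht⟩ := h.exists_apply_add_smul_eq i a s
    exact ⟨t • v i, smul_mem _ _ (subset_span (Set.mem_image_of_mem v hi)), ht⟩

theorem apply_add_add_smul_sub (h : MapsLinesOntoLines K L F v w) (hw : LinearIndependent L w)
    {i : ι} {b : V} (hb : b ∈ span K (v '' {i}ᶜ)) (a : V) (t : K) :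
    F (a + b + t • v i) - F (a + b) = F (a + t • v i) - F a := by
  have hdisj : Disjoint (L ∙ w i) (span L (w '' {i}ᶜ)) := by
    simpa only [Set.image_singleton] using
      hw.disjoint_span_image (disjoint_compl_right : Disjoint {i} {i}ᶜ)
  have along_i := sub_mem (h.sub_mem_span_singleton i (a + b) t) (h.sub_mem_span_singleton i a t)
  have along_others := sub_mem (h.sub_mem_span_image hb (a + t • v i)) (h.sub_mem_span_image hb a)
  rw [add_right_comm, sub_sub_sub_comm] at along_others
  exact sub_eq_zero.mp (disjoint_def.mp hdisj _ along_i along_others)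

theorem apply_sum_sub (h : MapsLinesOntoLines K L F v w) (hw : LinearIndependent L w)
    (s : Finset ι) (α : ι → K) :
    F (∑ i ∈ s, α i • v i) - F 0 = ∑ i ∈ s, (F (α i • v i) - F 0) := by
  classical
  induction s using Finset.induction_on with
  | empty => simp
  | insert i s hi ih =>
    have hb : ∑ j ∈ s, α j • v j ∈ span K (v '' {i}ᶜ) := sum_mem fun j hj ↦
      smul_mem _ _ (subset_span (Set.mem_image_of_mem v (ne_of_mem_of_not_mem hj hi)))
    have increment := h.apply_add_add_smul_sub hw hb 0 (α i)
    rw [zero_add, zero_add] at increment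
    rw [Finset.sum_insert hi, Finset.sum_insert hi, ← ih, ← increment, sub_add_sub_cancel,
      add_comm (α i • v i)]

end Ring

section DivisionRing

variable [DivisionRing L] [Module L W] {F : V → W} {v : ι → V} {w : ι → W}

theorem linearIndependent (h : MapsLinesOntoLines K L F v w) (hF : Function.Injective F)
    (hv : LinearIndependent K v) (hw : ∀ i, w i ≠ 0) : LinearIndependent L w := by
  refine linearIndependent_iff_notMem_span.mpr fun i hi ↦ hw i ?_
  obtain ⟨b, hb, hFb⟩ := h.exists_mem_span_image_apply_add_eq hi 0
  obtain ⟨t, ht⟩ := h.exists_apply_add_smul_eq i 0 1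
  rw [one_smul] at ht
  have hbt : t • v i = b := add_left_cancel (hF (ht.trans hFb.symm))
  have ht0 : t = 0 := hv.eq_zero_of_smul_mem_span i t (hbt ▸ hb)
  simpa [ht0] using ht

theorem exists_bijective_coordinate [Nontrivial K] (h : MapsLinesOntoLines K L F v w)
    {i : ι} (hF : Function.Injective fun t : K ↦ F (t • v i)) (hw : w i = F (v i) - F 0) :
    ∃ f : K → L, (Function.Bijective f ∧ f 0 = 0 ∧ f 1 = 1) ∧
      ∀ t, F (t • v i) - F 0 = f t • w i := by
  have hwi : w i ≠ 0 := by simpa [hw, sub_eq_zero] using hF.ne one_ne_zero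
  have hline (t : K) : ∃ s : L, F (t • v i) - F 0 = s • w i := by
    obtain ⟨s, hs⟩ := mem_span_singleton.mp (h.sub_mem_span_singleton i 0 t)
    exact ⟨s, by rw [hs, zero_add]⟩
  choose f hf using hline
  have f_eq {t : K} {s : L} (hts : F (t • v i) - F 0 = s • w i) : f t = s :=
    smul_left_injective L hwi ((hf t).symm.trans hts)
  refine ⟨f, ⟨⟨fun t t' htt' ↦ ?_, fun s ↦ ?_⟩, f_eq (by simp), f_eq (by simp [hw])⟩, hf⟩
  · have hFt : F (t • v i) = F (t' • v i) := by
      rw [← sub_left_inj (a := F 0), hf, hf, htt']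
    exact hF hFt
  · obtain ⟨t, ht⟩ := h.exists_apply_add_smul_eq i 0 s
    exact ⟨t, f_eq (by rw [← zero_add (t • v i), ht, add_sub_cancel_left])⟩

end DivisionRing

end MapsLinesOntoLines

variable [DivisionRing L] [Module L W]

theorem mapsLinesOntoLines_of_parallel {F : V → W} {v : ι → V}
    (hF : Function.Injective F) (hv : ∀ i, v i ≠ 0)
    (hpar : ∀ (i : ι) (a₁ a₂ : V), ∃ w : W, w ≠ 0 ∧ ∃ c₁ c₂ : W,
      F '' (mk' a₁ (K ∙ v i) : Set V) = mk' c₁ (L ∙ w) ∧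
      F '' (mk' a₂ (K ∙ v i) : Set V) = mk' c₂ (L ∙ w)) :
    MapsLinesOntoLines K L F v fun i ↦ F (v i) - F 0 := by
  intro i a
  obtain ⟨w, hw, c₁, c₂, h₁, h₂⟩ := hpar i a 0
  have ha : F a ∈ mk' c₁ (L ∙ w) := h₁.subset <| Set.mem_image_of_mem F (self_mem_mk' _ _)
  have h0 : F 0 ∈ mk' c₂ (L ∙ w) := h₂.subset <| Set.mem_image_of_mem F (self_mem_mk' _ _)
  have hvi : F (v i) ∈ mk' c₂ (L ∙ w) :=
    h₂.subset <| Set.mem_image_of_mem F (by simp [mem_span_singleton_self])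
  have hmem : F (v i) - F 0 ∈ L ∙ w := by
    simpa only [direction_mk', vsub_eq_sub] using vsub_mem_direction hvi h0
  have hspan : (L ∙ (F (v i) - F 0)) = L ∙ w :=
    ((nonzero_span_atom w hw).le_iff_eq
      (by simpa [sub_eq_zero] using hF.ne (hv i))).mp ((span_singleton_le_iff_mem _ _).mpr hmem)
  rw [h₁, ← mk'_eq ha, direction_mk', hspan]

theorem diagonal_form_of_parallelism_n_directions_general [Nontrivial K]
    (v : ι → V) (hv : LinearIndependent K v) (F : V → W) (hinj : Function.Injective F)
    (hpar : ∀ (i : ι) (a₁ a₂ : V), ∃ w : W, w ≠ 0 ∧ ∃ c₁ c₂ : W,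
      F '' (mk' a₁ (K ∙ v i) : Set V) = mk' c₁ (L ∙ w) ∧
      F '' (mk' a₂ (K ∙ v i) : Set V) = mk' c₂ (L ∙ w)) :
    ∃ (w : ι → W) (f : ι → K → L),
      LinearIndependent L w ∧
      (∀ i, Function.Bijective (f i) ∧ f i 0 = 0 ∧ f i 1 = 1) ∧
      ∀ (s : Finset ι) (α : ι → K),
        F (∑ i ∈ s, α i • v i) - F 0 = ∑ i ∈ s, f i (α i) • w i := by
  have hlines := mapsLinesOntoLines_of_parallel hinj hv.ne_zero hpar
  have hw := hlines.linearIndependent hinj hv fun i ↦ sub_ne_zero.mpr (hinj.ne (hv.ne_zero i))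
  choose f hf hfw using fun i ↦
    hlines.exists_bijective_coordinate (hinj.comp (hv.smul_left_injective i)) rfl
  refine ⟨_, f, hw, hf, fun s α ↦ ?_⟩
  rw [hlines.apply_sum_sub hw]
  exact Finset.sum_congr rfl fun i _ ↦ hfw i (α i)

end GeneralSpaces

theorem lineThru_eq_mk' {k : ℕ} (a b : Fin k → ℝ) : lineThru a b = mk' a (ℝ ∙ b) := by
  ext x
  simp [lineThru, mem_span_singleton, eq_sub_iff_add_eq', eq_comm]

/-- **Theorem (diagonal form under a parallelism condition, n directions).**
If `m ≥ n ≥ 2`, `v₁,…,vₙ ∈ ℝⁿ` are linearly independent and `F : ℝⁿ → ℝᵐ` is an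
injection mapping each line in `ℒ(v₁,…,vₙ)` onto a line, with parallel lines of the
family mapped onto parallel lines, then (taking `uᵢ = vᵢ`) there exist linearly
independent `w₁,…,wₙ ∈ ℝᵐ` and bijections `fᵢ : ℝ → ℝ` with `fᵢ 0 = 0`, `fᵢ 1 = 1`,
such that `F (∑ αᵢ vᵢ) - F 0 = ∑ fᵢ (αᵢ) wᵢ`. -/
theorem diagonal_form_of_parallelism_n_directions
    {n m : ℕ} (hn : 2 ≤ n) (hnm : n ≤ m)
    (v : Fin n → (Fin n → ℝ)) (hv : LinearIndependent ℝ v)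
    (F : (Fin n → ℝ) → (Fin m → ℝ))
    (hinj : Function.Injective F)
    (honto : ∀ (i : Fin n) (a : Fin n → ℝ), IsLine (F '' lineThru a (v i)))
    (hpar : ∀ (i : Fin n) (a₁ a₂ : Fin n → ℝ), ∃ w : Fin m → ℝ, w ≠ 0 ∧
      ∃ c₁ c₂ : Fin m → ℝ,
        F '' lineThru a₁ (v i) = lineThru c₁ w ∧
        F '' lineThru a₂ (v i) = lineThru c₂ w) :
    ∃ (w : Fin n → (Fin m → ℝ)) (f : Fin n → ℝ → ℝ),
      LinearIndependent ℝ w ∧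
      (∀ i, Function.Bijective (f i) ∧ f i 0 = 0 ∧ f i 1 = 1) ∧
      ∀ α : Fin n → ℝ, F (∑ i, α i • v i) - F 0 = ∑ i, f i (α i) • w i := by
  simp only [lineThru_eq_mk'] at hpar
  obtain ⟨w, f, hw, hf, hsum⟩ := diagonal_form_of_parallelism_n_directions_general v hv F hinj hpar
  exact ⟨w, f, hw, hf, hsum Finset.univ⟩
end

section
/- Let m, n ≥ 2. Let v₁, ..., vₙ ∈ ℝⁿ be linearly independent and let F : ℝⁿ → ℝᵐ be an injection that maps each line in ℒ(v₁, ..., vₙ) onto a line. Then there exists a basis u₁, ..., uₙ of ℝⁿ (one may take uᵢ = vᵢ) such that for every x = Σᵢ αᵢuᵢ, F(x) = Σ_{δ ∈ {0,1}ⁿ} u_δ ∏ᵢ fᵢ(αᵢ)^{δᵢ}, where u_δ ∈ ℝᵐ for each δ ∈ {0,1}ⁿ, and f₁, ..., fₙ : ℝ → ℝ are bijections with fᵢ(0) = 0 and fᵢ(1) = 1 for i = 1, ..., n. Moreover m ≥ n, and if m = n then F is a bijection. -/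
/-!
In the coordinates `α` with respect to `v`, every line parallel to an axis is mapped bijectively
onto a line, which defines a bijective coordinate change `ℝ → ℝ` on it. Comparing the two rulings of
the image of a coordinate plane shows that parallel lines undergo the same coordinate change, so
that after composing with one bijection `fᵢ` per axis the map becomes affine in each variable. Thus
`F` is an injective polynomial map up to the `fᵢ`, and the claims on dimension and surjectivity
follow from the theorem of Białynicki-Birula and Rosenlicht: an injective polynomial map
`f : ℝⁿ → ℝⁿ` is surjective.

The image of `f` is open; suppose that its complement is nonempty. Choose a part `S` of the
complement whose Zariski closure `V` is irreducible and does not shrink when `S` is cut down to a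
smaller nonempty open part. The image misses the generic points of `V`, and near a suitable point
`p ∈ S` the variety `V` is a Lipschitz graph over some of the coordinates. A small disc through `p`
transverse to `V` meets `V` only at `p`, so its boundary lies in the image; approximating the lift
of the boundary by polynomials deforms the disc into one that lies in the image entirely, while its
boundary stays in the image throughout. This changes the number of intersections with `V` from one
to none, although its parity is invariant: for a dominant map between affine varieties of equal
dimension, the parity of the number of real points in a generic fibre is constant along a path as
long as no point escapes through the boundary.
-/

namespace Collineation

/-! ### Maps sending coordinate lines onto lines -/

section LineCoordinate

open AffineMap (lineMap lineMap_apply lineMap_apply_module lineMap_apply_zero lineMap_apply_one)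
open Function (update Injective Bijective Injective2)

variable {𝕜 V : Type*} [Field 𝕜] [AddCommGroup V] [Module 𝕜 V] {φ : 𝕜 → V} {g g' : 𝕜 → 𝕜}

/-- `φ` parametrises a line, and `g t` is the affine coordinate of the point `φ t` on it, normalised
to be `0` at `φ 0` and `1` at `φ 1`. -/
structure IsLineCoordinate (φ : 𝕜 → V) (g : 𝕜 → 𝕜) : Prop where
  ne : φ 0 ≠ φ 1
  bijective : Bijective g
  apply_eq (t : 𝕜) : φ t = lineMap (φ 0) (φ 1) (g t)

namespace IsLineCoordinate

theorem map_zero (h : IsLineCoordinate φ g) : g 0 = 0 :=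
  (AffineMap.lineMap_eq_left_iff.1 (h.apply_eq 0).symm).resolve_left h.ne

theorem map_one (h : IsLineCoordinate φ g) : g 1 = 1 :=
  (AffineMap.lineMap_eq_right_iff.1 (h.apply_eq 1).symm).resolve_left h.ne

theorem unique (h : IsLineCoordinate φ g) (h' : IsLineCoordinate φ g') : g = g' :=
  funext fun t ↦ AffineMap.lineMap_injective 𝕜 h.ne ((h.apply_eq t).symm.trans (h'.apply_eq t))

theorem injective (h : IsLineCoordinate φ g) : Injective φ := by
  have hφ : φ = lineMap (φ 0) (φ 1) ∘ g := funext h.apply_eq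
  exact hφ ▸ (AffineMap.lineMap_injective 𝕜 h.ne).comp h.bijective.injective

theorem range_eq (h : IsLineCoordinate φ g) :
    Set.range φ = Set.range (lineMap (φ 0) (φ 1) : 𝕜 → V) := by
  rw [← h.bijective.surjective.range_comp (lineMap (φ 0) (φ 1) : 𝕜 → V)]
  exact congrArg Set.range (funext h.apply_eq)

end IsLineCoordinate

theorem exists_isLineCoordinate (hφ : Injective φ) {p q : V}
    (h : Set.range φ = Set.range (lineMap p q : 𝕜 → V)) : ∃ g, IsLineCoordinate φ g := by
  have hmem (t : 𝕜) : ∃ s : 𝕜, lineMap p q s = φ t := h.subset (Set.mem_range_self t)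
  choose s hs using hmem
  have hs_inj : Injective s := fun t t' e ↦ hφ (by rw [← hs, ← hs, e])
  have hne : s 1 - s 0 ≠ 0 := sub_ne_zero.2 (hs_inj.ne one_ne_zero)
  have hpq : p ≠ q := by
    rintro rfl
    exact one_ne_zero (hφ (by rw [← hs, ← hs]; simp))
  have hs_surj : Function.Surjective s := fun c ↦ by
    obtain ⟨t, ht⟩ : lineMap p q c ∈ Set.range φ := h.superset (Set.mem_range_self c)
    exact ⟨t, AffineMap.lineMap_injective 𝕜 hpq ((hs t).trans ht)⟩
  refine ⟨fun t ↦ (s t - s 0) / (s 1 - s 0), hφ.ne zero_ne_one, ⟨?_, ?_⟩, fun t ↦ ?_⟩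
  · exact fun t t' e ↦ hs_inj (sub_left_injective ((div_left_inj' hne).1 e))
  · intro c
    obtain ⟨t, ht⟩ := hs_surj (s 0 + c * (s 1 - s 0))
    exact ⟨t, by simp [ht, hne]⟩
  · rw [← hs 0, ← hs 1, ← AffineMap.apply_lineMap, ← hs t]
    simp [lineMap_apply, div_mul_cancel₀ _ hne]

theorem IsLineCoordinate.exists_comp (h : IsLineCoordinate φ g) {e : 𝕜 → 𝕜} (he : Bijective e) :
    ∃ g', IsLineCoordinate (φ ∘ e) g' :=
  exists_isLineCoordinate (h.injective.comp he.injective)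
    (by rw [he.surjective.range_comp, h.range_eq])

section TwoDirections

variable {G : 𝕜 → 𝕜 → V} {g k : 𝕜 → 𝕜 → 𝕜}

theorem apply_eq_of_isLineCoordinate (hg : ∀ y, IsLineCoordinate (G · y) (g y))
    (hk : ∀ x, IsLineCoordinate (G x) (k x)) (x y : 𝕜) :
    G x y = G 0 0 + k x y • (G 0 1 - G 0 0) + ((1 - k x y) * g 0 x) • (G 1 0 - G 0 0) +
      (k x y * g 1 x) • (G 1 1 - G 0 1) := by
  rw [(hk x).apply_eq y, (hg 0).apply_eq x, (hg 1).apply_eq x]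
  simp only [lineMap_apply_module]
  module

theorem coordinate_eq_of_parallel (hG : Injective2 G) (hg : ∀ y, IsLineCoordinate (G · y) (g y))
    (hk : ∀ x, IsLineCoordinate (G x) (k x)) {c : 𝕜}
    (hc : G 1 1 - G 0 1 = c • (G 1 0 - G 0 0)) : g 0 = g 1 := by
  have hmul (x : 𝕜) : c * g 1 x = g 0 x := by
    by_contra hne
    obtain ⟨y, hy⟩ := (hk x).bijective.surjective (-g 0 x / (c * g 1 x - g 0 x))
    obtain ⟨y', hy'⟩ := (hk 0).bijective.surjective (k x y)
    have hcoeff : (1 - k x y) * g 0 x + k x y * g 1 x * c = 0 := by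
      rw [hy]
      field_simp [sub_ne_zero.2 hne]
      ring
    have hG_eq : G x y = G 0 y' := by
      rw [apply_eq_of_isLineCoordinate hg hk, apply_eq_of_isLineCoordinate hg hk 0 y', hy', hc,
        (hg 0).map_zero, (hg 1).map_zero, add_assoc, smul_smul, ← add_smul, hcoeff]
      module
    obtain rfl : x = 0 := (hG hG_eq).1
    exact hne (by rw [(hg 0).map_zero, (hg 1).map_zero, mul_zero])
  obtain rfl : c = 1 := by simpa [(hg 0).map_one, (hg 1).map_one] using hmul 1
  exact funext fun x ↦ by rw [← hmul, one_mul]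

theorem coordinate_relations_of_linearIndependent (hg : ∀ y, IsLineCoordinate (G · y) (g y))
    (hk : ∀ x, IsLineCoordinate (G x) (k x))
    (hind : LinearIndependent 𝕜 ![G 0 1 - G 0 0, G 1 0 - G 0 0, G 1 1 - G 0 1]) (x y : 𝕜) :
    k x y = k 0 y + g y x * (k 1 y - k 0 y) ∧ (1 - k x y) * g 0 x = g y x * (1 - k 1 y) ∧
      k x y * g 1 x = g y x * k 1 y := by
  have hG := (hg y).apply_eq x
  simp only [lineMap_apply_module] at hG
  rw [apply_eq_of_isLineCoordinate hg hk x y, apply_eq_of_isLineCoordinate hg hk 0 y,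
    apply_eq_of_isLineCoordinate hg hk 1 y, (hg 0).map_zero, (hg 1).map_zero, (hg 0).map_one,
    (hg 1).map_one, ← sub_eq_zero] at hG
  have hcoeff := Fintype.linearIndependent_iff.1 hind
    ![k x y - (k 0 y + g y x * (k 1 y - k 0 y)), (1 - k x y) * g 0 x - g y x * (1 - k 1 y),
      k x y * g 1 x - g y x * k 1 y] (by
        rw [← hG]
        simp only [Fin.sum_univ_three, Matrix.cons_val]
        module)
  exact ⟨sub_eq_zero.1 (hcoeff 0), sub_eq_zero.1 (hcoeff 1), sub_eq_zero.1 (hcoeff 2)⟩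

theorem coordinate_eq_of_linearIndependent (hg : ∀ y, IsLineCoordinate (G · y) (g y))
    (hk : ∀ x, IsLineCoordinate (G x) (k x))
    (hind : LinearIndependent 𝕜 ![G 0 1 - G 0 0, G 1 0 - G 0 0, G 1 1 - G 0 1]) : g 0 = g 1 := by
  funext x
  by_cases! hy : ∃ y : 𝕜, y ≠ 0 ∧ y ≠ 1
  · obtain ⟨y, hy0, hy1⟩ := hy
    have hk0 (x : 𝕜) : k x y ≠ 0 := (hk x).map_zero ▸ (hk x).bijective.injective.ne hy0
    have hk1 (x : 𝕜) : k x y ≠ 1 := (hk x).map_one ▸ (hk x).bijective.injective.ne hy1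
    have hrel := coordinate_relations_of_linearIndependent hg hk hind
    have hconst : k 1 y = k 0 y := by
      by_contra hne
      obtain ⟨x, hx⟩ := (hg y).bijective.surjective (-k 0 y / (k 1 y - k 0 y))
      refine hk0 x ?_
      rw [(hrel x y).1, hx, div_mul_cancel₀ _ (sub_ne_zero.2 hne), add_neg_cancel]
    obtain ⟨hkx, hg0, hg1⟩ := hrel x y
    have hkx : k x y = k 1 y := by rw [hkx, hconst, sub_self, mul_zero, add_zero]
    rw [hkx, mul_comm] at hg0 hg1
    rw [mul_right_cancel₀ (sub_ne_zero.2 (hk1 1).symm) hg0, mul_right_cancel₀ (hk0 1) hg1]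
  · by_cases hx : x = 0
    · rw [hx, (hg 0).map_zero, (hg 1).map_zero]
    · rw [hy x hx, (hg 0).map_one, (hg 1).map_one]

/- The lines `y = 0` and `y = 1` have disjoint images, so these are either parallel or skew. -/
theorem coordinate_zero_eq_coordinate_one (hG : Injective2 G)
    (hg : ∀ y, IsLineCoordinate (G · y) (g y)) (hk : ∀ x, IsLineCoordinate (G x) (k x)) :
    g 0 = g 1 := by
  by_cases! hpar : ∃ c : 𝕜, c • (G 1 0 - G 0 0) = G 1 1 - G 0 1
  · obtain ⟨c, hc⟩ := hpar
    exact coordinate_eq_of_parallel hG hg hk hc.symm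
  refine coordinate_eq_of_linearIndependent hg hk (linearIndependent_finCons.2 ⟨?_, ?_⟩)
  · exact (LinearIndependent.pair_iff' (sub_ne_zero.2 (hg 0).ne.symm)).2 hpar
  · rw [Matrix.range_cons_cons_empty, Submodule.mem_span_pair]
    rintro ⟨s, t, hst⟩
    obtain ⟨x, hx⟩ := (hg 0).bijective.surjective s
    obtain ⟨x', hx'⟩ := (hg 1).bijective.surjective (-t)
    have hG_eq : G x 0 = G x' 1 := by
      rw [(hg 0).apply_eq x, (hg 1).apply_eq x', hx, hx']
      simp only [lineMap_apply, vsub_eq_sub, vadd_eq_add]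
      rw [← sub_eq_zero, ← sub_eq_zero.2 hst]
      module
    exact zero_ne_one (hG hG_eq).2

theorem coordinate_eq_coordinate (hG : Injective2 G) (hg : ∀ y, IsLineCoordinate (G · y) (g y))
    (hk : ∀ x, IsLineCoordinate (G x) (k x)) (y y' : 𝕜) : g y = g y' := by
  obtain rfl | hne := eq_or_ne y y'
  · rfl
  have he : Bijective (lineMap y y' : 𝕜 → 𝕜) :=
    ⟨AffineMap.lineMap_injective 𝕜 hne, fun z ↦ ⟨(z - y) / (y' - y), by
      simp [lineMap_apply, sub_ne_zero.2 hne.symm]⟩⟩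
  choose k' hk' using fun x ↦ (hk x).exists_comp he
  have hG' : Injective2 fun x t ↦ G x (lineMap y y' t) := fun x x' t t' h ↦
    (hG h).imp_right fun h ↦ he.injective h
  simpa using coordinate_zero_eq_coordinate_one hG' (fun t ↦ hg (lineMap y y' t)) hk'

end TwoDirections

section Update

variable {ι : Type*} [DecidableEq ι] {G : (ι → 𝕜) → V}

theorem IsLineCoordinate.update (hG : Injective G)
    (hline : ∀ i α, ∃ g, IsLineCoordinate (fun t ↦ G (update α i t)) g) {i : ι} {α : ι → 𝕜}
    (hg : IsLineCoordinate (fun t ↦ G (Function.update α i t)) g) (j : ι) (s : 𝕜) :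
    IsLineCoordinate (fun t ↦ G (Function.update (Function.update α j s) i t)) g := by
  obtain rfl | hij := eq_or_ne i j
  · simpa using hg
  choose g' hg' using fun y ↦ hline i (Function.update α j y)
  choose k hk using fun x ↦ hline j (Function.update α i x)
  have hG' : Injective2 fun x y ↦ G (Function.update (Function.update α j y) i x) := by
    intro x x' y y' h
    have hup := hG h
    have hj := congrFun hup j
    simp only [Function.update_of_ne hij.symm, Function.update_self] at hj
    exact ⟨by simpa using congrFun hup i, hj⟩
  have heq := coordinate_eq_coordinate hG' hg'
    (fun x ↦ by simpa only [Function.update_comm hij.symm] using hk x) (α j) s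
  have hαj := hg' (α j)
  rw [Function.update_eq_self] at hαj
  rw [hg.unique hαj, heq]
  exact hg' s

theorem exists_forall_isLineCoordinate [Finite ι] (hG : Injective G)
    (hline : ∀ i α, ∃ g, IsLineCoordinate (fun t ↦ G (update α i t)) g) :
    ∃ f : ι → 𝕜 → 𝕜, ∀ i α, IsLineCoordinate (fun t ↦ G (update α i t)) (f i) := by
  cases nonempty_fintype ι
  choose f hf using fun i ↦ hline i 0
  have hpiecewise (i : ι) (α : ι → 𝕜) (S : Finset ι) :
      IsLineCoordinate (fun t ↦ G (update (S.piecewise α 0) i t)) (f i) := by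
    induction S using Finset.induction_on with
    | empty => simpa using hf i
    | insert j S _ ih =>
      rw [Finset.piecewise_insert]
      exact ih.update hG hline j (α j)
  exact ⟨f, fun i α ↦ by simpa using hpiecewise i α Finset.univ⟩

end Update

theorem exists_eq_sum_prod_smul_of_update_eq_lineMap {R M : Type*} [CommRing R] [AddCommGroup M]
    [Module R M] {n : ℕ} {H : (Fin n → R) → M}
    (hH : ∀ z i t, H (update z i t) = lineMap (H (update z i 0)) (H (update z i 1)) t) :
    ∃ u : (Fin n → Bool) → M, ∀ z, H z = ∑ δ, (∏ i, if δ i then z i else 1) • u δ := by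
  induction n with
  | zero => exact ⟨fun _ ↦ H 0, fun z ↦ by simp [Subsingleton.elim z 0]⟩
  | succ n ih =>
    let slice (c : R) (z : Fin n → R) : M := H (Fin.cons c z)
    have hslice (c : R) (z i t) :
        slice c (update z i t) = lineMap (slice c (update z i 0)) (slice c (update z i 1)) t := by
      simp only [slice, Fin.cons_update]
      exact hH _ _ _
    obtain ⟨u₀, hu₀⟩ := ih (hslice 0)
    obtain ⟨u₁, hu₁⟩ := ih (H := fun z ↦ slice 1 z - slice 0 z) fun z i t ↦ by
      simp only [hslice _ z i t, lineMap_apply_module]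
      module
    refine ⟨fun δ ↦ if δ 0 then u₁ (Fin.tail δ) else u₀ (Fin.tail δ), fun z ↦ ?_⟩
    have hz : H z = slice 0 (Fin.tail z) + z 0 • (slice 1 (Fin.tail z) - slice 0 (Fin.tail z)) := by
      have hcons (t : R) : (Fin.cons t (Fin.tail z) : Fin (n + 1) → R) = update z 0 t := by
        rw [← Fin.update_cons_zero (z 0), Fin.cons_self_tail]
      conv_lhs => rw [← Function.update_eq_self 0 z, hH]
      simp only [slice, hcons, lineMap_apply_module]
      module
    rw [hz, hu₁, hu₀, ← (Fin.consEquiv fun _ : Fin (n + 1) ↦ Bool).sum_comp,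
      Fintype.sum_prod_type, Fintype.sum_bool, add_comm, Finset.smul_sum]
    simp [Fin.consEquiv, Fin.prod_univ_succ, mul_smul, Fin.tail]

theorem exists_eq_sum_prod_smul {n : ℕ} {G : (Fin n → 𝕜) → V} (hG : Injective G)
    (hline : ∀ i α, ∃ g, IsLineCoordinate (fun t ↦ G (update α i t)) g) :
    ∃ (u : (Fin n → Bool) → V) (f : Fin n → 𝕜 → 𝕜),
      (∀ i, Bijective (f i) ∧ f i 0 = 0 ∧ f i 1 = 1) ∧
      ∀ α, G α = ∑ δ, (∏ i, if δ i then f i (α i) else 1) • u δ := by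
  obtain ⟨f, hf⟩ := exists_forall_isLineCoordinate hG hline
  have hf_norm (i) : Bijective (f i) ∧ f i 0 = 0 ∧ f i 1 = 1 :=
    ⟨(hf i 0).bijective, (hf i 0).map_zero, (hf i 0).map_one⟩
  let e (i : Fin n) : 𝕜 ≃ 𝕜 := Equiv.ofBijective (f i) (hf_norm i).1
  have hf_symm (i t) : f i ((e i).symm t) = t := (e i).apply_symm_apply t
  have hsymm_zero (i) : (e i).symm 0 = 0 := (e i).symm_apply_eq.2 (hf_norm i).2.1.symm
  have hsymm_one (i) : (e i).symm 1 = 1 := (e i).symm_apply_eq.2 (hf_norm i).2.2.symm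
  obtain ⟨u, hu⟩ := exists_eq_sum_prod_smul_of_update_eq_lineMap
    (H := fun z ↦ G fun i ↦ (e i).symm (z i)) fun z i t ↦ by
      have hup (s : 𝕜) : (fun j ↦ (e j).symm (update z i s j)) =
          update (fun j ↦ (e j).symm (z j)) i ((e i).symm s) :=
        funext fun j ↦ Function.apply_update (fun j ↦ (e j).symm) z i s j
      simp only [hup, hsymm_zero, hsymm_one]
      rw [(hf i _).apply_eq, hf_symm]
  refine ⟨u, f, hf_norm, fun α ↦ ?_⟩
  simpa [e] using hu fun i ↦ e i (α i)

end LineCoordinate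

end Collineation

namespace RealPolynomialMap

open Polynomial

/-! ### Parity of the number of real roots -/

theorem eval_mul_eval_pos_of_forall_mem_uIcc {g : ℝ[X]} {a b : ℝ}
    (hg : ∀ t ∈ Set.uIcc a b, g.eval t ≠ 0) : 0 < g.eval a * g.eval b := by
  by_contra! hle
  have hzero : (0 : ℝ) ∈ Set.uIcc (g.eval a) (g.eval b) := by
    rw [Set.mem_uIcc]
    rcases mul_nonpos_iff.1 hle with ⟨ha, hb⟩ | ⟨ha, hb⟩
    exacts [Or.inr ⟨hb, ha⟩, Or.inl ⟨ha, hb⟩]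
  obtain ⟨t, ht, hgt⟩ := intermediate_value_uIcc g.continuousOn hzero
  exact hg t ht hgt

theorem even_natDegree_of_forall_eval_ne_zero {g : ℝ[X]} (hg : ∀ t, g.eval t ≠ 0) :
    Even g.natDegree := by
  induction g using UniqueFactorizationMonoid.induction_on_prime with
  | h₁ => simp
  | h₂ u hu => simp [natDegree_eq_zero_of_isUnit hu]
  | h₃ q p hq hp ih =>
    have hp_root (t : ℝ) : p.eval t ≠ 0 := fun h ↦ hg t (by simp [h])
    have hp_deg : p.natDegree = 2 := by
      refine le_antisymm hp.irreducible.natDegree_le_two ?_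
      by_contra! hlt
      have hdeg : p.degree = 1 :=
        degree_eq_iff_natDegree_eq_of_pos one_pos |>.2
          (le_antisymm (Nat.le_of_lt_succ hlt) hp.irreducible.natDegree_pos)
      obtain ⟨t, ht⟩ := exists_root_of_degree_eq_one hdeg
      exact hp_root t ht
    rw [natDegree_mul hp.ne_zero hq, hp_deg, Nat.even_add]
    simpa using ih fun t h ↦ hg t (by simp [h])

theorem exists_eq_prod_roots_mul {q : ℝ[X]} (hq : q ≠ 0) :
    ∃ g : ℝ[X], (q.roots.map fun a ↦ X - C a).prod * g = q ∧
      q.roots.card + g.natDegree = q.natDegree ∧ ∀ t, g.eval t ≠ 0 := by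
  obtain ⟨g, hprod, hdeg, hroots⟩ := q.exists_prod_multiset_X_sub_C_mul
  have hg0 : g ≠ 0 := right_ne_zero_of_mul (hprod.trans_ne hq)
  refine ⟨g, hprod, hdeg, fun t ht ↦ ?_⟩
  have hmem : t ∈ g.roots := (mem_roots hg0).2 ht
  simp [hroots] at hmem

theorem even_card_roots_iff_even_natDegree (q : ℝ[X]) :
    Even q.roots.card ↔ Even q.natDegree := by
  rcases eq_or_ne q 0 with rfl | hq
  · simp
  obtain ⟨g, -, hdeg, hg⟩ := exists_eq_prod_roots_mul hq
  simp [← hdeg, Nat.even_add, even_natDegree_of_forall_eval_ne_zero hg]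

theorem prod_sub_mul_sub_pos_iff {s : Multiset ℝ} {a b : ℝ} (hab : a < b) (ha : a ∉ s)
    (hb : b ∉ s) :
    0 < (s.map fun t ↦ (a - t) * (b - t)).prod ↔ Even (s.countP (· ∈ Set.Ioo a b)) := by
  induction s using Multiset.induction_on with
  | empty => simp
  | cons t s ih =>
    simp only [Multiset.mem_cons, not_or] at ha hb
    have hne : (s.map fun t ↦ (a - t) * (b - t)).prod ≠ 0 := by
      simp only [ne_eq, Multiset.prod_eq_zero_iff, Multiset.mem_map, mul_eq_zero, sub_eq_zero,
        not_exists, not_and, not_or]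
      exact fun r hr ↦ ⟨fun h ↦ ha.2 (h ▸ hr), fun h ↦ hb.2 (h ▸ hr)⟩
    rw [Multiset.map_cons, Multiset.prod_cons, Multiset.countP_cons]
    by_cases ht : t ∈ Set.Ioo a b
    · have hneg : (a - t) * (b - t) < 0 :=
        mul_neg_of_neg_of_pos (sub_neg.2 ht.1) (sub_pos.2 ht.2)
      rw [if_pos ht, Nat.even_add_one, ← ih ha.2 hb.2, not_lt, hne.le_iff_lt]
      exact ⟨fun h ↦ neg_of_mul_pos_right h hneg.le, mul_pos_of_neg_of_neg hneg⟩
    · have hpos : 0 < (a - t) * (b - t) := by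
        rcases lt_or_gt_of_ne ha.1 with hat | hta
        · have hbt : b < t := (not_lt.1 fun h ↦ ht ⟨hat, h⟩).lt_of_ne hb.1
          exact mul_pos_of_neg_of_neg (sub_neg.2 hat) (sub_neg.2 hbt)
        · exact mul_pos (sub_pos.2 hta) (sub_pos.2 (hta.trans hab))
      rw [if_neg ht, add_zero, ← ih ha.2 hb.2, mul_pos_iff_of_pos_left hpos]

theorem eval_mul_eval_pos_iff_even_countP_roots {q : ℝ[X]} {a b : ℝ} (hab : a < b)
    (ha : q.eval a ≠ 0) (hb : q.eval b ≠ 0) :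
    0 < q.eval a * q.eval b ↔ Even (q.roots.countP (· ∈ Set.Ioo a b)) := by
  obtain ⟨g, hprod, -, hg⟩ := exists_eq_prod_roots_mul (q := q) (by rintro rfl; simp at ha)
  have heval : q.eval a * q.eval b =
      (q.roots.map fun t ↦ (a - t) * (b - t)).prod * (g.eval a * g.eval b) := by
    conv_lhs => rw [← hprod]
    simp only [eval_mul, eval_multiset_prod, Multiset.map_map, Function.comp_apply, eval_sub,
      eval_X, eval_C, Multiset.prod_map_mul]
    ring
  rw [heval, mul_pos_iff_of_pos_right (eval_mul_eval_pos_of_forall_mem_uIcc fun t _ ↦ hg t),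
    prod_sub_mul_sub_pos_iff hab (mt isRoot_of_mem_roots ha) (mt isRoot_of_mem_roots hb)]

theorem eval_mul_eval_pos_iff_even_countP_le_roots {q : ℝ[X]} {lo hi up c c' : ℝ} (hq : q ≠ 0)
    (hgap : ∀ t ∈ q.roots, t ∉ Set.Ioo lo hi ∧ t ≤ up) (hc : c ∈ Set.Ioo lo hi)
    (hup : up < c') (hhi : hi < c') :
    0 < q.eval c * q.eval c' ↔ Even (q.roots.countP (hi ≤ ·)) := by
  rw [eval_mul_eval_pos_iff_even_countP_roots (hc.2.trans hhi)
    (fun h ↦ (hgap c ((mem_roots hq).2 h)).1 hc)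
    fun h ↦ (hgap c' ((mem_roots hq).2 h)).2.not_gt hup]
  refine iff_of_eq (congrArg Even (Multiset.countP_congr rfl fun t ht ↦ propext ⟨fun h ↦ ?_, ?_⟩))
  · exact not_lt.1 fun hlt ↦ (hgap t ht).1 ⟨hc.1.trans h.1, hlt⟩
  · exact fun h ↦ ⟨hc.2.trans_le h, (hgap t ht).2.trans_lt hup⟩

theorem map_evalRingHom_ne_zero_of_isPrimitive {p : ℝ[X][X]} (hp : p.IsPrimitive) (σ : ℝ) :
    p.map (evalRingHom σ) ≠ 0 := by
  intro hzero
  refine not_isUnit_X_sub_C σ (hp _ ((C_dvd_iff_dvd_coeff _ _).2 fun i ↦ ?_))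
  simpa [dvd_iff_isRoot] using congrArg (coeff · i) hzero

theorem exists_isPrimitive_eq_C_mul (P : ℝ[X][X]) :
    ∃ (c : ℝ[X]) (p : ℝ[X][X]), p.IsPrimitive ∧ P = C c * p := by
  let _ : NormalizedGCDMonoid ℝ[X] := UniqueFactorizationMonoid.toNormalizedGCDMonoid ℝ[X]
  exact ⟨_, _, P.isPrimitive_primPart, P.eq_C_content_mul_primPart⟩

theorem exists_mem_forall_isRoot_map_eval_ne_zero {p : ℝ[X][X]} (hp : p.IsPrimitive)
    {w : ℝ[X]} (hw : w ≠ 0) {I : Set ℝ} (hI : I.Infinite) :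
    ∃ c ∈ I, ∀ σ, w.IsRoot σ → (p.map (evalRingHom σ)).eval c ≠ 0 := by
  have hfin : (⋃ σ ∈ w.roots.toFinset,
      ((p.map (evalRingHom σ)).roots.toFinset : Set ℝ)).Finite :=
    Set.Finite.biUnion (Finset.finite_toSet _) fun σ _ ↦ Finset.finite_toSet _
  obtain ⟨c, hcI, hc⟩ := (hI.sdiff hfin).nonempty
  refine ⟨c, hcI, fun σ hσ hroot ↦ hc ?_⟩
  simp only [Set.mem_iUnion, Finset.mem_coe, Multiset.mem_toFinset]
  exact ⟨σ, (mem_roots hw).2 hσ,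
    (mem_roots (map_evalRingHom_ne_zero_of_isPrimitive hp σ)).2 hroot⟩

/- Dividing `P` by its content leaves a family none of whose members vanishes; its value at a
generic point of the gap then has no zero on the parameter interval, so its sign is constant. -/
theorem even_countP_roots_map_evalRingHom_iff {P : ℝ[X][X]} {w : ℝ[X]} {a b lo hi up : ℝ}
    (ha : w.eval a ≠ 0) (hb : w.eval b ≠ 0) (hlh : lo < hi)
    (hP : ∀ σ ∈ Set.uIcc a b, w.eval σ ≠ 0 → P.map (evalRingHom σ) ≠ 0)
    (hgap : ∀ σ ∈ Set.uIcc a b, w.eval σ ≠ 0 → ∀ t ∈ (P.map (evalRingHom σ)).roots,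
      t ∉ Set.Ioo lo hi ∧ t ≤ up) :
    Even ((P.map (evalRingHom a)).roots.countP (hi ≤ ·)) ↔
      Even ((P.map (evalRingHom b)).roots.countP (hi ≤ ·)) := by
  obtain ⟨k, p, hp, rfl⟩ := exists_isPrimitive_eq_C_mul P
  have hw : w ≠ 0 := by rintro rfl; simp at ha
  obtain ⟨c, hc, hcw⟩ := exists_mem_forall_isRoot_map_eval_ne_zero hp hw (Set.Ioo_infinite hlh)
  obtain ⟨c', hc', hcw'⟩ :=
    exists_mem_forall_isRoot_map_eval_ne_zero hp hw (Set.Ioi_infinite (max up hi))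
  obtain ⟨hup, hhi⟩ := max_lt_iff.1 (Set.mem_Ioi.1 hc')
  let D : ℝ[X] := p.eval (C c) * p.eval (C c')
  have hD (σ : ℝ) : D.eval σ =
      (p.map (evalRingHom σ)).eval c * (p.map (evalRingHom σ)).eval c' := by
    rw [eval_mul, map_evalRingHom_eval, map_evalRingHom_eval]
  have hPD (σ : ℝ) : ((C k * p).map (evalRingHom σ)).eval c *
      ((C k * p).map (evalRingHom σ)).eval c' = k.eval σ ^ 2 * D.eval σ := by
    simp only [Polynomial.map_mul, map_C, eval_mul, eval_C, coe_evalRingHom, hD]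
    ring
  have hcount {σ : ℝ} (hσ : σ ∈ Set.uIcc a b) (hwσ : w.eval σ ≠ 0) :
      Even (((C k * p).map (evalRingHom σ)).roots.countP (hi ≤ ·)) ↔ 0 < D.eval σ := by
    have hk : k.eval σ ≠ 0 := fun h ↦ hP σ hσ hwσ (by simp [h])
    rw [← eval_mul_eval_pos_iff_even_countP_le_roots (hP σ hσ hwσ) (hgap σ hσ hwσ) hc hup hhi,
      hPD, mul_pos_iff_of_pos_left (by positivity)]
  have hD0 : 0 < D.eval a * D.eval b := eval_mul_eval_pos_of_forall_mem_uIcc fun σ hσ hzero ↦ by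
    by_cases hwσ : w.eval σ = 0
    · exact mul_ne_zero (hcw σ hwσ) (hcw' σ hwσ) ((hD σ).symm.trans hzero)
    have hroot : ((C k * p).map (evalRingHom σ)).eval c *
        ((C k * p).map (evalRingHom σ)).eval c' = 0 := by rw [hPD, hzero, mul_zero]
    rcases mul_eq_zero.1 hroot with h | h
    · exact (hgap σ hσ hwσ c ((mem_roots (hP σ hσ hwσ)).2 h)).1 hc
    · exact (hgap σ hσ hwσ c' ((mem_roots (hP σ hσ hwσ)).2 h)).2.not_gt hup
  rw [hcount Set.left_mem_uIcc ha, hcount Set.right_mem_uIcc hb, pos_iff_pos_of_mul_pos hD0]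

/-! ### Generic generators -/

section PrimitiveElement

open IntermediateField

variable {K L κ : Type*} [Field K] [Field L] [Algebra K L] {x : κ → L}

theorem exists_algHom_apply_ne_of_adjoin_range_eq_top {Ω : Type*} [Field Ω] [Algebra K Ω]
    (hx : IntermediateField.adjoin K (Set.range x) = ⊤) {φ ψ : L →ₐ[K] Ω} (hne : φ ≠ ψ) :
    ∃ j, φ (x j) ≠ ψ (x j) := by
  by_contra! heq
  refine hne (AlgHom.ext fun z ↦ ?_)
  have hz : z ∈ IntermediateField.adjoin K (Set.range x) := hx ▸ mem_top
  induction hz using IntermediateField.adjoin_induction with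
  | mem y hy => obtain ⟨j, rfl⟩ := hy; exact heq j
  | algebraMap c => simp
  | add y z _ _ hy hz => simp [hy, hz]
  | inv y _ hy => simp [hy]
  | mul y z _ _ hy hz => simp [hy, hz]

/- For each embedding `ψ ≠ φ` of `L`, the coefficients with `φ θ = ψ θ` form the zero set of a
nonzero affine polynomial; an infinite grid is not covered by finitely many of these. -/
theorem exists_adjoin_add_sum_smul_eq_top [Fintype κ] [FiniteDimensional K L]
    [Algebra.IsSeparable K L]
    (hx : IntermediateField.adjoin K (Set.range x) = ⊤) (α : L) {S : Set K} (hS : S.Infinite) :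
    ∃ e : κ → K, (∀ j, e j ∈ S) ∧ K⟮α + ∑ j, e j • x j⟯ = ⊤ := by
  classical
  let Ω := AlgebraicClosure K
  let φ : L →ₐ[K] Ω := IsAlgClosed.lift
  let ℓ (ψ : L →ₐ[K] Ω) : MvPolynomial κ Ω :=
    MvPolynomial.C (φ α - ψ α) + ∑ j, MvPolynomial.C (φ (x j) - ψ (x j)) * MvPolynomial.X j
  have hℓ (ψ : L →ₐ[K] Ω) (hψ : φ ≠ ψ) : ℓ ψ ≠ 0 := by
    obtain ⟨i, hi⟩ := exists_algHom_apply_ne_of_adjoin_range_eq_top hx hψ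
    intro hzero
    have hsingle := congrArg (MvPolynomial.eval (Pi.single i 1)) hzero
    have hconst := congrArg (MvPolynomial.eval 0) hzero
    simp only [ℓ, map_add, map_sum, map_mul, MvPolynomial.eval_C, MvPolynomial.eval_X,
      Pi.single_apply, mul_ite, mul_one, mul_zero, Finset.sum_ite_eq', Finset.mem_univ, if_true,
      Pi.zero_apply, Finset.sum_const_zero, map_zero, add_zero] at hsingle hconst
    exact hi (sub_eq_zero.1 (by simpa [hconst] using hsingle))
  have hprod : ∏ ψ ∈ Finset.univ.erase φ, ℓ ψ ≠ 0 :=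
    Finset.prod_ne_zero_iff.2 fun ψ hψ ↦ hℓ ψ (Finset.ne_of_mem_erase hψ).symm
  obtain ⟨e, heS, he⟩ : ∃ e ∈ Set.pi .univ fun _ : κ ↦ algebraMap K Ω '' S,
      MvPolynomial.eval e (∏ ψ ∈ Finset.univ.erase φ, ℓ ψ) ≠ 0 := by
    by_contra! hzero
    exact hprod (MvPolynomial.funext_set _
      (fun _ ↦ hS.image (algebraMap K Ω).injective.injOn) fun e he ↦ by simpa using hzero e he)
  choose e' he'S he' using fun j ↦ heS j trivial
  refine ⟨e', he'S, (Field.primitive_element_iff_algHom_eq_of_eval K Ω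
    (fun _ ↦ IsAlgClosed.splits _) _ φ).2 fun ψ hψ ↦ ?_⟩
  by_contra hne
  rw [map_prod, Finset.prod_ne_zero_iff] at he
  refine he ψ (Finset.mem_erase.2 ⟨fun h ↦ hne h.symm, Finset.mem_univ _⟩) ?_
  simp only [map_add, map_sum, Algebra.smul_def, map_mul, AlgHom.commutes, he'] at hψ
  simp only [ℓ, map_add, map_sum, map_mul, MvPolynomial.eval_C, MvPolynomial.eval_X, sub_mul,
    Finset.sum_sub_distrib]
  simp only [mul_comm (e _)] at hψ
  linear_combination hψ

end PrimitiveElement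

section GenericGenerator

variable {A R : Type*} [CommRing A] [CommRing R] [Algebra A R]

variable (A) in
/-- `θ` generates `R` over `A` up to nonzero denominators in `A`; for domains this says that `θ`
is a primitive element of the extension of fraction fields. -/
def IsGenericGenerator (θ : R) : Prop :=
  ∀ r : R, ∃ a : A, a ≠ 0 ∧ a • r ∈ Algebra.adjoin A {θ}

theorem isGenericGenerator_of_adjoin_eq_top [IsDomain A] {K L : Type*} [Field K] [Field L]
    [Algebra A K] [IsFractionRing A K] [Algebra R L] [FaithfulSMul R L] [Algebra K L] [Algebra A L]
    [IsScalarTower A K L] [IsScalarTower A R L] [Algebra.IsAlgebraic K L] {θ : R}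
    (hθ : IntermediateField.adjoin K {algebraMap R L θ} = ⊤) : IsGenericGenerator A θ := by
  intro r
  have hr : algebraMap R L r ∈ Algebra.adjoin K {algebraMap R L θ} := by
    rw [← IntermediateField.adjoin_simple_toSubalgebra_of_isAlgebraic
      (Algebra.IsAlgebraic.isAlgebraic _), hθ]
    trivial
  rw [Algebra.adjoin_singleton_eq_range_aeval] at hr
  obtain ⟨p, hp⟩ := hr
  obtain ⟨a, ha, hap⟩ := IsLocalization.integerNormalization_spec (nonZeroDivisors A) p
  refine ⟨a, nonZeroDivisors.ne_zero ha, ?_⟩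
  rw [Algebra.adjoin_singleton_eq_range_aeval]
  refine ⟨IsLocalization.integerNormalization (nonZeroDivisors A) p,
    FaithfulSMul.algebraMap_injective R L ?_⟩
  change algebraMap R L (aeval θ _) = _
  rw [← aeval_algebraMap_apply, ← aeval_map_algebraMap K, hap,
    ← IsScalarTower.algebraMap_smul K a p, map_smul, IsScalarTower.algebraMap_smul,
    Algebra.smul_def a r, map_mul, ← IsScalarTower.algebraMap_apply, Algebra.smul_def]
  exact congrArg _ hp

theorem adjoin_range_algebraMap_eq_top {K L κ : Type*} [Field K] [Field L] [Algebra A K]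
    [Algebra R L] [IsFractionRing R L] [Algebra K L] [Algebra A L]
    [IsScalarTower A K L] [IsScalarTower A R L] {x : κ → R}
    (hx : Algebra.adjoin A (Set.range x) = ⊤) :
    IntermediateField.adjoin K (Set.range (algebraMap R L ∘ x)) = ⊤ := by
  have hR (r : R) : algebraMap R L r ∈
      IntermediateField.adjoin K (Set.range (algebraMap R L ∘ x)) := by
    have hr : r ∈ Algebra.adjoin A (Set.range x) := hx ▸ Algebra.mem_top
    induction hr using Algebra.adjoin_induction with
    | mem y hy =>
      obtain ⟨j, rfl⟩ := hy
      exact IntermediateField.subset_adjoin K _ ⟨j, rfl⟩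
    | algebraMap c =>
      rw [← IsScalarTower.algebraMap_apply A R L, IsScalarTower.algebraMap_apply A K L]
      exact IntermediateField.algebraMap_mem _ _
    | add y z _ _ hy hz => exact map_add (algebraMap R L) y z ▸ add_mem hy hz
    | mul y z _ _ hy hz => exact map_mul (algebraMap R L) y z ▸ mul_mem hy hz
  refine eq_top_iff.2 fun z _ ↦ ?_
  obtain ⟨r, s, -, rfl⟩ := IsFractionRing.div_surjective (A := R) z
  exact div_mem (hR r) (hR s)

theorem exists_isGenericGenerator_add_sum_smul [IsDomain A] [IsDomain R] [CharZero R]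
    [FaithfulSMul A R] [Algebra.IsAlgebraic A R] {κ : Type*} [Fintype κ] {x : κ → R}
    (hx : Algebra.adjoin A (Set.range x) = ⊤) (α : R) {S : Set A} (hS : S.Infinite) :
    ∃ e : κ → A, (∀ j, e j ∈ S) ∧ IsGenericGenerator A (α + ∑ j, e j • x j) := by
  let K := FractionRing A
  let L := FractionRing R
  let _ : Algebra K L := FractionRing.liftAlgebra A L
  have : IsScalarTower A K L := FractionRing.isScalarTower_liftAlgebra A L
  have : CharZero A := (algebraMap A R).charZero
  have hgen := adjoin_range_algebraMap_eq_top (K := K) (L := L) hx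
  have hintegral : ∀ y ∈ Set.range (algebraMap R L ∘ x), IsIntegral K y :=
    fun y _ ↦ Algebra.IsIntegral.isIntegral y
  have : FiniteDimensional K L := by
    have hfin := IntermediateField.finiteDimensional_adjoin hintegral
    rw [hgen] at hfin
    exact IntermediateField.topEquiv.toLinearEquiv.finiteDimensional
  obtain ⟨e, he, hθ⟩ := exists_adjoin_add_sum_smul_eq_top hgen (algebraMap R L α)
    (hS.image (IsFractionRing.injective A K).injOn)
  choose e' he'S he' using he
  refine ⟨e', he'S, isGenericGenerator_of_adjoin_eq_top (K := K) (L := L) ?_⟩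
  convert hθ using 3
  simp [← he', Algebra.smul_def, ← IsScalarTower.algebraMap_apply]

end GenericGenerator

/-! ### Fibres as root sets -/

theorem exists_C_leadingCoeff_pow_mul_eq {A : Type*} [CommRing A] (Θ P : A[X])
    (hΘ : 0 < Θ.natDegree) :
    ∃ (N : ℕ) (Q S : A[X]), C (Θ.leadingCoeff ^ N) * P = Θ * Q + S ∧
      S.natDegree < Θ.natDegree := by
  induction hn : P.natDegree using Nat.strong_induction_on generalizing P with
  | _ n ih =>
    subst hn
    rcases lt_or_ge P.natDegree Θ.natDegree with hlt | hle
    · exact ⟨0, 0, P, by simp, hlt⟩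
    obtain ⟨N, Q, S, hQS, hS⟩ :=
      ih _ (natDegree_cancelLeads_lt_of_natDegree_le_natDegree hle (hΘ.trans_le hle)) _ rfl
    refine ⟨N + 1, Q + C (Θ.leadingCoeff ^ N) * (C P.leadingCoeff *
      X ^ (P.natDegree - Θ.natDegree)), S, ?_, hS⟩
    rw [cancelLeads, Nat.sub_eq_zero_of_le hle, pow_zero, mul_one] at hQS
    rw [pow_succ, C_mul]
    linear_combination hQS

theorem exists_pow_smul_mem_of_adjoin_eq_top {A R : Type*} [CommRing A] [CommRing R] [Algebra A R]
    {S : Subalgebra A R} {s : Set R} (hs : Algebra.adjoin A s = ⊤) {h : A}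
    (hmem : ∀ y ∈ s, h • y ∈ S) (y : R) : ∃ N : ℕ, h ^ N • y ∈ S := by
  have hy : y ∈ Algebra.adjoin A s := hs ▸ Algebra.mem_top
  induction hy using Algebra.adjoin_induction with
  | mem y hy => exact ⟨1, by simpa using hmem y hy⟩
  | algebraMap c => exact ⟨0, by simp⟩
  | add y z _ _ hy hz =>
    obtain ⟨N, hN⟩ := hy
    obtain ⟨M, hM⟩ := hz
    refine ⟨N + M, ?_⟩
    rw [smul_add]
    refine add_mem ?_ ?_
    · rw [pow_add, mul_comm, mul_smul]
      exact S.smul_mem hN _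
    · rw [pow_add, mul_smul]
      exact S.smul_mem hM _
  | mul y z _ _ hy hz =>
    obtain ⟨N, hN⟩ := hy
    obtain ⟨M, hM⟩ := hz
    exact ⟨N + M, by rw [pow_add, ← smul_mul_smul_comm]; exact mul_mem hN hM⟩

/- `R` is contained in the localization of the image of `φ` at `φ h`, through which `ψ` factors. -/
theorem exists_ringHom_comp_eq {P R F : Type*} [CommRing P] [CommRing R] [Field F] (φ : P →+* R)
    (ψ : P →+* F) (hker : RingHom.ker φ ≤ RingHom.ker ψ) {h : P} (hh : ψ h ≠ 0)
    (hφ : ∀ r : R, ∃ (N : ℕ) (Q : P), φ Q = φ h ^ N * r) : ∃ y : R →+* F, y.comp φ = ψ := by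
  have hcongr {p q : P} (hpq : φ p = φ q) : ψ p = ψ q := by
    have hmem : p - q ∈ RingHom.ker φ := by rw [RingHom.mem_ker, map_sub, hpq, sub_self]
    have hzero := hker hmem
    rwa [RingHom.mem_ker, map_sub, sub_eq_zero] at hzero
  choose N Q hQ using hφ
  let y (r : R) : F := ψ (Q r) / ψ h ^ N r
  have hy {r : R} {M : ℕ} {S : P} (hS : φ S = φ h ^ M * r) : ψ S = ψ h ^ M * y r := by
    have hcross : ψ (h ^ N r * S) = ψ (h ^ M * Q r) :=
      hcongr (by simp only [map_mul, map_pow, hS, hQ]; ring)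
    simp only [map_mul, map_pow] at hcross
    have := pow_ne_zero (N r) hh
    simp only [y]
    field_simp
    linear_combination hcross
  have hyφ (p : P) : y (φ p) = ψ p := by simpa using (hy (S := p) (M := 0) (by simp)).symm
  refine ⟨⟨⟨⟨y, ?_⟩, fun r s ↦ ?_⟩, ?_, fun r s ↦ ?_⟩, RingHom.ext hyφ⟩
  · simpa using hyφ 1
  · have hrs := hy (r := r * s) (M := N r + N s) (S := Q r * Q s)
      (by rw [map_mul, hQ, hQ]; ring)
    rw [map_mul, hy (hQ r), hy (hQ s)] at hrs
    exact mul_left_cancel₀ (pow_ne_zero (N r + N s) hh) (by linear_combination -hrs)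
  · simpa using hyφ 0
  · have hrs := hy (r := r + s) (M := N r + N s) (S := h ^ N s * Q r + h ^ N r * Q s)
      (by simp only [map_add, map_mul, map_pow, hQ]; ring)
    simp only [map_add, map_mul, map_pow, hy (hQ r), hy (hQ s)] at hrs
    exact mul_left_cancel₀ (pow_ne_zero (N r + N s) hh) (by linear_combination -hrs)

theorem IsGenericGenerator.exists_ne_zero_forall_exists_aeval_eq {A R : Type*} [CommRing A]
    [IsDomain A] [CommRing R] [Algebra A R] [Algebra.FiniteType A R] {θ : R}
    (hθ : IsGenericGenerator A θ) :
    ∃ h : A, h ≠ 0 ∧ ∀ y : R, ∃ (N : ℕ) (Q : A[X]), aeval θ Q = algebraMap A R h ^ N * y := by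
  obtain ⟨s, hs⟩ := Algebra.FiniteType.out (R := A) (A := R)
  choose a ha0 ha using hθ
  refine ⟨∏ y ∈ s, a y, Finset.prod_ne_zero_iff.2 fun y _ ↦ ha0 y, fun y ↦ ?_⟩
  obtain ⟨N, hN⟩ := exists_pow_smul_mem_of_adjoin_eq_top (S := Algebra.adjoin A {θ}) hs
    (h := ∏ y ∈ s, a y) (fun y hy ↦ by
      obtain ⟨c, hc⟩ : a y ∣ ∏ y ∈ s, a y := Finset.dvd_prod_of_mem a hy
      rw [hc, mul_comm, mul_smul]
      exact Subalgebra.smul_mem _ (ha y) c) y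
  rw [Algebra.adjoin_singleton_eq_range_aeval] at hN
  obtain ⟨Q, hQ⟩ := hN
  exact ⟨N, Q, by simpa [Algebra.smul_def] using hQ⟩

section Fibre

variable {A R F : Type*} [CommRing A] [CommRing R] [Algebra A R] [Field F]

variable (R) in
/-- The `F`-points of `R` lying over the `F`-point `b` of `A`, a point being a homomorphism
to `F`. -/
def fibre (b : A →+* F) : Set (R →+* F) :=
  {y | y.comp (algebraMap A R) = b}

theorem apply_algebraMap_of_mem_fibre {b : A →+* F} {y : R →+* F} (hy : y ∈ fibre R b) (a : A) :
    y (algebraMap A R a) = b a :=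
  RingHom.congr_fun hy a

theorem apply_aeval_of_mem_fibre {b : A →+* F} {y : R →+* F} (hy : y ∈ fibre R b) (θ : R)
    (P : A[X]) : y (aeval θ P) = (P.map b).eval (y θ) := by
  rw [aeval_def, eval_map, hom_eval₂, show y.comp (algebraMap A R) = b from hy]

variable (F) in
/-- The polynomial `Θ` over `A` describes the fibres of the points of `R` over those of `A`: as
long as `b h ≠ 0`, evaluation at `θ` identifies the fibre over `b` with the roots of `Θ.map b`, all
of which are simple. -/
structure IsFibrePolynomial (θ : R) (h : A) (Θ : A[X]) : Prop where
  ne_zero : h ≠ 0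
  leadingCoeff_ne_zero {b : A →+* F} (hb : b h ≠ 0) : b Θ.leadingCoeff ≠ 0
  nodup_roots {b : A →+* F} (hb : b h ≠ 0) : (Θ.map b).roots.Nodup
  bijOn {b : A →+* F} (hb : b h ≠ 0) :
    Set.BijOn (fun y : R →+* F ↦ y θ) (fibre R b) {t | t ∈ (Θ.map b).roots}

theorem map_ne_zero_of_apply_leadingCoeff_ne_zero {b : A →+* F} {P : A[X]}
    (hb : b P.leadingCoeff ≠ 0) : P.map b ≠ 0 := fun h ↦
  hb (by simpa using congrArg (coeff · P.natDegree) h)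

theorem nodup_roots_of_forall_eval_derivative_ne_zero {q : F[X]}
    (hq : ∀ t, q.IsRoot t → (derivative q).eval t ≠ 0) : q.roots.Nodup := by
  rcases eq_or_ne q 0 with rfl | hq0
  · simp
  classical
  refine Multiset.nodup_iff_count_le_one.2 fun t ↦ ?_
  rw [count_roots]
  by_contra! hmult
  obtain ⟨hroot, hderiv⟩ := (one_lt_rootMultiplicity_iff_isRoot hq0).1 hmult
  exact hq t hroot hderiv

/-- `Θ` is a nonzero polynomial over `A` of minimal degree vanishing at `θ`. -/
structure IsMinimalAnnihilator (θ : R) (Θ : A[X]) : Prop where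
  ne_zero : Θ ≠ 0
  aeval_eq_zero : aeval θ Θ = 0
  eq_zero_of_natDegree_lt {P : A[X]} (hlt : P.natDegree < Θ.natDegree) (hP : aeval θ P = 0) : P = 0

theorem exists_isMinimalAnnihilator {θ : R} (hθ : IsAlgebraic A θ) :
    ∃ Θ : A[X], IsMinimalAnnihilator θ Θ := by
  obtain ⟨Θ, ⟨hΘ0, hΘ⟩, hmin⟩ :=
    exists_minimalFor_of_wellFoundedLT (fun Θ : A[X] ↦ Θ ≠ 0 ∧ aeval θ Θ = 0) natDegree hθ
  refine ⟨Θ, hΘ0, hΘ, fun {P} hlt hP ↦ ?_⟩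
  by_contra hP0
  exact (hmin ⟨hP0, hP⟩ hlt.le).not_gt hlt

namespace IsMinimalAnnihilator

variable {θ : R} {Θ : A[X]}

theorem natDegree_pos [FaithfulSMul A R] (hΘ : IsMinimalAnnihilator θ Θ) : 0 < Θ.natDegree := by
  rw [Nat.pos_iff_ne_zero]
  intro hdeg
  have hroot := hΘ.aeval_eq_zero
  rw [eq_C_of_natDegree_eq_zero hdeg, aeval_C,
    map_eq_zero_iff _ (FaithfulSMul.algebraMap_injective A R)] at hroot
  exact hΘ.ne_zero (by rw [eq_C_of_natDegree_eq_zero hdeg, hroot, C_0])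

theorem aeval_derivative_ne_zero [IsDomain A] [CharZero A] [FaithfulSMul A R]
    (hΘ : IsMinimalAnnihilator θ Θ) : aeval θ (derivative Θ) ≠ 0 := fun h ↦
  hΘ.natDegree_pos.ne' <| derivative_eq_zero.1 <|
    hΘ.eq_zero_of_natDegree_lt (natDegree_derivative_lt hΘ.natDegree_pos.ne') h

theorem eval_map_eq_zero [FaithfulSMul A R] (hΘ : IsMinimalAnnihilator θ Θ) {b : A →+* F}
    (hb : b Θ.leadingCoeff ≠ 0) {t : F} (ht : (Θ.map b).eval t = 0) {P : A[X]}
    (hP : aeval θ P = 0) : (P.map b).eval t = 0 := by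
  obtain ⟨N, Q, S, hQS, hS⟩ := exists_C_leadingCoeff_pow_mul_eq Θ P hΘ.natDegree_pos
  have hS0 : aeval θ S = 0 := by
    simpa [hP, hΘ.aeval_eq_zero] using (congrArg (aeval θ) hQS).symm
  rw [hΘ.eq_zero_of_natDegree_lt hS hS0, add_zero] at hQS
  have heval := congrArg (fun q ↦ (q.map b).eval t) hQS
  simp only [Polynomial.map_mul, map_C, eval_mul, eval_C, ht, zero_mul] at heval
  rw [map_pow] at heval
  exact (mul_eq_zero.1 heval).resolve_left (pow_ne_zero N hb)

theorem nodup_roots_map [FaithfulSMul A R] (hΘ : IsMinimalAnnihilator θ Θ) {b : A →+* F}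
    (hb : b Θ.leadingCoeff ≠ 0) {Q : A[X]} {r : A}
    (hQ : aeval θ (derivative Θ * Q) = algebraMap A R r) (hr : b r ≠ 0) :
    (Θ.map b).roots.Nodup := by
  refine nodup_roots_of_forall_eval_derivative_ne_zero fun t ht hderiv ↦ hr ?_
  have hrel := hΘ.eval_map_eq_zero hb ht (P := derivative Θ * Q - C r)
    (by rw [map_sub, hQ, aeval_C, sub_self])
  rw [derivative_map] at hderiv
  simpa [hderiv] using hrel

theorem bijOn_fibre [FaithfulSMul A R] (hΘ : IsMinimalAnnihilator θ Θ) {b : A →+* F}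
    (hb : b Θ.leadingCoeff ≠ 0) {h : A} (hh : b h ≠ 0)
    (hrep : ∀ y : R, ∃ (N : ℕ) (Q : A[X]), aeval θ Q = algebraMap A R h ^ N * y) :
    Set.BijOn (fun y : R →+* F ↦ y θ) (fibre R b) {t | t ∈ (Θ.map b).roots} := by
  have hroots {t : F} : t ∈ (Θ.map b).roots ↔ (Θ.map b).eval t = 0 :=
    mem_roots (map_ne_zero_of_apply_leadingCoeff_ne_zero hb)
  refine ⟨fun y hy ↦ hroots.2 ?_, fun y hy z hz hyz ↦ RingHom.ext fun x ↦ ?_, fun t ht ↦ ?_⟩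
  · rw [← apply_aeval_of_mem_fibre hy, hΘ.aeval_eq_zero, map_zero]
  · obtain ⟨N, Q, hQ⟩ := hrep x
    have hval {y : R →+* F} (hy : y ∈ fibre R b) : (Q.map b).eval (y θ) = b h ^ N * y x := by
      rw [← apply_aeval_of_mem_fibre hy, hQ, map_mul, map_pow, apply_algebraMap_of_mem_fibre hy]
    exact mul_left_cancel₀ (pow_ne_zero N hh)
      ((hval hy).symm.trans ((congrArg (eval · (Q.map b)) hyz).trans (hval hz)))
  · obtain ⟨y, hy⟩ := exists_ringHom_comp_eq (aeval θ : A[X] →ₐ[A] R).toRingHom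
      (eval₂RingHom b t) (h := C h)
      (fun P hP ↦ by simpa [eval_map] using hΘ.eval_map_eq_zero hb (hroots.1 ht) hP)
      (by simpa using hh) fun x ↦ by simpa using hrep x
    exact ⟨y, RingHom.ext fun c ↦ by simpa using RingHom.congr_fun hy (C c),
      by simpa using RingHom.congr_fun hy X⟩

end IsMinimalAnnihilator

/- `h` collects the leading coefficient of the minimal annihilator `Θ` of `θ`, a multiple of its
derivative at `θ`, and denominators for generators of `R` over `A[θ]`. -/
theorem exists_isFibrePolynomial [IsDomain A] [IsDomain R] [CharZero R] [FaithfulSMul A R]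
    [Algebra.IsAlgebraic A R] [Algebra.FiniteType A R] {θ : R} (hθ : IsGenericGenerator A θ) :
    ∃ (h : A) (Θ : A[X]), IsFibrePolynomial F θ h Θ := by
  have : CharZero A := (algebraMap A R).charZero
  obtain ⟨Θ, hΘ⟩ := exists_isMinimalAnnihilator (Algebra.IsAlgebraic.isAlgebraic (R := A) θ)
  obtain ⟨r, hr, w, hw⟩ := (Algebra.IsAlgebraic.isAlgebraic (R := A)
    (aeval θ (derivative Θ))).exists_nonzero_dvd
    (mem_nonZeroDivisors_of_ne_zero hΘ.aeval_derivative_ne_zero)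
  obtain ⟨a, ha, hrep⟩ := hθ.exists_ne_zero_forall_exists_aeval_eq
  have hfactor {b : A →+* F} (hb : b (Θ.leadingCoeff * r * a) ≠ 0) :
      b Θ.leadingCoeff ≠ 0 ∧ b r ≠ 0 ∧ b a ≠ 0 := by
    rw [map_mul, map_mul] at hb
    exact ⟨left_ne_zero_of_mul (left_ne_zero_of_mul hb),
      right_ne_zero_of_mul (left_ne_zero_of_mul hb), right_ne_zero_of_mul hb⟩
  refine ⟨Θ.leadingCoeff * r * a, Θ,
    mul_ne_zero (mul_ne_zero (Polynomial.leadingCoeff_ne_zero.2 hΘ.ne_zero) hr) ha,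
    fun hb ↦ (hfactor hb).1, fun {b} hb ↦ ?_,
    fun hb ↦ hΘ.bijOn_fibre (hfactor hb).1 (hfactor hb).2.2 hrep⟩
  obtain ⟨N, Q, hQ⟩ := hrep w
  refine hΘ.nodup_roots_map (hfactor hb).1 (Q := Q) (r := a ^ N * r) ?_ ?_
  · rw [map_mul, hQ, map_mul, hw, map_pow]
    ring
  · rw [map_mul, map_pow]
    exact mul_ne_zero (pow_ne_zero N (hfactor hb).2.2) (hfactor hb).2.1

namespace IsFibrePolynomial

variable {θ : R} {h : A} {Θ : A[X]} {b : A →+* F}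

theorem map_ne_zero (hΘ : IsFibrePolynomial F θ h Θ) (hb : b h ≠ 0) : Θ.map b ≠ 0 :=
  map_ne_zero_of_apply_leadingCoeff_ne_zero (hΘ.leadingCoeff_ne_zero hb)

theorem ncard_fibre (hΘ : IsFibrePolynomial F θ h Θ) (hb : b h ≠ 0) (p : F → Prop)
    [DecidablePred p] : {y ∈ fibre R b | p (y θ)}.ncard = (Θ.map b).roots.countP p := by
  classical
  have himage : (fun y : R →+* F ↦ y θ) '' {y ∈ fibre R b | p (y θ)} =
      (((Θ.map b).roots.filter p).toFinset : Set F) := by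
    ext t
    simp only [Set.mem_image, Set.mem_ofPred_eq, Finset.mem_coe, Multiset.mem_toFinset,
      Multiset.mem_filter]
    constructor
    · rintro ⟨y, ⟨hy, hpy⟩, rfl⟩
      exact ⟨(hΘ.bijOn hb).mapsTo hy, hpy⟩
    · rintro ⟨ht, hpt⟩
      obtain ⟨y, hy, rfl⟩ := (hΘ.bijOn hb).surjOn ht
      exact ⟨y, ⟨hy, hpt⟩, rfl⟩
  rw [← ((hΘ.bijOn hb).injOn.mono fun y hy ↦ hy.1).ncard_image, himage,
    Set.ncard_coe_finset, Multiset.toFinset_card_of_nodup ((hΘ.nodup_roots hb).filter p),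
    Multiset.countP_eq_card_filter]

end IsFibrePolynomial

end Fibre

/-! ### Parity of the number of real points in a fibre -/

section FiniteType

variable (A R : Type*) [CommRing A] [IsDomain A] [CommRing R] [IsDomain R] [CharZero R]
  [Algebra A R] [FaithfulSMul A R] [Algebra.IsAlgebraic A R] [Algebra.FiniteType A R]

theorem exists_isGenericGenerator : ∃ θ : R, IsGenericGenerator A θ := by
  have : CharZero A := (algebraMap A R).charZero
  obtain ⟨s, hs⟩ := Algebra.FiniteType.out (R := A) (A := R)
  obtain ⟨e, -, hθ⟩ := exists_isGenericGenerator_add_sum_smul (x := ((↑) : s → R))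
    (by simpa using hs) 0 (Set.infinite_of_injective_forall_mem
      (Nat.cast_injective (R := A)) fun n ↦ Set.mem_univ (n : A))
  exact ⟨_, hθ⟩

theorem exists_even_ncard_fibre_iff : ∃ h : A, h ≠ 0 ∧ ∀ a b : A →+* ℝ, a h ≠ 0 → b h ≠ 0 →
    (Even (fibre R a).ncard ↔ Even (fibre R b).ncard) := by
  obtain ⟨θ, hθ⟩ := exists_isGenericGenerator A R
  obtain ⟨h, Θ, hΘ⟩ := exists_isFibrePolynomial (F := ℝ) hθ
  have hparity {c : A →+* ℝ} (hc : c h ≠ 0) : Even (fibre R c).ncard ↔ Even Θ.natDegree := by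
    have hcard := hΘ.ncard_fibre hc fun _ ↦ True
    simp only [and_true, Set.ofPred_mem_eq, Multiset.countP_True] at hcard
    rw [hcard, even_card_roots_iff_even_natDegree,
      natDegree_map_of_leadingCoeff_ne_zero c (hΘ.leadingCoeff_ne_zero hc)]
  exact ⟨h, hΘ.ne_zero, fun a b ha hb ↦ (hparity ha).trans (hparity hb).symm⟩

end FiniteType

section Parity

variable {A R : Type*} [CommRing A] [IsDomain A] [Algebra ℝ A] [CommRing R] [IsDomain R]
  [CharZero R] [Algebra A R] [FaithfulSMul A R] [Algebra.IsAlgebraic A R] {κ : Type*} [Fintype κ]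
  {x : κ → R}

/- `-∑ xⱼ²` need not be generic, but it becomes so after adding a correction which is small relative
to it at every real point. -/
theorem exists_isGenericGenerator_abs_add_sum_sq_le (hx : Algebra.adjoin A (Set.range x) = ⊤)
    {ε : ℝ} (hε : 0 < ε) :
    ∃ θ : R, IsGenericGenerator A θ ∧
      ∀ y : R →+* ℝ, |y θ + ∑ j, y (x j) ^ 2| ≤ ε * (∑ j, y (x j) ^ 2 + Fintype.card κ) := by
  obtain ⟨e, he, hθ⟩ := exists_isGenericGenerator_add_sum_smul hx (-∑ j, x j ^ 2)
    ((Set.Ioo_infinite (neg_lt_self hε)).image (algebraMap ℝ A).injective.injOn)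
  choose c hc hce using he
  refine ⟨_, hθ, fun y ↦ ?_⟩
  have hreal (r : ℝ) : y (algebraMap A R (algebraMap ℝ A r)) = r :=
    RingHom.congr_fun
      (Subsingleton.elim ((y.comp (algebraMap A R)).comp (algebraMap ℝ A)) (RingHom.id ℝ)) r
  have hval : y (-∑ j, x j ^ 2 + ∑ j, e j • x j) + ∑ j, y (x j) ^ 2 = ∑ j, c j * y (x j) := by
    simp [← hce, Algebra.smul_def, hreal]
  calc |y (-∑ j, x j ^ 2 + ∑ j, e j • x j) + ∑ j, y (x j) ^ 2|
      = |∑ j, c j * y (x j)| := by rw [hval]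
    _ ≤ ∑ j, |c j * y (x j)| := Finset.abs_sum_le_sum_abs _ _
    _ ≤ ∑ j, ε * (y (x j) ^ 2 + 1) := by
      refine Finset.sum_le_sum fun j _ ↦ ?_
      rw [abs_mul]
      refine mul_le_mul (abs_lt.2 (hc j)).le ?_ (abs_nonneg _) hε.le
      nlinarith [sq_abs (y (x j)), sq_nonneg (|y (x j)| - 1), abs_nonneg (y (x j))]
    _ = ε * (∑ j, y (x j) ^ 2 + Fintype.card κ) := by
      rw [← Finset.mul_sum, Finset.sum_add_distrib]
      simp

theorem exists_pos_lt_one_mul_lt {s d : ℝ} (hd : 0 < d) : ∃ ε : ℝ, 0 < ε ∧ ε < 1 ∧ ε * s < d := by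
  have hsmall : ∀ᶠ ε in nhdsWithin (0 : ℝ) (Set.Ioi 0), ε < 1 ∧ ε * s < d := by
    refine nhdsWithin_le_nhds (Filter.Eventually.and (eventually_lt_nhds one_pos) ?_)
    exact (continuous_id.mul continuous_const).continuousAt.eventually_lt_const (by simpa using hd)
  obtain ⟨ε, ⟨hε1, hεs⟩, hε⟩ := (hsmall.and self_mem_nhdsWithin).exists
  exact ⟨ε, hε, hε1, hεs⟩

theorem exists_isGenericGenerator_separating (hx : Algebra.adjoin A (Set.range x) = ⊤)
    {c₀ c₁ : ℝ} (hc : c₀ < c₁) :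
    ∃ (θ : R) (lo hi up : ℝ), IsGenericGenerator A θ ∧ lo < hi ∧
      ∀ y : R →+* ℝ, (∑ j, y (x j) ^ 2 ≤ c₀ → hi ≤ y θ) ∧
        (c₁ ≤ ∑ j, y (x j) ^ 2 → y θ ≤ lo) ∧ y θ ≤ up := by
  set k : ℝ := (Fintype.card κ : ℝ)
  obtain ⟨ε, hε, hε1, hεc⟩ :=
    exists_pos_lt_one_mul_lt (s := c₀ + c₁ + 2 * k) (sub_pos.2 hc)
  obtain ⟨θ, hθ, hbound⟩ := exists_isGenericGenerator_abs_add_sum_sq_le hx hε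
  refine ⟨θ, -(1 - ε) * c₁ + k * ε, -(1 + ε) * c₀ - k * ε, k * ε, hθ, by linarith, fun y ↦ ?_⟩
  obtain ⟨hge, hle⟩ := abs_le.1 (hbound y)
  have hnonneg : 0 ≤ ∑ j, y (x j) ^ 2 := Finset.sum_nonneg fun j _ ↦ sq_nonneg _
  exact ⟨fun hy ↦ by nlinarith, fun hy ↦ by nlinarith, by nlinarith⟩

theorem exists_forall_dvd_even_ncard_fibre_iff (hx : Algebra.adjoin A (Set.range x) = ⊤)
    {c₀ c₁ : ℝ} (hc : c₀ < c₁) :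
    ∃ h : A, h ≠ 0 ∧ ∀ w, h ∣ w → ∀ ℓ : A →+* ℝ[X], ∀ a b : ℝ,
      (ℓ w).eval a ≠ 0 → (ℓ w).eval b ≠ 0 →
      (∀ σ ∈ Set.uIcc a b, (ℓ w).eval σ ≠ 0 →
        ∀ y ∈ fibre R ((evalRingHom σ).comp ℓ), ∑ j, y (x j) ^ 2 ∉ Set.Ioo c₀ c₁) →
      (Even {y ∈ fibre R ((evalRingHom a).comp ℓ) | ∑ j, y (x j) ^ 2 ≤ c₀}.ncard ↔
        Even {y ∈ fibre R ((evalRingHom b).comp ℓ) | ∑ j, y (x j) ^ 2 ≤ c₀}.ncard) := by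
  have : Algebra.FiniteType A R :=
    ⟨⟨(Set.finite_range x).toFinset, by rwa [Set.Finite.coe_toFinset]⟩⟩
  obtain ⟨θ, lo, hi, up, hθ, hlh, hsep⟩ := exists_isGenericGenerator_separating hx hc
  obtain ⟨h, Θ, hΘ⟩ := exists_isFibrePolynomial (F := ℝ) hθ
  refine ⟨h, hΘ.ne_zero, fun w ⟨w', hw⟩ ℓ a b ha hb hgap ↦ ?_⟩
  have hgen {σ : ℝ} (hσ : (ℓ w).eval σ ≠ 0) : (evalRingHom σ).comp ℓ h ≠ 0 := by
    rw [hw, map_mul, eval_mul] at hσ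
    exact left_ne_zero_of_mul hσ
  have hmap (σ : ℝ) : (Θ.map ℓ).map (evalRingHom σ) = Θ.map ((evalRingHom σ).comp ℓ) :=
    Polynomial.map_map _ _ _
  have hsplit {σ : ℝ} (hσ : σ ∈ Set.uIcc a b) (hwσ : (ℓ w).eval σ ≠ 0) {y : R →+* ℝ}
      (hy : y ∈ fibre R ((evalRingHom σ).comp ℓ)) :
      ∑ j, y (x j) ^ 2 ≤ c₀ ∨ c₁ ≤ ∑ j, y (x j) ^ 2 := by
    by_contra! hmid
    exact hgap σ hσ hwσ y hy hmid
  have hcount {σ : ℝ} (hσ : σ ∈ Set.uIcc a b) (hwσ : (ℓ w).eval σ ≠ 0) :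
      {y ∈ fibre R ((evalRingHom σ).comp ℓ) | ∑ j, y (x j) ^ 2 ≤ c₀}.ncard =
        ((Θ.map ℓ).map (evalRingHom σ)).roots.countP (hi ≤ ·) := by
    rw [hmap, ← hΘ.ncard_fibre (hgen hwσ)]
    congr 1
    ext y
    exact and_congr_right fun hy ↦ ⟨(hsep y).1, fun hle ↦
      (hsplit hσ hwσ hy).resolve_right fun hge ↦ by linarith [(hsep y).2.1 hge]⟩
  rw [hcount Set.left_mem_uIcc ha, hcount Set.right_mem_uIcc hb]
  refine even_countP_roots_map_evalRingHom_iff (w := ℓ w) (up := up) ha hb hlh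
    (fun σ _ hwσ ↦ by rw [hmap]; exact hΘ.map_ne_zero (hgen hwσ)) fun σ hσ hwσ t ht ↦ ?_
  rw [hmap] at ht
  obtain ⟨y, hy, rfl⟩ := (hΘ.bijOn (hgen hwσ)).surjOn ht
  refine ⟨fun hmem ↦ ?_, (hsep y).2.2⟩
  rcases hsplit hσ hwσ hy with hle | hge
  · exact hmem.2.not_ge ((hsep y).1 hle)
  · exact hmem.1.not_ge ((hsep y).2.1 hge)

end Parity

section Affine

variable {ι : Type*}

/-- Restriction of polynomials to the line through `a` and `b`, parametrised so that `0` and `1`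
are sent to `a` and `b`. -/
noncomputable def restrictToLine (a b : ι → ℝ) : MvPolynomial ι ℝ →+* ℝ[X] :=
  MvPolynomial.eval₂Hom C fun i ↦ C (a i) + X * C (b i - a i)

theorem evalRingHom_comp_restrictToLine (a b : ι → ℝ) (σ : ℝ) :
    (evalRingHom σ).comp (restrictToLine a b) =
      MvPolynomial.eval (AffineMap.lineMap a b σ) := by
  ext i
  · simp [restrictToLine]
  · simp [restrictToLine, AffineMap.lineMap_apply_module']
    ring

theorem eval_restrictToLine (a b : ι → ℝ) (σ : ℝ) (p : MvPolynomial ι ℝ) :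
    (restrictToLine a b p).eval σ = MvPolynomial.eval (AffineMap.lineMap a b σ) p :=
  RingHom.congr_fun (evalRingHom_comp_restrictToLine a b σ) p

variable {R : Type*} [CommRing R] [Algebra ℝ R] {g : ι → R}

/-- The real point of the subalgebra generated by the algebraically independent family `g` with
coordinates `c`. -/
noncomputable def evalPoint (hg : AlgebraicIndependent ℝ g) (c : ι → ℝ) :
    Algebra.adjoin ℝ (Set.range g) →+* ℝ :=
  (MvPolynomial.eval c).comp (hg.repr : Algebra.adjoin ℝ (Set.range g) →+* MvPolynomial ι ℝ)

theorem coe_mem_fibre_evalPoint_iff (hg : AlgebraicIndependent ℝ g) {c : ι → ℝ}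
    {y : R →ₐ[ℝ] ℝ} : (y : R →+* ℝ) ∈ fibre R (evalPoint hg c) ↔ y ∘ g = c := by
  have hmem : (y : R →+* ℝ) ∈ fibre R (evalPoint hg c) ↔
      ∀ p, y (MvPolynomial.aeval g p) = MvPolynomial.eval c p := by
    refine RingHom.ext_iff.trans (hg.aevalEquiv.surjective.forall.trans (forall_congr' fun p ↦ ?_))
    have hp : evalPoint hg c (hg.aevalEquiv p) = MvPolynomial.eval c p :=
      congrArg (MvPolynomial.eval c) (hg.aevalEquiv.symm_apply_apply p)
    rw [hp, RingHom.comp_apply, hg.algebraMap_aevalEquiv]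
    rfl
  refine hmem.trans ⟨fun h ↦ funext fun i ↦ by simpa using h (MvPolynomial.X i), ?_⟩
  rintro rfl p
  rw [← MvPolynomial.aeval_eq_eval, MvPolynomial.comp_aeval_apply]
  rfl

theorem bijective_coe_ringHom_real :
    Function.Bijective fun y : R →ₐ[ℝ] ℝ ↦ (y : R →+* ℝ) :=
  ⟨AlgHom.coe_ringHom_injective, fun y ↦ ⟨⟨y, fun r ↦
    RingHom.congr_fun (Subsingleton.elim (y.comp (algebraMap ℝ R)) (RingHom.id ℝ)) r⟩, rfl⟩⟩

theorem ncard_fibre_evalPoint (hg : AlgebraicIndependent ℝ g) (c : ι → ℝ)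
    (p : (R → ℝ) → Prop) :
    {y ∈ fibre R (evalPoint hg c) | p y}.ncard = {y : R →ₐ[ℝ] ℝ | y ∘ g = c ∧ p y}.ncard := by
  rw [← Set.ncard_preimage_of_injective_subset_range bijective_coe_ringHom_real.injective
    (by simp [bijective_coe_ringHom_real.surjective.range_eq])]
  congr 1
  ext y
  exact and_congr_left' (coe_mem_fibre_evalPoint_iff hg)

theorem evalRingHom_comp_restrictToLine_comp_repr (hg : AlgebraicIndependent ℝ g) (a b : ι → ℝ)
    (σ : ℝ) : (evalRingHom σ).comp ((restrictToLine a b).comp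
      (hg.repr : Algebra.adjoin ℝ (Set.range g) →+* MvPolynomial ι ℝ)) =
      evalPoint hg (AffineMap.lineMap a b σ) := by
  rw [← RingHom.comp_assoc, evalRingHom_comp_restrictToLine, evalPoint]

variable {κ : Type*} {x : κ → R}

theorem adjoin_adjoin_eq_top (hx : Algebra.adjoin ℝ (Set.range g ∪ Set.range x) = ⊤) :
    Algebra.adjoin (Algebra.adjoin ℝ (Set.range g)) (Set.range x) = ⊤ := by
  rw [Algebra.adjoin_union_eq_adjoin_adjoin] at hx
  exact (Subalgebra.restrictScalars_injective ℝ) (hx.trans (Subalgebra.restrictScalars_top ℝ).symm)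

variable [IsDomain R]

theorem exists_forall_dvd_even_ncard_comp_eq_iff [Fintype κ] (hg : IsTranscendenceBasis ℝ g)
    (hx : Algebra.adjoin ℝ (Set.range g ∪ Set.range x) = ⊤) {c₀ c₁ : ℝ} (hc : c₀ < c₁) :
    ∃ h : MvPolynomial ι ℝ, h ≠ 0 ∧ ∀ w, h ∣ w → ∀ a b : ι → ℝ,
      MvPolynomial.eval a w ≠ 0 → MvPolynomial.eval b w ≠ 0 →
      (∀ c ∈ segment ℝ a b, MvPolynomial.eval c w ≠ 0 → ∀ y : R →ₐ[ℝ] ℝ, y ∘ g = c →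
        ∑ j, y (x j) ^ 2 ∉ Set.Ioo c₀ c₁) →
      (Even {y : R →ₐ[ℝ] ℝ | y ∘ g = a ∧ ∑ j, y (x j) ^ 2 ≤ c₀}.ncard ↔
        Even {y : R →ₐ[ℝ] ℝ | y ∘ g = b ∧ ∑ j, y (x j) ^ 2 ≤ c₀}.ncard) := by
  have := hg.isAlgebraic
  have : CharZero R := charZero_of_injective_algebraMap (algebraMap ℝ R).injective
  let e := hg.1.aevalEquiv
  obtain ⟨h, hh, hparity⟩ := exists_forall_dvd_even_ncard_fibre_iff
    (A := Algebra.adjoin ℝ (Set.range g)) (R := R) (x := x) (adjoin_adjoin_eq_top hx) hc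
  refine ⟨e.symm h, (map_ne_zero_iff _ e.symm.injective).2 hh, fun w hw a b ha hb hgap ↦ ?_⟩
  have hew : hg.1.repr (e w) = w := e.symm_apply_apply w
  have heval (σ : ℝ) : (((restrictToLine a b).comp
      (hg.1.repr : Algebra.adjoin ℝ (Set.range g) →+* _)) (e w)).eval σ =
      MvPolynomial.eval (AffineMap.lineMap a b σ) w := by
    simp [eval_restrictToLine, hew]
  have hdvd : h ∣ e w := by simpa using map_dvd e hw
  have key := hparity _ hdvd ((restrictToLine a b).comp
      (hg.1.repr : Algebra.adjoin ℝ (Set.range g) →+* _)) 0 1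
    (by rwa [heval, AffineMap.lineMap_apply_zero])
    (by rwa [heval, AffineMap.lineMap_apply_one]) fun σ hσ hwσ y hy ↦ ?_
  · simpa only [evalRingHom_comp_restrictToLine_comp_repr, AffineMap.lineMap_apply_zero,
      AffineMap.lineMap_apply_one,
      ncard_fibre_evalPoint hg.1 _ fun y ↦ ∑ j, y (x j) ^ 2 ≤ c₀] using key
  · obtain ⟨y, rfl⟩ := bijective_coe_ringHom_real.surjective y
    rw [heval] at hwσ
    rw [evalRingHom_comp_restrictToLine_comp_repr, coe_mem_fibre_evalPoint_iff] at hy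
    rw [Set.uIcc_of_le zero_le_one] at hσ
    exact hgap _ (segment_eq_image_lineMap ℝ a b ▸ Set.mem_image_of_mem _ hσ) hwσ y hy

end Affine

/-! ### Injective polynomial maps are open -/

section Dimension

variable {A R : Type*} [CommRing A] [IsDomain A] [CommRing R] [IsDomain R]
  [Algebra A R] [FaithfulSMul A R]

theorem eval_derivative_ne_zero_of_nodup_roots {q : ℝ[X]} (hq : q.roots.Nodup) {t : ℝ}
    (ht : t ∈ q.roots) : (derivative q).eval t ≠ 0 := by
  intro hderiv
  have hmult := (one_lt_rootMultiplicity_iff_isRoot (ne_zero_of_mem_roots ht)).2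
    ⟨isRoot_of_mem_roots ht, hderiv⟩
  rw [← count_roots] at hmult
  exact hmult.not_ge (Multiset.nodup_iff_count_le_one.1 hq t)

theorem exists_eval_neg_and_exists_eval_pos {q : ℝ[X]} (hq : q.roots.Nodup) {t : ℝ}
    (ht : t ∈ q.roots) : (∃ t, q.eval t < 0) ∧ ∃ t, 0 < q.eval t := by
  have hderiv := eval_derivative_ne_zero_of_nodup_roots hq ht
  have hroot : q.eval t = 0 := isRoot_of_mem_roots ht
  rw [← q.deriv] at hderiv
  constructor <;> by_contra! hsign <;> apply hderiv
  · exact IsLocalMin.deriv_eq_zero (.of_forall fun s ↦ hroot.trans_le (hsign s))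
  · exact IsLocalMax.deriv_eq_zero (.of_forall fun s ↦ (hsign s).trans_eq hroot.symm)

/- A real point corresponds to a simple root of a real polynomial, and simple roots persist. -/
theorem exists_forall_exists_ne_zero_nonempty_fibre [CharZero R] [Algebra.IsAlgebraic A R]
    [Algebra.FiniteType A R] :
    ∃ h : A, h ≠ 0 ∧ ∀ (ℓ : A →+* ℝ[X]), (ℓ h).eval 0 ≠ 0 →
      (fibre R ((evalRingHom 0).comp ℓ)).Nonempty →
      ∃ σ ≠ 0, (fibre R ((evalRingHom σ).comp ℓ)).Nonempty := by
  obtain ⟨θ, hθ⟩ := exists_isGenericGenerator A R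
  obtain ⟨h, Θ, hΘ⟩ := exists_isFibrePolynomial (F := ℝ) hθ
  refine ⟨h, hΘ.ne_zero, fun ℓ hℓ ⟨y, hy⟩ ↦ ?_⟩
  obtain ⟨⟨t₁, ht₁⟩, t₂, ht₂⟩ :=
    exists_eval_neg_and_exists_eval_pos (hΘ.nodup_roots hℓ) ((hΘ.bijOn hℓ).mapsTo hy)
  have hcont (t : ℝ) : Continuous fun σ ↦ (Θ.map ((evalRingHom σ).comp ℓ)).eval t := by
    have heval (σ : ℝ) : (Θ.map ((evalRingHom σ).comp ℓ)).eval t =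
        ((Θ.map ℓ).eval (C t)).eval σ := by
      rw [← Polynomial.map_map, map_evalRingHom_eval]
    simpa only [heval] using Polynomial.continuous _
  have hnear : ∀ᶠ σ in nhds (0 : ℝ), (Θ.map ((evalRingHom σ).comp ℓ)).eval t₁ < 0 ∧
      0 < (Θ.map ((evalRingHom σ).comp ℓ)).eval t₂ ∧ (ℓ h).eval σ ≠ 0 :=
    ((hcont t₁).continuousAt.eventually_lt_const ht₁).and
      (((hcont t₂).continuousAt.eventually_const_lt ht₂).and
        ((ℓ h).continuous.continuousAt.eventually_ne hℓ))
  obtain ⟨σ, ⟨hneg, hpos, hσ⟩, hσ0⟩ :=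
    ((hnear.filter_mono nhdsWithin_le_nhds).and (self_mem_nhdsWithin (s := {0}ᶜ))).exists
  obtain ⟨t, ht⟩ := mem_range_of_exists_le_of_exists_ge
    (Θ.map ((evalRingHom σ).comp ℓ)).continuous ⟨t₁, hneg.le⟩ ⟨t₂, hpos.le⟩
  obtain ⟨z, hz, -⟩ := (hΘ.bijOn hσ).surjOn ((mem_roots (hΘ.map_ne_zero hσ)).2 ht)
  exact ⟨σ, hσ0, z, hz⟩

/- Moving one element of a transcendence basis moves some real point without changing its
restriction to `A`. -/
theorem isAlgebraic_of_injective_restrict [Algebra.FiniteType A R]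
    (hdense : ∀ r : R, r ≠ 0 → ∃ y : R →+* ℝ, y r ≠ 0)
    (hinj : Function.Injective fun y : R →+* ℝ ↦ y.comp (algebraMap A R)) :
    Algebra.IsAlgebraic A R := by
  classical
  obtain ⟨y₁, -⟩ := hdense 1 one_ne_zero
  have : CharZero R := y₁.charZero
  obtain ⟨s, hs⟩ := exists_isTranscendenceBasis A R
  refine hs.isEmpty_iff_isAlgebraic.1 (isEmpty_iff.2 fun i ↦ ?_)
  have := hs.isAlgebraic
  have : Algebra.FiniteType (Algebra.adjoin A (Set.range ((↑) : s → R))) R :=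
    .of_restrictScalars_finiteType A _ R
  obtain ⟨h, hh, hmove⟩ := exists_forall_exists_ne_zero_nonempty_fibre
    (A := Algebra.adjoin A (Set.range ((↑) : s → R))) (R := R)
  obtain ⟨y, hy⟩ := hdense h (by simpa using hh)
  let m : MvPolynomial s A →+* ℝ[X] :=
    MvPolynomial.eval₂Hom (C.comp (y.comp (algebraMap A R)))
      fun j ↦ C (y j) + if j = i then X else 0
  have hm : (evalRingHom 0).comp m = y.comp (MvPolynomial.aeval ((↑) : s → R)).toRingHom := by
    ext j
    · simp [m]
    · by_cases hj : j = i <;> simp [m, hj]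
  let ℓ := m.comp (hs.1.repr : Algebra.adjoin A (Set.range ((↑) : s → R)) →+* MvPolynomial s A)
  have hℓ : (evalRingHom 0).comp ℓ = y.comp (algebraMap _ R) := by
    ext a
    have hma := RingHom.congr_fun hm (hs.1.repr a)
    exact hma.trans (congrArg y (hs.1.aeval_repr a))
  obtain ⟨σ, hσ, z, hz⟩ := hmove ℓ ((RingHom.congr_fun hℓ h).trans_ne hy)
    ⟨y, hℓ.symm⟩
  have hzℓ (p : MvPolynomial s A) : z (MvPolynomial.aeval ((↑) : s → R) p) = (m p).eval σ :=
    (RingHom.congr_fun hz (hs.1.aevalEquiv p)).trans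
      (congrArg (fun q ↦ (m q).eval σ) (hs.1.aevalEquiv.symm_apply_apply p))
  have hzy : z = y := hinj (RingHom.ext fun a ↦ by
    simpa [m] using hzℓ (MvPolynomial.C a))
  exact hσ (by simpa [m, hzy] using hzℓ (MvPolynomial.X i))

end Dimension

section PolynomialMap

variable {ι κ : Type*}

theorem dense_setOf_eval_ne_zero [Finite κ] {p : MvPolynomial κ ℝ} (hp : p ≠ 0) :
    Dense {z | MvPolynomial.eval z p ≠ 0} := by
  cases nonempty_fintype κ
  refine Metric.dense_iff.2 fun z r hr ↦ ?_
  by_contra! hempty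
  refine hp (MvPolynomial.funext_set (fun i ↦ Metric.ball (z i) r)
    (fun i ↦ infinite_of_mem_nhds _ (Metric.ball_mem_nhds _ hr)) fun w hw ↦ ?_)
  by_contra hne
  rw [← ball_pi z hr] at hw
  exact hempty.subset ⟨hw, by simpa using hne⟩

/-- The polynomial map with components `f`. -/
noncomputable def polynomialMap (f : ι → MvPolynomial κ ℝ) (z : κ → ℝ) : ι → ℝ :=
  fun i ↦ MvPolynomial.eval z (f i)

theorem continuous_polynomialMap (f : ι → MvPolynomial κ ℝ) : Continuous (polynomialMap f) :=
  continuous_pi fun i ↦ MvPolynomial.continuous_eval (f i)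

theorem eval_aeval (f : ι → MvPolynomial κ ℝ) (z : κ → ℝ) (p : MvPolynomial ι ℝ) :
    MvPolynomial.eval z (MvPolynomial.aeval f p) = MvPolynomial.eval (polynomialMap f z) p := by
  rw [← MvPolynomial.aeval_eq_eval, MvPolynomial.comp_aeval_apply]
  rfl

theorem bijective_aeval : Function.Bijective
    (MvPolynomial.aeval : (κ → ℝ) → MvPolynomial κ ℝ →ₐ[ℝ] ℝ) :=
  ⟨fun z z' h ↦ funext fun i ↦ by simpa using DFunLike.congr_fun h (MvPolynomial.X i),
    fun y ↦ ⟨_, (MvPolynomial.aeval_unique y).symm⟩⟩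

theorem isTranscendenceBasis_of_injective [Finite ι] {f : ι → MvPolynomial ι ℝ}
    (hf : Function.Injective (polynomialMap f)) : IsTranscendenceBasis ℝ f := by
  have : Algebra.FiniteType (Algebra.adjoin ℝ (Set.range f)) (MvPolynomial ι ℝ) :=
    .of_restrictScalars_finiteType ℝ _ _
  have : Algebra.IsAlgebraic (Algebra.adjoin ℝ (Set.range f)) (MvPolynomial ι ℝ) := by
    refine isAlgebraic_of_injective_restrict (fun r hr ↦ ?_) fun y y' hyy' ↦ ?_
    · obtain ⟨z, hz⟩ := (dense_setOf_eval_ne_zero hr).nonempty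
      exact ⟨MvPolynomial.eval z, hz⟩
    · obtain ⟨y, rfl⟩ := bijective_coe_ringHom_real.surjective y
      obtain ⟨y', rfl⟩ := bijective_coe_ringHom_real.surjective y'
      obtain ⟨z, rfl⟩ := bijective_aeval.surjective y
      obtain ⟨z', rfl⟩ := bijective_aeval.surjective y'
      rw [hf (funext fun i ↦ RingHom.congr_fun hyy' ⟨f i, Algebra.subset_adjoin ⟨i, rfl⟩⟩)]
  refine Algebra.IsAlgebraic.isTranscendenceBasis_of_le_trdeg_of_finite ℝ f ?_
  simp [MvPolynomial.trdeg_of_isDomain]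

theorem isCompact_setOf_sum_sq_sub_le [Fintype κ] (z₀ : κ → ℝ) (c : ℝ) :
    IsCompact {z : κ → ℝ | ∑ i, (z i - z₀ i) ^ 2 ≤ c} := by
  refine (isCompact_univ_pi fun i ↦
    isCompact_Icc (a := z₀ i - √c) (b := z₀ i + √c)).of_isClosed_subset
    (isClosed_le (by fun_prop) continuous_const) fun z hz i _ ↦ ?_
  have hi := Real.abs_le_sqrt ((Finset.single_le_sum (f := fun i ↦ (z i - z₀ i) ^ 2)
    (fun i _ ↦ sq_nonneg _) (Finset.mem_univ i)).trans hz)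
  rw [abs_le] at hi
  exact ⟨by linarith [hi.1], by linarith [hi.2]⟩

theorem exists_even_ncard_polynomialMap_eq_iff [Fintype κ] {f : ι → MvPolynomial κ ℝ}
    (hf : IsTranscendenceBasis ℝ f) (z₀ : κ → ℝ) {c₀ c₁ : ℝ} (hc : c₀ < c₁) :
    ∃ h : MvPolynomial ι ℝ, h ≠ 0 ∧ ∀ a b : ι → ℝ,
      MvPolynomial.eval a h ≠ 0 → MvPolynomial.eval b h ≠ 0 →
      (∀ z, polynomialMap f z ∈ segment ℝ a b → ∑ i, (z i - z₀ i) ^ 2 ∉ Set.Ioo c₀ c₁) →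
      (Even {z | polynomialMap f z = a ∧ ∑ i, (z i - z₀ i) ^ 2 ≤ c₀}.ncard ↔
        Even {z | polynomialMap f z = b ∧ ∑ i, (z i - z₀ i) ^ 2 ≤ c₀}.ncard) := by
  let x (j : κ) : MvPolynomial κ ℝ := MvPolynomial.X j - MvPolynomial.C (z₀ j)
  have hx : Algebra.adjoin ℝ (Set.range f ∪ Set.range x) = ⊤ := by
    rw [← top_le_iff, ← MvPolynomial.adjoin_range_X, Algebra.adjoin_le_iff]
    rintro _ ⟨j, rfl⟩
    have hxj : x j ∈ Algebra.adjoin ℝ (Set.range f ∪ Set.range x) :=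
      Algebra.subset_adjoin (.inr ⟨j, rfl⟩)
    simpa [x] using add_mem hxj (Subalgebra.algebraMap_mem _ (z₀ j))
  obtain ⟨h, hh, hparity⟩ := exists_forall_dvd_even_ncard_comp_eq_iff hf hx hc
  have hsum (z : κ → ℝ) : ∑ j, MvPolynomial.aeval z (x j) ^ 2 = ∑ j, (z j - z₀ j) ^ 2 := by
    simp [x]
  have hcount (q : ι → ℝ) :
      {y : MvPolynomial κ ℝ →ₐ[ℝ] ℝ | y ∘ f = q ∧ ∑ j, y (x j) ^ 2 ≤ c₀}.ncard =
        {z | polynomialMap f z = q ∧ ∑ i, (z i - z₀ i) ^ 2 ≤ c₀}.ncard := by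
    rw [← Set.ncard_preimage_of_injective_subset_range bijective_aeval.injective
      (by simp [bijective_aeval.surjective.range_eq])]
    simp only [Set.preimage_ofPred_eq, hsum]
    rfl
  simp only [hcount] at hparity
  refine ⟨h, hh, fun a b ha hb hgap ↦ hparity h dvd_rfl a b ha hb fun c hc _ y hy ↦ ?_⟩
  obtain ⟨z, rfl⟩ := bijective_aeval.surjective y
  rw [hsum]
  exact hgap z (hy.symm ▸ hc : _ ∘ f ∈ segment ℝ a b)

theorem exists_pos_forall_sum_sq_sub_notMem_Ioo [Fintype κ] {X : Type*} [MetricSpace X]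
    {F : (κ → ℝ) → X} (hF : Continuous F) (hinj : Function.Injective F) (z₀ : κ → ℝ) {c c' : ℝ}
    (hc : 0 < c) : ∃ ρ > 0, ∀ z, F z ∈ Metric.ball (F z₀) ρ →
      ∑ i, (z i - z₀ i) ^ 2 ∉ Set.Ioo c c' := by
  have hshell : IsCompact ({z : κ → ℝ | c ≤ ∑ i, (z i - z₀ i) ^ 2} ∩
      {z | ∑ i, (z i - z₀ i) ^ 2 ≤ c'}) :=
    (isCompact_setOf_sum_sq_sub_le z₀ c').inter_left
      (isClosed_le continuous_const (by fun_prop))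
  have hz₀ : F z₀ ∉ F '' ({z : κ → ℝ | c ≤ ∑ i, (z i - z₀ i) ^ 2} ∩
      {z | ∑ i, (z i - z₀ i) ^ 2 ≤ c'}) := by
    rintro ⟨z, hz, hzz₀⟩
    obtain rfl := hinj hzz₀
    exact absurd hz.1 (by simpa using hc)
  obtain ⟨ρ, hρ, hsub⟩ := Metric.isOpen_iff.1 (hshell.image hF).isClosed.isOpen_compl _ hz₀
  exact ⟨ρ, hρ, fun z hz hmem ↦ hsub hz ⟨z, ⟨hmem.1.le, hmem.2.le⟩, rfl⟩⟩

/- By injectivity the shell `c ≤ ∑ (zᵢ - z₀ᵢ)² ≤ 2c` is mapped away from the image of `z₀`. Near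
that image the number of preimages in the ball thus has constant parity, and it is one at the
images of generic points near `z₀`. -/
theorem image_sum_sq_sub_le_mem_nhds [Fintype ι] {f : ι → MvPolynomial ι ℝ}
    (hf : Function.Injective (polynomialMap f)) (z₀ : ι → ℝ) {c : ℝ} (hc : 0 < c) :
    polynomialMap f '' {z | ∑ i, (z i - z₀ i) ^ 2 ≤ c} ∈ nhds (polynomialMap f z₀) := by
  have hbasis := isTranscendenceBasis_of_injective hf
  have hfc := continuous_polynomialMap f
  obtain ⟨ρ, hρ, hgap⟩ := exists_pos_forall_sum_sq_sub_notMem_Ioo (c' := 2 * c) hfc hf z₀ hc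
  obtain ⟨h, hh, hparity⟩ :=
    exists_even_ncard_polynomialMap_eq_iff hbasis z₀ (lt_two_mul_self hc)
  have hnear : ∀ᶠ z in nhds z₀, ∑ i, (z i - z₀ i) ^ 2 < c ∧
      polynomialMap f z ∈ Metric.ball (polynomialMap f z₀) ρ := by
    refine .and ?_ (hfc.continuousAt (Metric.ball_mem_nhds _ hρ))
    exact Continuous.continuousAt (by fun_prop) |>.eventually_lt_const (by simpa using hc)
  obtain ⟨z₁, hz₁, hz₁c, hz₁ρ⟩ := (dense_setOf_eval_ne_zero
    (p := MvPolynomial.aeval f h) ((map_ne_zero_iff _ hbasis.1).2 hh)).inter_nhds_nonempty hnear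
  have hone : {z | polynomialMap f z = polynomialMap f z₁ ∧ ∑ i, (z i - z₀ i) ^ 2 ≤ c} = {z₁} :=
    Set.eq_singleton_iff_unique_mem.2 ⟨⟨rfl, hz₁c.le⟩, fun z hz ↦ hf hz.1⟩
  refine Filter.mem_of_superset (Metric.ball_mem_nhds _ hρ)
    (((dense_setOf_eval_ne_zero hh).open_subset_closure_inter Metric.isOpen_ball).trans
      (closure_minimal ?_ ((isCompact_setOf_sum_sq_sub_le z₀ c).image hfc).isClosed))
  rintro q ⟨hqρ, hq⟩
  have hodd := (hparity _ q (eval_aeval f z₁ h ▸ hz₁) hq fun z hz ↦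
    hgap z ((convex_ball _ ρ).segment_subset hz₁ρ hqρ hz)).not
  rw [hone, Set.ncard_singleton] at hodd
  obtain ⟨z, hzq, hzc⟩ := Set.nonempty_of_ncard_ne_zero
    fun h0 ↦ hodd.1 Nat.not_even_one (h0 ▸ Even.zero)
  exact ⟨z, hzc, hzq⟩

theorem isOpenMap_polynomialMap [Finite ι] {f : ι → MvPolynomial ι ℝ}
    (hf : Function.Injective (polynomialMap f)) : IsOpenMap (polynomialMap f) := by
  cases nonempty_fintype ι
  refine isOpenMap_iff_nhds_le.2 fun z₀ s hs ↦ ?_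
  obtain ⟨ε, hε, hball⟩ := Metric.mem_nhds_iff.1 (Filter.mem_map.1 hs)
  refine Filter.mem_of_superset (image_sum_sq_sub_le_mem_nhds hf z₀ (c := (ε / 2) ^ 2)
    (by positivity)) (Set.image_subset_iff.2 fun z hz ↦ hball ?_)
  refine (dist_pi_lt_iff hε).2 fun i ↦ ?_
  have hi := (Finset.single_le_sum (f := fun i ↦ (z i - z₀ i) ^ 2)
    (fun i _ ↦ sq_nonneg _) (Finset.mem_univ i)).trans hz
  exact (abs_le_of_sq_le_sq hi (half_pos hε).le).trans_lt (half_lt_self hε)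

end PolynomialMap

/-! ### The complement of the image -/

section FibreNonempty

variable {A R : Type*} [CommRing A] [IsDomain A] [CommRing R] [IsDomain R]
  [Algebra A R] [FaithfulSMul A R]

theorem exists_nonempty_fibre_iff [Algebra.FiniteType A R]
    (hdense : ∀ r : R, r ≠ 0 → ∃ y : R →+* ℝ, y r ≠ 0)
    (hinj : Function.Injective fun y : R →+* ℝ ↦ y.comp (algebraMap A R)) :
    ∃ h : A, h ≠ 0 ∧ ∀ a b : A →+* ℝ, a h ≠ 0 → b h ≠ 0 →
      ((fibre R a).Nonempty ↔ (fibre R b).Nonempty) := by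
  have := isAlgebraic_of_injective_restrict hdense hinj
  obtain ⟨y₁, -⟩ := hdense 1 one_ne_zero
  have : CharZero R := y₁.charZero
  obtain ⟨h, hh, hparity⟩ := exists_even_ncard_fibre_iff A R
  have hodd (c : A →+* ℝ) : (fibre R c).Nonempty ↔ ¬ Even (fibre R c).ncard := by
    have hsub : (fibre R c).Subsingleton := fun y hy y' hy' ↦ hinj (hy.trans hy'.symm)
    obtain hempty | ⟨y, hy⟩ := hsub.eq_empty_or_singleton <;> simp [*]
  exact ⟨h, hh, fun a b ha hb ↦ by rw [hodd, hodd, hparity a b ha hb]⟩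

theorem exists_exists_comp_eq_iff {B C : Type*} [CommRing B] [IsDomain B] [Algebra ℝ B]
    [CommRing C] [IsDomain C] [Algebra ℝ C] [Algebra.FiniteType ℝ C] {φ : B →ₐ[ℝ] C}
    (hφ : Function.Injective φ) (hdense : ∀ r : C, r ≠ 0 → ∃ y : C →ₐ[ℝ] ℝ, y r ≠ 0)
    (hinj : Function.Injective fun y : C →ₐ[ℝ] ℝ ↦ y.comp φ) :
    ∃ h : B, h ≠ 0 ∧ ∀ a b : B →ₐ[ℝ] ℝ, a h ≠ 0 → b h ≠ 0 →
      ((∃ y : C →ₐ[ℝ] ℝ, y.comp φ = a) ↔ ∃ y : C →ₐ[ℝ] ℝ, y.comp φ = b) := by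
  let _ : Algebra B C := φ.toAlgebra
  have : IsScalarTower ℝ B C := .of_algebraMap_eq fun r ↦ (φ.commutes r).symm
  have : FaithfulSMul B C := (faithfulSMul_iff_algebraMap_injective _ _).2 hφ
  have : Algebra.FiniteType B C := .of_restrictScalars_finiteType ℝ B C
  have hmem (y : C →ₐ[ℝ] ℝ) (a : B →ₐ[ℝ] ℝ) :
      (y : C →+* ℝ) ∈ fibre C (a : B →+* ℝ) ↔ y.comp φ = a :=
    ⟨fun h ↦ AlgHom.ext fun r ↦ RingHom.congr_fun h r,
      fun h ↦ RingHom.ext fun r ↦ DFunLike.congr_fun h r⟩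
  have hfibre (a : B →ₐ[ℝ] ℝ) :
      (fibre C (a : B →+* ℝ)).Nonempty ↔ ∃ y : C →ₐ[ℝ] ℝ, y.comp φ = a := by
    simp only [Set.Nonempty, bijective_coe_ringHom_real.surjective.exists, hmem]
  obtain ⟨h, hh, hiff⟩ := exists_nonempty_fibre_iff (A := B) (R := C)
    (fun r hr ↦ (hdense r hr).imp' _ fun y hy ↦ hy)
    (bijective_coe_ringHom_real.surjective.forall₂.2 fun y y' hyy' ↦
      congrArg _ (hinj (((hmem y (y'.comp φ)).1 hyy'))))
  refine ⟨h, hh, fun a b ha hb ↦ ?_⟩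
  rw [← hfibre, ← hfibre]
  exact hiff _ _ ha hb

end FibreNonempty

section VanishingIdeal

open MvPolynomial (vanishingIdeal zeroLocus)

variable {ι κ : Type*}

theorem vanishingIdeal_zeroLocus_of_mem_minimalPrimes {k K σ : Type*} [Field k] [Field K]
    [Algebra k K] [Finite σ] {T : Set (σ → K)} {Q : Ideal (MvPolynomial σ k)}
    (hQ : Q ∈ (vanishingIdeal k T).minimalPrimes) : vanishingIdeal k (zeroLocus K Q) = Q := by
  refine le_antisymm (fun r hr ↦ ?_) (MvPolynomial.le_vanishingIdeal_zeroLocus Q)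
  obtain ⟨p, rfl⟩ : ∃ p, Q = (vanishingIdeal k T).colon {p} :=
    Submodule.exists_eq_colon_of_mem_minimalPrimes (x := 1) <| by
      convert hQ
      ext
      simp [Submodule.mem_colon_singleton]
  refine Submodule.mem_colon_singleton.2 fun z hz ↦ ?_
  by_cases hp : MvPolynomial.aeval z p = 0
  · simp [hp]
  · have hr₀ : MvPolynomial.aeval z r = 0 := hr z fun q hq ↦ by
      simpa [hp] using Submodule.mem_colon_singleton.1 hq z hz
    simp [hr₀]

/-- Evaluation at a point of the zero locus of `P`, as a point of the coordinate ring. -/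
noncomputable def quotientEval {P : Ideal (MvPolynomial ι ℝ)} {v : ι → ℝ}
    (hv : v ∈ zeroLocus ℝ P) : MvPolynomial ι ℝ ⧸ P →ₐ[ℝ] ℝ :=
  Ideal.Quotient.liftₐ P (MvPolynomial.aeval v) hv

@[simp]
theorem quotientEval_mk {P : Ideal (MvPolynomial ι ℝ)} {v : ι → ℝ} (hv : v ∈ zeroLocus ℝ P)
    (p : MvPolynomial ι ℝ) : quotientEval hv (Ideal.Quotient.mk P p) = MvPolynomial.eval v p :=
  rfl

theorem exists_eq_quotientEval {P : Ideal (MvPolynomial ι ℝ)}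
    (y : MvPolynomial ι ℝ ⧸ P →ₐ[ℝ] ℝ) :
    ∃ (v : ι → ℝ) (hv : v ∈ zeroLocus ℝ P), y = quotientEval hv := by
  obtain ⟨v, hv⟩ := bijective_aeval.surjective (y.comp (Ideal.Quotient.mkₐ ℝ P))
  have heval (p : MvPolynomial ι ℝ) : MvPolynomial.aeval v p = y (Ideal.Quotient.mk P p) :=
    DFunLike.congr_fun hv p
  refine ⟨v, fun p hp ↦ ?_, Ideal.Quotient.algHom_ext ℝ (AlgHom.ext fun p ↦ (heval p).symm)⟩
  rw [heval, Ideal.Quotient.eq_zero_iff_mem.2 hp, map_zero]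

theorem exists_quotientEval_ne_zero {P : Ideal (MvPolynomial ι ℝ)}
    (hP : vanishingIdeal ℝ (zeroLocus ℝ P) = P) {r : MvPolynomial ι ℝ ⧸ P} (hr : r ≠ 0) :
    ∃ (v : ι → ℝ) (hv : v ∈ zeroLocus ℝ P), quotientEval hv r ≠ 0 := by
  obtain ⟨p, rfl⟩ := Ideal.Quotient.mk_surjective r
  rw [Ne, Ideal.Quotient.eq_zero_iff_mem, ← hP, MvPolynomial.mem_vanishingIdeal_iff] at hr
  push Not at hr
  obtain ⟨v, hv, hne⟩ := hr
  exact ⟨v, hv, hne⟩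

theorem quotientEval_inj {P : Ideal (MvPolynomial ι ℝ)} {a b : ι → ℝ} (ha : a ∈ zeroLocus ℝ P)
    (hb : b ∈ zeroLocus ℝ P) : quotientEval ha = quotientEval hb ↔ a = b := by
  refine ⟨fun h ↦ funext fun i ↦ ?_, fun h ↦ by subst h; rfl⟩
  simpa using DFunLike.congr_fun h (Ideal.Quotient.mk P (MvPolynomial.X i))

section

variable {f : ι → MvPolynomial κ ℝ} {P : Ideal (MvPolynomial ι ℝ)} {Q : Ideal (MvPolynomial κ ℝ)}
  (hPQ : P ≤ Q.comap (MvPolynomial.aeval f))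

include hPQ in
theorem polynomialMap_mem_zeroLocus {z : κ → ℝ} (hz : z ∈ zeroLocus ℝ Q) :
    polynomialMap f z ∈ zeroLocus ℝ P :=
  fun p hp ↦ (eval_aeval f z p).symm.trans (hz _ (hPQ hp))

theorem quotientEval_comp_quotientMapₐ {z : κ → ℝ} (hz : z ∈ zeroLocus ℝ Q) :
    (quotientEval hz).comp (Ideal.quotientMapₐ Q (MvPolynomial.aeval f) hPQ) =
      quotientEval (polynomialMap_mem_zeroLocus hPQ hz) :=
  Ideal.Quotient.algHom_ext ℝ <| AlgHom.ext fun p ↦ eval_aeval f z p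

end

theorem exists_mem_image_zeroLocus_iff [Finite κ] {f : ι → MvPolynomial κ ℝ}
    (hf : Function.Injective (polynomialMap f)) {P : Ideal (MvPolynomial ι ℝ)}
    {Q : Ideal (MvPolynomial κ ℝ)} [P.IsPrime] [Q.IsPrime]
    (hPQ : Q.comap (MvPolynomial.aeval f) = P) (hQ : vanishingIdeal ℝ (zeroLocus ℝ Q) = Q) :
    ∃ h ∉ P, ∀ a ∈ zeroLocus ℝ P, ∀ b ∈ zeroLocus ℝ P,
      MvPolynomial.eval a h ≠ 0 → MvPolynomial.eval b h ≠ 0 →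
      (a ∈ polynomialMap f '' zeroLocus ℝ Q ↔ b ∈ polynomialMap f '' zeroLocus ℝ Q) := by
  let φ : MvPolynomial ι ℝ ⧸ P →ₐ[ℝ] MvPolynomial κ ℝ ⧸ Q :=
    Ideal.quotientMapₐ Q (MvPolynomial.aeval f) hPQ.ge
  have hφ : Function.Injective φ := Ideal.quotientMap_injective' (H := hPQ.ge) hPQ.le
  have hcomp {z : κ → ℝ} (hz : z ∈ zeroLocus ℝ Q) {a : ι → ℝ} (ha : a ∈ zeroLocus ℝ P) :
      (quotientEval hz).comp φ = quotientEval ha ↔ polynomialMap f z = a := by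
    rw [quotientEval_comp_quotientMapₐ, quotientEval_inj]
  obtain ⟨h, hh, hiff⟩ := exists_exists_comp_eq_iff hφ
    (fun r hr ↦ by
      obtain ⟨z, hz, hne⟩ := exists_quotientEval_ne_zero hQ hr
      exact ⟨_, hne⟩)
    (fun y y' hyy' ↦ by
      obtain ⟨z, hz, rfl⟩ := exists_eq_quotientEval y
      obtain ⟨z', hz', rfl⟩ := exists_eq_quotientEval y'
      simp only [φ, quotientEval_comp_quotientMapₐ, quotientEval_inj] at hyy'
      exact (quotientEval_inj hz hz').2 (hf hyy'))
  obtain ⟨h, rfl⟩ := Ideal.Quotient.mk_surjective h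
  have hfibre {a : ι → ℝ} (ha : a ∈ zeroLocus ℝ P) :
      (∃ y : _ →ₐ[ℝ] ℝ, y.comp φ = quotientEval ha) ↔ a ∈ polynomialMap f '' zeroLocus ℝ Q := by
    refine ⟨fun ⟨y, hy⟩ ↦ ?_, fun ⟨z, hz, hza⟩ ↦ ⟨_, (hcomp hz ha).2 hza⟩⟩
    obtain ⟨z, hz, rfl⟩ := exists_eq_quotientEval y
    exact ⟨z, hz, (hcomp hz ha).1 hy⟩
  refine ⟨h, fun hP ↦ hh (Ideal.Quotient.eq_zero_iff_mem.2 hP), fun a ha b hb hha hhb ↦ ?_⟩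
  rw [← hfibre ha, ← hfibre hb]
  exact hiff _ _ hha hhb

/- If the image met `V` generically, the preimage of `V` would have a component dominating `V`, and
then every generic point of `V` would be in the image. -/
theorem exists_notMem_range_polynomialMap [Finite κ] {f : ι → MvPolynomial κ ℝ}
    (hf : Function.Injective (polynomialMap f)) {S : Set (ι → ℝ)}
    (hS : Disjoint S (Set.range (polynomialMap f))) (hprime : (vanishingIdeal ℝ S).IsPrime) :
    ∃ h ∉ vanishingIdeal ℝ S, ∀ v ∈ zeroLocus ℝ (vanishingIdeal ℝ S),
      MvPolynomial.eval v h ≠ 0 → v ∉ Set.range (polynomialMap f) := by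
  by_contra! hcon
  set P := vanishingIdeal ℝ S
  set T := polynomialMap f ⁻¹' zeroLocus ℝ P
  have hcomap : (vanishingIdeal ℝ T).comap (MvPolynomial.aeval f) = P := by
    refine le_antisymm (fun p hp ↦ ?_) fun p hp z hz ↦ (eval_aeval f z p).trans (hz p hp)
    by_contra hpP
    obtain ⟨_, hv, hne, z, rfl⟩ := hcon p hpP
    exact hne ((eval_aeval f z p).symm.trans (hp z hv))
  have hP : P ∈ ((vanishingIdeal ℝ T).comap (MvPolynomial.aeval f)).minimalPrimes := by
    rw [hcomap, Ideal.minimalPrimes_eq_subsingleton_self]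
    rfl
  obtain ⟨Q, hQ, hQP⟩ := Ideal.exists_minimalPrimes_comap_eq _ P hP
  have hQprime : Q.IsPrime := hQ.1.1
  have hQT := vanishingIdeal_zeroLocus_of_mem_minimalPrimes hQ
  obtain ⟨h, hh, hiff⟩ := exists_mem_image_zeroLocus_iff hf hQP hQT
  obtain ⟨z, hz, hhz⟩ : ∃ z ∈ zeroLocus ℝ Q, MvPolynomial.eval (polynomialMap f z) h ≠ 0 := by
    rw [← hQP, Ideal.mem_comap, ← hQT, MvPolynomial.mem_vanishingIdeal_iff] at hh
    push Not at hh
    obtain ⟨z, hz, hne⟩ := hh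
    exact ⟨z, hz, (eval_aeval f z h).symm.trans_ne hne⟩
  obtain ⟨w, hw, hhw⟩ : ∃ w ∈ S, MvPolynomial.eval w h ≠ 0 := by
    rw [MvPolynomial.mem_vanishingIdeal_iff] at hh
    push Not at hh
    exact hh
  exact hS.notMem_of_mem_left hw <| Set.image_subset_range _ _ <|
    (hiff w (fun p hp ↦ hp w hw) _ (polynomialMap_mem_zeroLocus hQP.ge hz) hhw hhz).2 ⟨z, hz, rfl⟩

/- An irreducible component of the Zariski closure of `S`, localized in the Euclidean topology. -/
theorem exists_isOpen_isPrime_vanishingIdeal_inter [Finite ι] {S : Set (ι → ℝ)}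
    (hS : S.Nonempty) :
    ∃ B, IsOpen B ∧ (S ∩ B).Nonempty ∧ (vanishingIdeal ℝ (S ∩ B)).IsPrime ∧
      ∀ B' ⊆ B, IsOpen B' → (S ∩ B').Nonempty →
        vanishingIdeal ℝ (S ∩ B') = vanishingIdeal ℝ (S ∩ B) := by
  obtain ⟨I, ⟨B, hB, hSB, rfl⟩, hmax⟩ := set_has_maximal_iff_noetherian.2
    (inferInstance : IsNoetherian (MvPolynomial ι ℝ) (MvPolynomial ι ℝ))
    {I | ∃ B : Set (ι → ℝ), IsOpen B ∧ (S ∩ B).Nonempty ∧ vanishingIdeal ℝ (S ∩ B) = I}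
    ⟨_, Set.univ, isOpen_univ, by simpa using hS, rfl⟩
  have hconst (B' : Set (ι → ℝ)) (hB'B : B' ⊆ B) (hB' : IsOpen B') (hne : (S ∩ B').Nonempty) :
      vanishingIdeal ℝ (S ∩ B') = vanishingIdeal ℝ (S ∩ B) := by
    have hle : vanishingIdeal ℝ (S ∩ B) ≤ vanishingIdeal ℝ (S ∩ B') :=
      MvPolynomial.vanishingIdeal_anti_mono (Set.inter_subset_inter_right S hB'B)
    exact (hle.eq_of_not_lt (hmax _ ⟨B', hB', hne, rfl⟩)).symm
  refine ⟨B, hB, hSB, ⟨fun htop ↦ ?_, fun {p q} hpq ↦ ?_⟩, hconst⟩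
  · obtain ⟨z, hz⟩ := hSB
    simpa using (Ideal.eq_top_iff_one _).1 htop z hz
  · rw [or_iff_not_imp_left, MvPolynomial.mem_vanishingIdeal_iff]
    intro hp
    push Not at hp
    obtain ⟨z, hz, hpz⟩ := hp
    rw [← hconst (B ∩ {z | MvPolynomial.eval z p ≠ 0}) Set.inter_subset_left
      (hB.inter (isOpen_ne_fun (MvPolynomial.continuous_eval p) continuous_const))
      ⟨z, hz.1, hz.2, hpz⟩]
    intro w hw
    have hpqw := hpq w ⟨hw.1, hw.2.1⟩
    rw [map_mul, mul_eq_zero] at hpqw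
    exact hpqw.resolve_left hw.2.2

end VanishingIdeal

/-! ### Smooth points -/

section Coordinates

open MvPolynomial (pderiv supported)

variable {k ι R : Type*} [Field k]

theorem pderiv_aeval_of_notMem {s : Set ι} {i : ι} (hi : i ∉ s) (q : (supported k s)[X])
    (x : MvPolynomial ι k) : pderiv i (aeval x q) = aeval x (derivative q) * pderiv i x := by
  have hconst (a : supported k s) : pderiv i (algebraMap _ (MvPolynomial ι k) a) = 0 :=
    MvPolynomial.pderiv_eq_zero_of_notMem_vars fun h ↦ hi (MvPolynomial.mem_supported.1 a.2 h)
  induction q using Polynomial.induction_on' with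
  | add p q hp hq => simp only [map_add, hp, hq, add_mul]
  | monomial n a =>
    simp only [derivative_monomial, aeval_monomial, Derivation.leibniz, Derivation.leibniz_pow,
      hconst, map_mul, map_natCast, smul_eq_mul, nsmul_eq_mul, mul_zero, add_zero]
    ring

variable [CommRing R] [Algebra k R] {y : ι → R}

theorem exists_isTranscendenceBasis_domRestrict [IsDomain R]
    (hy : Algebra.adjoin k (Set.range y) = ⊤) :
    ∃ s : Set ι, IsTranscendenceBasis k (s.domRestrict y) := by
  have : Algebra.IsAlgebraic (Algebra.adjoin k (Set.range y)) R :=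
    ⟨fun r ↦ isAlgebraic_algebraMap (⟨r, hy ▸ trivial⟩ : Algebra.adjoin k (Set.range y))⟩
  obtain ⟨t, hty, ht⟩ := exists_isTranscendenceBasis_subset (R := k) (Set.range y)
  obtain ⟨s, rfl, hs⟩ := Set.exists_image_eq_injOn_of_subset_range hty
  have he : Subtype.val ∘ hs.bijOn_image.equiv = s.domRestrict y := funext fun _ ↦ rfl
  exact ⟨s, (isTranscendenceBasis_equiv' _ he).2 ht⟩

theorem aeval_supportedEquivMvPolynomial (s : Set ι) (a : supported k s) :
    MvPolynomial.aeval (s.domRestrict y) (MvPolynomial.supportedEquivMvPolynomial s a) =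
      MvPolynomial.aeval y (a : MvPolynomial ι k) := by
  let e := MvPolynomial.supportedEquivMvPolynomial (R := k) s
  have hcomp : MvPolynomial.aeval (s.domRestrict y) =
      ((MvPolynomial.aeval y).comp (supported k s).val).comp
        (e.symm : MvPolynomial s k →ₐ[k] supported k s) := by
    ext i
    simp [e]
  rw [hcomp]
  simp [e]

theorem exists_aeval_eq_zero_aeval_pderiv_ne_zero [CharZero k] [IsDomain R] {s : Set ι}
    (hs : IsTranscendenceBasis k (s.domRestrict y)) {j : ι} (hj : j ∉ s) :
    ∃ Q : MvPolynomial ι k, MvPolynomial.aeval y Q = 0 ∧ (∀ i ∉ s, i ≠ j → pderiv i Q = 0) ∧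
      MvPolynomial.aeval y (pderiv j Q) ≠ 0 := by
  let φ := (MvPolynomial.aeval (R := k) y).comp (supported k s).val
  let _ : Algebra (supported k s) R := φ.toAlgebra
  let e := (MvPolynomial.supportedEquivMvPolynomial s).trans hs.1.aevalEquiv
  have he (a : supported k s) : algebraMap _ R (e a) = algebraMap _ _ a :=
    (hs.1.algebraMap_aevalEquiv _).trans (aeval_supportedEquivMvPolynomial s a)
  have : FaithfulSMul (supported k s) R :=
    (faithfulSMul_iff_algebraMap_injective _ _).2 fun a b hab ↦
      e.injective (Subtype.ext (((he a).trans hab).trans (he b).symm))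
  have := hs.isAlgebraic
  have halg : IsAlgebraic (supported k s) (y j) :=
    (Algebra.IsAlgebraic.isAlgebraic (R := Algebra.adjoin k (Set.range (s.domRestrict y)))
      (y j)).of_ringHom_of_comp_eq e (RingHom.id R) e.surjective Function.injective_id
        (RingHom.ext he)
  obtain ⟨q, hq⟩ := exists_isMinimalAnnihilator halg
  let ψ : MvPolynomial ι k →ₐ[supported k s] R :=
    { MvPolynomial.aeval y with commutes' := fun _ ↦ rfl }
  have haeval (q : (supported k s)[X]) :
      MvPolynomial.aeval y (aeval (MvPolynomial.X j : MvPolynomial ι k) q) = aeval (y j) q :=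
    (aeval_algHom_apply ψ _ q).symm.trans (by simp [ψ])
  refine ⟨aeval (.X j) q, ?_, fun i hi hij ↦ ?_, ?_⟩
  · rw [haeval, hq.aeval_eq_zero]
  · rw [pderiv_aeval_of_notMem hi, MvPolynomial.pderiv_X_of_ne hij.symm, mul_zero]
  · rw [pderiv_aeval_of_notMem hj, MvPolynomial.pderiv_X_self, mul_one, haeval]
    exact hq.aeval_derivative_ne_zero

end Coordinates

section Smooth

open MvPolynomial (pderiv zeroLocus)

variable {ι : Type*} [Fintype ι]

theorem hasStrictFDerivAt_eval (Q : MvPolynomial ι ℝ) (p : ι → ℝ) :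
    HasStrictFDerivAt (fun v ↦ MvPolynomial.eval v Q)
      (∑ i, MvPolynomial.eval p (pderiv i Q) • (.proj i : (ι → ℝ) →L[ℝ] ℝ)) p := by
  classical
  induction Q using MvPolynomial.induction_on with
  | C a => simpa using hasStrictFDerivAt_const a p
  | add q r hq hr =>
    simp only [map_add, add_smul, Finset.sum_add_distrib]
    exact hq.add hr
  | mul_X q j hq =>
    have hj : HasStrictFDerivAt (fun v : ι → ℝ ↦ v j) (.proj j : (ι → ℝ) →L[ℝ] ℝ) p :=
      (ContinuousLinearMap.proj j : (ι → ℝ) →L[ℝ] ℝ).hasStrictFDerivAt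
    simp only [map_mul, MvPolynomial.eval_X]
    refine (hq.mul hj).congr_fderiv ?_
    ext w
    simp [MvPolynomial.pderiv_X, Pi.single_apply, apply_ite, ite_mul, add_mul,
      Finset.sum_add_distrib, Finset.mul_sum, mul_assoc]

theorem exists_mem_nhds_antilipschitzWith {E : Type*} [NormedAddCommGroup E] [NormedSpace ℝ E]
    [FiniteDimensional ℝ E] {Φ : E → E} {Φ' : E →L[ℝ] E} {p : E} (hΦ : HasStrictFDerivAt Φ Φ' p)
    (hΦ' : Function.Injective Φ') : ∃ W ∈ nhds p, ∃ K, AntilipschitzWith K (W.domRestrict Φ) := by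
  have := FiniteDimensional.complete ℝ E
  let e : E ≃L[ℝ] E :=
    (LinearEquiv.ofInjectiveEndo (Φ' : E →ₗ[ℝ] E) hΦ').toContinuousLinearEquiv
  obtain ⟨W, hpW, hW, happ⟩ := HasStrictFDerivAt.approximates_deriv_on_open_nhds
    (f' := e) (hΦ.congr_fderiv (by ext; rfl))
  exact ⟨W, hW.mem_nhds hpW, _, happ.antilipschitz <|
    e.subsingleton_or_nnnorm_symm_pos.imp_right fun he ↦
      NNReal.half_lt_self (inv_pos.2 he).ne'⟩

/- The map keeping the coordinates in `s` and replacing the others by the values of the `Q j` has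
injective derivative at `p`. -/
theorem exists_mem_nhds_antilipschitzWith_domRestrict {V : Set (ι → ℝ)} {s : Set ι}
    {Q : ι → MvPolynomial ι ℝ} (hQ : ∀ j ∉ s, ∀ v ∈ V, MvPolynomial.eval v (Q j) = 0)
    (hQ' : ∀ j ∉ s, ∀ i ∉ s, i ≠ j → pderiv i (Q j) = 0) {p : ι → ℝ} [Fintype s]
    (hp : ∀ j ∉ s, MvPolynomial.eval p (pderiv j (Q j)) ≠ 0) :
    ∃ W ∈ nhds p, ∃ K, AntilipschitzWith K ((V ∩ W).domRestrict s.domRestrict) := by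
  classical
  let Φ (v : ι → ℝ) (i : ι) : ℝ := if i ∈ s then v i else MvPolynomial.eval v (Q i)
  let L (i : ι) : (ι → ℝ) →L[ℝ] ℝ :=
    if i ∈ s then .proj i else ∑ k, MvPolynomial.eval p (pderiv k (Q i)) • .proj k
  have hΦ : HasStrictFDerivAt Φ (ContinuousLinearMap.pi L) p := by
    refine hasStrictFDerivAt_pi.2 fun i ↦ ?_
    by_cases hi : i ∈ s
    · simp only [L, if_pos hi]
      exact (ContinuousLinearMap.proj i : (ι → ℝ) →L[ℝ] ℝ).hasStrictFDerivAt
    · simpa only [Φ, L, if_neg hi] using hasStrictFDerivAt_eval (Q i) p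
  have hL : Function.Injective (ContinuousLinearMap.pi L) := by
    refine (injective_iff_map_eq_zero _).2 fun w hw ↦ ?_
    have hws (i : ι) (hi : i ∈ s) : w i = 0 := by simpa [L, hi] using congrFun hw i
    funext j
    by_cases hj : j ∈ s
    · exact hws j hj
    have hsum : ∑ k, MvPolynomial.eval p (pderiv k (Q j)) * w k = 0 := by
      simpa [L, hj] using congrFun hw j
    rw [Finset.sum_eq_single_of_mem j (Finset.mem_univ j) fun i _ hij ↦ ?_] at hsum
    · exact (mul_eq_zero.1 hsum).resolve_left (hp j hj)
    · by_cases hi : i ∈ s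
      · rw [hws i hi, mul_zero]
      · rw [hQ' j hj i hi hij, map_zero, zero_mul]
  obtain ⟨W, hW, K, hK⟩ := exists_mem_nhds_antilipschitzWith hΦ hL
  refine ⟨W, hW, K, fun v v' ↦ (hK ⟨v, v.2.2⟩ ⟨v', v'.2.2⟩).trans ?_⟩
  gcongr
  refine edist_pi_le_iff.2 fun i ↦ ?_
  by_cases hi : i ∈ s
  · simpa [Φ, hi] using edist_le_pi_edist
      (s.domRestrict (v : ι → ℝ)) (s.domRestrict (v' : ι → ℝ)) ⟨i, hi⟩
  · simp [Φ, hi, hQ i hi _ v.2.1, hQ i hi _ v'.2.1]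

theorem exists_aeval_ne_zero_forall_antilipschitzWith {R : Type*} [CommRing R] [IsDomain R]
    [Algebra ℝ R] {y : ι → R} {s : Set ι} [Fintype s]
    (hs : IsTranscendenceBasis ℝ (s.domRestrict y)) :
    ∃ g : MvPolynomial ι ℝ, MvPolynomial.aeval y g ≠ 0 ∧ ∀ p, MvPolynomial.eval p g ≠ 0 →
      ∃ W ∈ nhds p, ∃ K, AntilipschitzWith K
        ((zeroLocus ℝ (RingHom.ker (MvPolynomial.aeval (R := ℝ) y)) ∩ W).domRestrict
          s.domRestrict) := by
  classical
  choose! Q hQ hQ' hQne using fun j (hj : j ∉ s) ↦ exists_aeval_eq_zero_aeval_pderiv_ne_zero hs hj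
  refine ⟨∏ j with j ∉ s, pderiv j (Q j), ?_, fun p hp ↦ ?_⟩
  · rw [map_prod]
    exact Finset.prod_ne_zero_iff.2 fun j hj ↦ hQne j (Finset.mem_filter.1 hj).2
  · rw [map_prod, Finset.prod_ne_zero_iff] at hp
    refine exists_mem_nhds_antilipschitzWith_domRestrict (fun j hj v hv ↦ ?_) hQ'
      fun j hj ↦ hp j (Finset.mem_filter.2 ⟨Finset.mem_univ j, hj⟩)
    simpa only [MvPolynomial.aeval_eq_eval] using hv (Q j) (hQ j hj)

end Smooth

end RealPolynomialMap

namespace RealPolynomialMap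

open scoped Topology

/-! ### Discs transverse to a variety -/

section ExtendCompl

variable {ι M : Type*} [Zero M] {s : Set ι}

/-- The vector which has the given coordinates outside `s` and vanishes on `s`: the embedding of
the coordinate subspace transverse to the coordinates in `s`. -/
noncomputable def extendCompl (x : (sᶜ : Set ι) → M) : ι → M :=
  Function.extend Subtype.val x 0

@[simp]
theorem extendCompl_coe (x : (sᶜ : Set ι) → M) (i : (sᶜ : Set ι)) : extendCompl x i = x i :=
  Subtype.val_injective.extend_apply x 0 i

theorem extendCompl_of_mem (x : (sᶜ : Set ι) → M) {i : ι} (hi : i ∈ s) : extendCompl x i = 0 :=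
  Function.extend_apply' x (0 : ι → M) i <| by
    rintro ⟨j, rfl⟩
    exact j.2 hi

@[simp]
theorem extendCompl_zero : extendCompl (0 : (sᶜ : Set ι) → M) = 0 := by
  funext i
  by_cases hi : i ∈ s
  · exact extendCompl_of_mem _ hi
  · lift i to (sᶜ : Set ι) using hi
    simp

theorem map_extendCompl {N F : Type*} [Zero N] [FunLike F M N] [ZeroHomClass F M N] (f : F)
    (x : (sᶜ : Set ι) → M) (i : ι) : f (extendCompl x i) = extendCompl (fun j ↦ f (x j)) i := by
  by_cases hi : i ∈ s
  · simp [extendCompl_of_mem _ hi]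
  · lift i to (sᶜ : Set ι) using hi
    simp

end ExtendCompl

section Independence

open MvPolynomial (C X aeval)

variable {k ι : Type*} [CommRing k]

theorem algebraicIndependent_option_elim_of_map_eq_zero {R R' : Type*} [CommRing R] [CommRing R']
    [Algebra k R] [Algebra k R'] (π : R →ₐ[k] R') {t : R} {g : ι → R} (ht : t ∈ nonZeroDivisors R)
    (hπ : π t = 0) (hg : AlgebraicIndependent k (π ∘ g)) :
    AlgebraicIndependent k fun o : Option ι ↦ o.elim t g := by
  have hg' : AlgebraicIndependent k g := .of_comp π hg
  refine (hg'.option_iff_transcendental t).2 fun halg ↦ ?_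
  obtain ⟨⟨b, hb⟩, hb0, d, hd⟩ := halg.exists_nonzero_dvd ht
  rw [Algebra.adjoin_range_eq_range_aeval] at hb
  obtain ⟨q, rfl⟩ := hb
  have hπq : aeval (π ∘ g) q = 0 := by
    rw [show (π ∘ g) = fun i ↦ π (g i) from rfl, ← MvPolynomial.comp_aeval_apply]
    exact (congrArg π hd).trans (by rw [map_mul, hπ, zero_mul])
  obtain rfl := (map_eq_zero_iff _ hg).1 hπq
  exact hb0 (Subtype.ext (map_zero _))

theorem algebraicIndependent_of_aeval_eq_X {f g : ι → MvPolynomial ι k}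
    (h : ∀ i, aeval g (f i) = X i) : AlgebraicIndependent k f := by
  have hcomp : (aeval g).comp (aeval f) = AlgHom.id k (MvPolynomial ι k) := by
    ext1 i
    rw [AlgHom.comp_apply, MvPolynomial.aeval_X, h, AlgHom.id_apply]
  refine algebraicIndependent_iff_injective_aeval.2 fun q q' hq ↦ ?_
  calc q = (aeval g).comp (aeval f) q := by rw [hcomp, AlgHom.id_apply]
    _ = (aeval g).comp (aeval f) q' := by rw [AlgHom.comp_apply, hq, AlgHom.comp_apply]
    _ = q' := by rw [hcomp, AlgHom.id_apply]

/- Over `D`, the coordinates outside `s` are the variables up to sign and translation. -/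
theorem algebraicIndependent_C_sub_extend {D : Type*} [CommRing D] [Algebra k D] {y : ι → D}
    {s : Set ι} (hs : AlgebraicIndependent k (s.domRestrict y)) (p : ι → k) :
    AlgebraicIndependent k fun i ↦ (C (y i) - (C (algebraMap k D (p i)) +
      extendCompl X i) : MvPolynomial (sᶜ : Set ι) D) := by
  classical
  let x (i : s) : D := y i - algebraMap k D (p i)
  let z (i : (sᶜ : Set ι)) : MvPolynomial (sᶜ : Set ι) D :=
    C (y i) - (C (algebraMap k D (p i)) + X i)
  have hx : AlgebraicIndependent k x := by
    have htranslate : AlgebraicIndependent k fun i : s ↦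
        (X i - C (p i) : MvPolynomial s k) :=
      algebraicIndependent_of_aeval_eq_X (g := fun i ↦ X i + C (p i)) fun i ↦ by simp
    simpa [x] using hs.aeval_of_algebraicIndependent htranslate
  have hz : AlgebraicIndependent D z := algebraicIndependent_of_aeval_eq_X
    (g := fun i ↦ C (y i) - C (algebraMap k D (p i)) - X i) fun i ↦ by
    simp [z]
    ring
  refine (algebraicIndependent_equiv' ((Equiv.sumComm _ _).trans (Equiv.Set.sumCompl s)) ?_).1
    (hx.sumElim_comp hz)
  funext i
  rcases i with i | i
  · simp [z]
  · simp [x, extendCompl_of_mem _ i.2]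

end Independence

section DiscOffset

open MvPolynomial (C X aeval)

variable {ι D : Type*} [CommRing D] [Algebra ℝ D] {s : Set ι}

/-- The disc `x ↦ p + x` transverse to the coordinates in `s`, deformed by `τ` times the
polynomial map `E`. -/
noncomputable def deformedDisc (p : ι → ℝ) (E : ι → MvPolynomial (sᶜ : Set ι) ℝ) (τ : ℝ)
    (x : (sᶜ : Set ι) → ℝ) : ι → ℝ :=
  p + extendCompl x + τ • polynomialMap E x

/-- The functions `(τ, v - deformedDisc p E τ x)` on the space of all `(v, τ, x)`, where `v` ranges
over the variety with coordinate functions `y`. The variables `X none` and `X (some k)` are `τ`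
and `x k`. -/
noncomputable def discOffset (y : ι → D) (p : ι → ℝ) (E : ι → MvPolynomial (sᶜ : Set ι) ℝ)
    (o : Option ι) : MvPolynomial (Option (sᶜ : Set ι)) D :=
  o.elim (X none) fun i ↦ C (y i) - (C (algebraMap ℝ D (p i)) + extendCompl (fun k ↦ X (some k)) i +
    X none * aeval (fun k ↦ X (some k)) (E i))

variable {y : ι → D} {p : ι → ℝ} {E : ι → MvPolynomial (sᶜ : Set ι) ℝ}

theorem map_discOffset_some (Y : MvPolynomial (Option (sᶜ : Set ι)) D →ₐ[ℝ] ℝ) (i : ι) :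
    Y (discOffset y p E (some i)) =
      Y (C (y i)) - deformedDisc p E (Y (X none)) (fun k ↦ Y (X (some k))) i := by
  have hC : Y (C (algebraMap ℝ D (p i))) = p i := Y.commutes (p i)
  have hE : Y (aeval (fun k ↦ X (some k)) (E i)) =
      MvPolynomial.eval (fun k ↦ Y (X (some k))) (E i) := by
    rw [MvPolynomial.comp_aeval_apply, MvPolynomial.aeval_eq_eval]
  simp [discOffset, deformedDisc, polynomialMap, map_extendCompl, hC, hE]

theorem algebraicIndependent_discOffset [IsDomain D]
    (hs : AlgebraicIndependent ℝ (s.domRestrict y)) :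
    AlgebraicIndependent ℝ (discOffset y p E) := by
  let π : MvPolynomial (Option (sᶜ : Set ι)) D →ₐ[ℝ] MvPolynomial (sᶜ : Set ι) D :=
    (aeval fun o ↦ o.elim 0 X : _ →ₐ[D] _).restrictScalars ℝ
  refine algebraicIndependent_option_elim_of_map_eq_zero π
    (mem_nonZeroDivisors_of_ne_zero (MvPolynomial.X_ne_zero _)) (by simp [π]) ?_
  convert algebraicIndependent_C_sub_extend hs p using 1
  funext i
  simp [π, map_extendCompl, MvPolynomial.algebraMap_eq]

theorem isTranscendenceBasis_discOffset [IsDomain D] [Finite ι]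
    (hs : IsTranscendenceBasis ℝ (s.domRestrict y)) :
    IsTranscendenceBasis ℝ (discOffset y p E) := by
  have hsum := hs.sumElim_comp (IsTranscendenceBasis.mvPolynomial (Option (sᶜ : Set ι)) D)
  have hcard : Cardinal.mk (Option (sᶜ : Set ι) ⊕ s) = Cardinal.mk (Option ι) := by
    simp only [Cardinal.mk_sum, Cardinal.mk_option, Cardinal.lift_id, ← Cardinal.mk_sum_compl s]
    ring
  refine (algebraicIndependent_discOffset hs.1).isTranscendenceBasis_of_lift_trdeg_le_of_finite ?_
  rw [← hcard, hsum.lift_cardinalMk_eq_trdeg]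

theorem adjoin_discOffset_union_eq_top (hy : Algebra.adjoin ℝ (Set.range y) = ⊤) :
    Algebra.adjoin ℝ (Set.range (discOffset y p E) ∪ Set.range fun k : (sᶜ : Set ι) ↦
      (X (some k) : MvPolynomial (Option (sᶜ : Set ι)) D)) = ⊤ := by
  set T := Algebra.adjoin ℝ (Set.range (discOffset y p E) ∪
      Set.range fun k : (sᶜ : Set ι) ↦ (X (some k) : MvPolynomial (Option (sᶜ : Set ι)) D))
  have hX (o : Option (sᶜ : Set ι)) : X o ∈ T := by
    cases o with
    | none => exact Algebra.subset_adjoin (.inl ⟨none, rfl⟩)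
    | some k => exact Algebra.subset_adjoin (.inr ⟨k, rfl⟩)
  have hdisc (i : ι) : C (algebraMap ℝ D (p i)) + extendCompl (fun k ↦ X (some k)) i +
      X none * aeval (fun k ↦ X (some k)) (E i) ∈ T := by
    refine T.add_mem (T.add_mem (T.algebraMap_mem (p i)) ?_) (T.mul_mem (hX _) ?_)
    · by_cases hi : i ∈ s
      · simp [extendCompl_of_mem _ hi]
      · lift i to (sᶜ : Set ι) using hi
        simpa using hX (some i)
    · let X' (k : (sᶜ : Set ι)) : T := ⟨X (some k), hX _⟩
      exact T.mvPolynomial_aeval_coe X' (E i) ▸ (aeval X' (E i)).2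
  have hCy (i : ι) : C (y i) ∈ T := by
    have hi : discOffset y p E (some i) ∈ T := Algebra.subset_adjoin (.inl ⟨some i, rfl⟩)
    simpa [discOffset] using T.add_mem hi (hdisc i)
  have hC (d : D) : C d ∈ T := by
    have hle : Algebra.adjoin ℝ (Set.range y) ≤
        T.comap (IsScalarTower.toAlgHom ℝ D (MvPolynomial (Option (sᶜ : Set ι)) D)) :=
      Algebra.adjoin_le (by rintro _ ⟨i, rfl⟩; exact hCy i)
    exact hle (hy ▸ Algebra.mem_top)
  refine eq_top_iff.2 fun q _ ↦ ?_
  induction q using MvPolynomial.induction_on with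
  | C d => exact hC d
  | add q₁ q₂ h₁ h₂ => exact T.add_mem (h₁ trivial) (h₂ trivial)
  | mul_X q o h => exact T.mul_mem (h trivial) (hX o)

end DiscOffset

/-! ### Linking of a deformed disc with a variety -/

section Topology

theorem eventually_segment_subset {V : Type*} [AddCommGroup V] [Module ℝ V] [TopologicalSpace V]
    [IsTopologicalAddGroup V] [ContinuousSMul ℝ V] {G : Set V} (hG : IsOpen G) {a b : V}
    (hab : segment ℝ a b ⊆ G) : ∀ᶠ q in 𝓝 (a, b), segment ℝ q.1 q.2 ⊆ G := by
  simp only [segment_eq_image_lineMap, Set.image_subset_iff] at hab ⊢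
  refine isCompact_Icc.eventually_forall_of_forall_eventually
    (P := fun q : V × V ↦ fun t : ℝ ↦ AffineMap.lineMap q.1 q.2 t ∈ G) fun t ht ↦ ?_
  have hcont : Continuous fun z : (V × V) × ℝ ↦ AffineMap.lineMap z.1.1 z.1.2 z.2 := by
    simp only [AffineMap.lineMap_apply_module]
    fun_prop
  exact hcont.continuousAt.eventually_mem (hG.mem_nhds (hab ht))

theorem isOpen_setOf_forall_mem {X Y Z : Type*} [TopologicalSpace X] [TopologicalSpace Y]
    [TopologicalSpace Z] {f : X × Y → Z} (hf : Continuous f) {K : Set Y} (hK : IsCompact K)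
    {U : Set Z} (hU : IsOpen U) : IsOpen {x | ∀ y ∈ K, f (x, y) ∈ U} :=
  isOpen_iff_eventually.2 fun _ hx ↦
    hK.eventually_forall_of_forall_eventually (P := fun x y ↦ f (x, y) ∈ U) fun y hy ↦
      hf.continuousAt.eventually_mem (hU.mem_nhds (hx y hy))

end Topology

section CentralPoint

open MvPolynomial (C X)

variable {ι D : Type*} [CommRing D] [Algebra ℝ D]

/-- A central point of the real variety with coordinate functions `y`: a limit, for each nonzero
function `d` on the variety, of real points at which `d` does not vanish. -/
def IsCentralPoint (y : ι → D) (p : ι → ℝ) : Prop :=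
  ∀ d : D, d ≠ 0 → ∀ N ∈ 𝓝 p, ∃ z : D →ₐ[ℝ] ℝ, z ∘ y ∈ N ∧ z d ≠ 0

theorem IsCentralPoint.exists_mvPolynomial {σ : Type*} [Finite σ] {y : ι → D} {p : ι → ℝ}
    (hp : IsCentralPoint y p) {r : MvPolynomial σ D} (hr : r ≠ 0) {c : σ → ℝ}
    {N : Set ((ι → ℝ) × (σ → ℝ))} (hN : N ∈ 𝓝 (p, c)) :
    ∃ Y : MvPolynomial σ D →ₐ[ℝ] ℝ,
      ((fun i ↦ Y (C (y i)), fun j ↦ Y (X j)) : (ι → ℝ) × (σ → ℝ)) ∈ N ∧ Y r ≠ 0 := by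
  obtain ⟨u, hu, t, ht, hut⟩ := mem_nhds_prod_iff.1 hN
  obtain ⟨m, hm⟩ := MvPolynomial.ne_zero_iff.1 hr
  obtain ⟨z, hzu, hzm⟩ := hp _ hm u hu
  have hmap : MvPolynomial.map (z : D →+* ℝ) r ≠ 0 :=
    MvPolynomial.ne_zero_iff.2 ⟨m, by simpa [MvPolynomial.coeff_map] using hzm⟩
  obtain ⟨c', hc', hct⟩ := (dense_setOf_eval_ne_zero hmap).inter_nhds_nonempty ht
  refine ⟨MvPolynomial.aevalTower z c', hut ⟨?_, ?_⟩, ?_⟩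
  · simpa [Function.comp_def] using hzu
  · simpa using hct
  · rwa [Set.mem_ofPred_eq, MvPolynomial.eval_map] at hc'

end CentralPoint

section Generic

variable {ι R : Type*} [CommRing R] [IsDomain R] [Algebra ℝ R] {g : ι → R}

theorem exists_forall_eval_ne_zero_imp (hg : IsTranscendenceBasis ℝ g) {d : R} (hd : d ≠ 0) :
    ∃ h : MvPolynomial ι ℝ, h ≠ 0 ∧ ∀ Y : R →ₐ[ℝ] ℝ, MvPolynomial.eval (Y ∘ g) h ≠ 0 → Y d ≠ 0 := by
  have := hg.isAlgebraic
  obtain ⟨⟨b, hb⟩, hb0, e, he⟩ := (Algebra.IsAlgebraic.isAlgebraic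
    (R := Algebra.adjoin ℝ (Set.range g)) d).exists_nonzero_dvd (mem_nonZeroDivisors_of_ne_zero hd)
  rw [Algebra.adjoin_range_eq_range_aeval] at hb
  obtain ⟨h, rfl⟩ := hb
  refine ⟨h, fun h0 ↦ hb0 (Subtype.ext (by simp [h0])), fun Y hY hYd ↦ hY ?_⟩
  have hde : MvPolynomial.aeval g h = d * e := he
  calc MvPolynomial.eval (Y ∘ g) h = Y (MvPolynomial.aeval g h) := by
        rw [MvPolynomial.comp_aeval_apply, MvPolynomial.aeval_eq_eval]; rfl
    _ = 0 := by rw [hde, map_mul, hYd, zero_mul]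

end Generic

section Disc

open MvPolynomial (C X)

variable {ι : Type*} {s : Set ι} {p : ι → ℝ} {E : ι → MvPolynomial (sᶜ : Set ι) ℝ}

theorem continuous_extendCompl {M : Type*} [Zero M] [TopologicalSpace M] :
    Continuous (extendCompl : ((sᶜ : Set ι) → M) → ι → M) := by
  refine continuous_pi fun i ↦ ?_
  by_cases hi : i ∈ s
  · simpa only [extendCompl_of_mem _ hi] using continuous_const
  · lift i to (sᶜ : Set ι) using hi
    simpa only [extendCompl_coe] using continuous_apply i

theorem continuous_deformedDisc :
    Continuous fun q : ℝ × ((sᶜ : Set ι) → ℝ) ↦ deformedDisc p E q.1 q.2 := by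
  have hE : Continuous fun q : ℝ × ((sᶜ : Set ι) → ℝ) ↦ polynomialMap E q.2 :=
    (continuous_polynomialMap E).comp continuous_snd
  have hx : Continuous fun q : ℝ × ((sᶜ : Set ι) → ℝ) ↦ (extendCompl q.2 : ι → ℝ) :=
    continuous_extendCompl.comp continuous_snd
  unfold deformedDisc
  fun_prop

theorem continuous_deformedDisc_add : Continuous fun q : (Option ι → ℝ) × ((sᶜ : Set ι) → ℝ) ↦
    deformedDisc p E (q.1 none) q.2 + q.1 ∘ some :=
  (continuous_deformedDisc.comp (by fun_prop :
    Continuous fun q : (Option ι → ℝ) × ((sᶜ : Set ι) → ℝ) ↦ (q.1 none, q.2))).add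
    (continuous_pi fun _ ↦ by fun_prop)

theorem locallyLipschitz_polynomialMap {κ : Type*} [Fintype ι] [Fintype κ]
    (f : ι → MvPolynomial κ ℝ) : LocallyLipschitz (polynomialMap f) := fun z ↦
  (hasStrictFDerivAt_pi.2 fun i ↦ hasStrictFDerivAt_eval (f i) z).exists_lipschitzOnWith

variable [Fintype ι] {τ : ℝ} {b : ι → ℝ} {x x' : (sᶜ : Set ι) → ℝ}

theorem dist_domRestrict_deformedDisc_add_le [Fintype s] :
    dist (s.domRestrict (deformedDisc p E τ x + b)) (s.domRestrict (deformedDisc p E τ x' + b)) ≤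
      |τ| * dist (polynomialMap E x) (polynomialMap E x') := by
  refine (dist_pi_le_iff (by positivity)).2 fun i ↦ ?_
  have hi := dist_le_pi_dist (polynomialMap E x) (polynomialMap E x') i
  simp only [Real.dist_eq] at hi
  simpa [deformedDisc, extendCompl_of_mem _ i.2, Real.dist_eq, ← mul_sub, abs_mul] using
    mul_le_mul_of_nonneg_left hi (abs_nonneg τ)

theorem dist_le_dist_deformedDisc_add [Fintype (sᶜ : Set ι)] :
    dist x x' ≤ dist (deformedDisc p E τ x + b) (deformedDisc p E τ x' + b) +
      |τ| * dist (polynomialMap E x) (polynomialMap E x') := by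
  refine (dist_pi_le_iff (by positivity)).2 fun k ↦ ?_
  have hdisc := dist_le_pi_dist (deformedDisc p E τ x + b) (deformedDisc p E τ x' + b) k
  have hE := mul_le_mul_of_nonneg_left
    (dist_le_pi_dist (polynomialMap E x) (polynomialMap E x') k) (abs_nonneg τ)
  refine le_trans ?_ (add_le_add hdisc hE)
  simp only [Real.dist_eq, ← abs_mul]
  refine le_trans (le_of_eq ?_) (abs_sub _ _)
  simp only [deformedDisc, Pi.add_apply, Pi.smul_apply, extendCompl_coe, smul_eq_mul]
  ring_nf

/- Two points of the disc over the same parameter differ by at most `|τ| (K + 1) M` times their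
distance. -/
theorem eventually_eq_of_deformedDisc_add_mem [Fintype s]
    {V W : Set (ι → ℝ)} {K : NNReal}
    (hK : AntilipschitzWith K ((V ∩ W).domRestrict s.domRestrict)) (hW : IsOpen W)
    {B : Set ((sᶜ : Set ι) → ℝ)} (hB : IsCompact B) (hBW : ∀ x ∈ B, p + extendCompl x ∈ W) :
    ∀ᶠ a : Option ι → ℝ in 𝓝 0, ∀ x ∈ B, ∀ x' ∈ B,
      deformedDisc p E (a none) x + a ∘ some ∈ V → deformedDisc p E (a none) x' + a ∘ some ∈ V →
      x = x' := by
  have := Fintype.ofFinite (sᶜ : Set ι)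
  obtain ⟨M, hM⟩ :=
    (locallyLipschitz_polynomialMap E).locallyLipschitzOn.exists_lipschitzOnWith_of_compact hB
  have hmem : ∀ᶠ a : Option ι → ℝ in 𝓝 0,
      ∀ x ∈ B, deformedDisc p E (a none) x + a ∘ some ∈ W :=
    (isOpen_setOf_forall_mem continuous_deformedDisc_add hB hW).mem_nhds fun x hx ↦ by
      simpa [deformedDisc, Pi.comp_zero] using hBW x hx
  have hsmall : ∀ᶠ a : Option ι → ℝ in 𝓝 0, |a none| * ((K + 1) * M) < 1 :=
    (by fun_prop : Continuous fun a : Option ι → ℝ ↦ |a none| * ((K + 1) * M)).continuousAt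
      |>.eventually_lt continuousAt_const (by simp)
  filter_upwards [hmem, hsmall] with a haW ha x hx x' hx' hv hv'
  by_contra hne
  have hanti := hK.le_mul_dist ⟨_, hv, haW x hx⟩ ⟨_, hv', haW x' hx'⟩
  have hE : |a none| * dist (polynomialMap E x) (polynomialMap E x') ≤
      |a none| * (M * dist x x') :=
    mul_le_mul_of_nonneg_left (hM.dist_le_mul x hx x' hx') (abs_nonneg _)
  have hs := (dist_domRestrict_deformedDisc_add_le (p := p) (b := a ∘ some)).trans hE
  have hle : dist x x' ≤ |a none| * ((K + 1) * M) * dist x x' :=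
    calc dist x x' ≤ K * (|a none| * (M * dist x x')) + |a none| * (M * dist x x') :=
          dist_le_dist_deformedDisc_add.trans (add_le_add
            (hanti.trans (mul_le_mul_of_nonneg_left hs K.coe_nonneg)) hE)
      _ = |a none| * ((K + 1) * M) * dist x x' := by ring
  exact hle.not_gt (mul_lt_of_lt_one_left (dist_pos.2 hne) ha)

end Disc

section Linking

open MvPolynomial (C X zeroLocus)

variable {ι D : Type*} [CommRing D] [Algebra ℝ D] {s : Set ι} {y : ι → D} {p : ι → ℝ}
  {E : ι → MvPolynomial (sᶜ : Set ι) ℝ}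

theorem comp_C_eq_of_comp_discOffset_eq {Y : MvPolynomial (Option (sᶜ : Set ι)) D →ₐ[ℝ] ℝ}
    {a : Option ι → ℝ} (hY : Y ∘ discOffset y p E = a) :
    (fun i ↦ Y (C (y i))) = deformedDisc p E (a none) (fun k ↦ Y (X (some k))) + a ∘ some := by
  subst hY
  funext i
  change Y (C (y i)) = deformedDisc p E _ _ i + Y (discOffset y p E (some i))
  rw [map_discOffset_some]
  exact (add_sub_cancel _ _).symm

theorem exists_comp_discOffset_mem [Fintype (sᶜ : Set ι)] (hp : IsCentralPoint y p)
    (hg : AlgebraicIndependent ℝ (discOffset y p E))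
    {w : MvPolynomial (Option ι) ℝ} (hw : w ≠ 0) {N : Set (Option ι → ℝ)} (hN : N ∈ 𝓝 0) {c : ℝ}
    (hc : 0 < c) : ∃ Y : MvPolynomial (Option (sᶜ : Set ι)) D →ₐ[ℝ] ℝ,
      Y ∘ discOffset y p E ∈ N ∧ MvPolynomial.eval (Y ∘ discOffset y p E) w ≠ 0 ∧
        ∑ k, Y (X (some k)) ^ 2 ≤ c := by
  let Ψ (q : (ι → ℝ) × (Option (sᶜ : Set ι) → ℝ)) (o : Option ι) : ℝ :=
    o.elim (q.2 none) (q.1 - deformedDisc p E (q.2 none) fun k ↦ q.2 (some k))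
  have hΨ : Continuous Ψ := continuous_pi fun o ↦ by
    cases o with
    | none => exact (continuous_apply none).comp continuous_snd
    | some i =>
      have hdisc := (continuous_apply i).comp ((continuous_deformedDisc (p := p) (E := E)).comp
        (by fun_prop : Continuous fun q : (ι → ℝ) × (Option (sᶜ : Set ι) → ℝ) ↦
          (q.2 none, fun k ↦ q.2 (some k))))
      exact ((continuous_apply i).comp continuous_fst).sub hdisc
  have hΨ0 : Ψ (p, 0) = 0 := by
    funext o
    cases o <;> simp [Ψ, deformedDisc, ← Pi.zero_def]
  have hsum : ∀ᶠ q : (ι → ℝ) × (Option (sᶜ : Set ι) → ℝ) in 𝓝 (p, 0),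
      ∑ k, q.2 (some k) ^ 2 < c :=
    (by fun_prop : Continuous fun q : (ι → ℝ) × (Option (sᶜ : Set ι) → ℝ) ↦
      ∑ k, q.2 (some k) ^ 2).continuousAt.eventually_lt continuousAt_const (by simpa using hc)
  obtain ⟨Y, ⟨hYN, hYc⟩, hYw⟩ := hp.exists_mvPolynomial
    ((map_ne_zero_iff _ hg).2 hw)
    (Filter.inter_mem (hΨ.continuousAt.preimage_mem_nhds (hΨ0 ▸ hN)) hsum)
  have hYΨ : Ψ (fun i ↦ Y (C (y i)), fun j ↦ Y (X j)) = Y ∘ discOffset y p E := by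
    funext o
    cases o with
    | none => rfl
    | some i => exact (map_discOffset_some Y i).symm
  refine ⟨Y, hYΨ ▸ hYN, ?_, le_of_lt hYc⟩
  rwa [MvPolynomial.comp_aeval_apply, MvPolynomial.aeval_eq_eval] at hYw

theorem deformedDisc_add_notMem {U : Set (ι → ℝ)} {d : D}
    (hdU : ∀ z : D →ₐ[ℝ] ℝ, z d ≠ 0 → z ∘ y ∉ U)
    {Y : MvPolynomial (Option (sᶜ : Set ι)) D →ₐ[ℝ] ℝ} {a : Option ι → ℝ}
    (hY : Y ∘ discOffset y p E = a) (hYd : Y (C d) ≠ 0) :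
    deformedDisc p E (a none) (fun k ↦ Y (X (some k))) + a ∘ some ∉ U := by
  rw [← comp_C_eq_of_comp_discOffset_eq hY]
  exact hdU (Y.comp (Algebra.ofId D _ |>.restrictScalars ℝ)) hYd

theorem algHom_eq_of_comp_discOffset_eq (hy : Algebra.adjoin ℝ (Set.range y) = ⊤)
    {Y Y' : MvPolynomial (Option (sᶜ : Set ι)) D →ₐ[ℝ] ℝ}
    (hg : Y ∘ discOffset y p E = Y' ∘ discOffset y p E)
    (hx : ∀ k, Y (X (some k)) = Y' (X (some k))) : Y = Y' := by
  refine AlgHom.ext_of_adjoin_eq_top (adjoin_discOffset_union_eq_top (p := p) (E := E) hy) ?_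
  rintro _ (⟨o, rfl⟩ | ⟨k, rfl⟩)
  · exact congrFun hg o
  · exact hx k

theorem eventually_ncard_eq_one [Fintype ι] [Fintype s] [Fintype (sᶜ : Set ι)]
    (hy : Algebra.adjoin ℝ (Set.range y) = ⊤) {W : Set (ι → ℝ)} (hW : IsOpen W) {K : NNReal}
    (hK : AntilipschitzWith K
      ((zeroLocus ℝ (RingHom.ker (MvPolynomial.aeval (R := ℝ) y)) ∩ W).domRestrict s.domRestrict))
    {c : ℝ} (hdisc : ∀ x : (sᶜ : Set ι) → ℝ, ∑ k, x k ^ 2 ≤ c → p + extendCompl x ∈ W) :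
    ∀ᶠ a : Option ι → ℝ in 𝓝 0, ∀ Y : MvPolynomial (Option (sᶜ : Set ι)) D →ₐ[ℝ] ℝ,
      Y ∘ discOffset y p E = a → ∑ k, Y (X (some k)) ^ 2 ≤ c →
        {Y : MvPolynomial (Option (sᶜ : Set ι)) D →ₐ[ℝ] ℝ |
          Y ∘ discOffset y p E = a ∧ ∑ k, Y (X (some k)) ^ 2 ≤ c}.ncard = 1 := by
  have hB : IsCompact {x : (sᶜ : Set ι) → ℝ | ∑ k, x k ^ 2 ≤ c} := by
    simpa using isCompact_setOf_sum_sq_sub_le (0 : (sᶜ : Set ι) → ℝ) c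
  filter_upwards [eventually_eq_of_deformedDisc_add_mem (E := E) hK hW hB hdisc]
    with a huniq Y hYa hYc
  have hmem {Y : MvPolynomial (Option (sᶜ : Set ι)) D →ₐ[ℝ] ℝ} (hY : Y ∘ discOffset y p E = a) :
      deformedDisc p E (a none) (fun k ↦ Y (X (some k))) + a ∘ some ∈
        zeroLocus ℝ (RingHom.ker (MvPolynomial.aeval (R := ℝ) y)) := by
    rw [← comp_C_eq_of_comp_discOffset_eq hY]
    intro q hq
    have hYq := MvPolynomial.comp_aeval_apply y
      (Y.comp (Algebra.ofId D _ |>.restrictScalars ℝ)) q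
    rw [hq, map_zero] at hYq
    exact hYq.symm
  refine Set.ncard_eq_one.2 ⟨Y, Set.eq_singleton_iff_unique_mem.2
    ⟨⟨hYa, hYc⟩, fun Y' ⟨hY'a, hY'c⟩ ↦ ?_⟩⟩
  exact algHom_eq_of_comp_discOffset_eq hy (hY'a.trans hYa.symm)
    (congrFun (huniq _ hY'c _ hYc (hmem hY'a) (hmem hYa)))

/- The parity of the number of points of the variety on the disc at time `τ` displaced by `b` does
not depend on `(τ, b)`, as no point can enter through the shell, where the disc stays in `U`. -/
theorem exists_eventually_even_ncard_iff [IsDomain D] [Finite ι] [Fintype (sᶜ : Set ι)]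
    (hy : Algebra.adjoin ℝ (Set.range y) = ⊤) (hs : IsTranscendenceBasis ℝ (s.domRestrict y))
    {U : Set (ι → ℝ)} (hU : IsOpen U) {d : D} (hd : d ≠ 0)
    (hdU : ∀ z : D →ₐ[ℝ] ℝ, z d ≠ 0 → z ∘ y ∉ U) {c₀ c₁ : ℝ} (hc : c₀ < c₁)
    (hshell : ∀ x : (sᶜ : Set ι) → ℝ, ∑ k, x k ^ 2 ∈ Set.Icc c₀ c₁ → ∀ τ ∈ Set.Icc (0 : ℝ) 1,
      deformedDisc p E τ x ∈ U) :
    ∃ h : MvPolynomial (Option ι) ℝ, h ≠ 0 ∧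
      (∀ Y : MvPolynomial (Option (sᶜ : Set ι)) D →ₐ[ℝ] ℝ,
        MvPolynomial.eval (Y ∘ discOffset y p E) h ≠ 0 → Y (C d) ≠ 0) ∧
      ∀ᶠ q : (Option ι → ℝ) × (Option ι → ℝ) in 𝓝 (0, fun o ↦ o.elim 1 0),
        MvPolynomial.eval q.1 h ≠ 0 → MvPolynomial.eval q.2 h ≠ 0 →
        (Even {Y : MvPolynomial (Option (sᶜ : Set ι)) D →ₐ[ℝ] ℝ |
          Y ∘ discOffset y p E = q.1 ∧ ∑ k, Y (X (some k)) ^ 2 ≤ c₀}.ncard ↔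
        Even {Y : MvPolynomial (Option (sᶜ : Set ι)) D →ₐ[ℝ] ℝ |
          Y ∘ discOffset y p E = q.2 ∧ ∑ k, Y (X (some k)) ^ 2 ≤ c₀}.ncard) := by
  have hg := isTranscendenceBasis_discOffset (p := p) (E := E) hs
  obtain ⟨h, hh, hparity⟩ := exists_forall_dvd_even_ncard_comp_eq_iff hg
    (adjoin_discOffset_union_eq_top hy) hc
  obtain ⟨h', hh', hgen⟩ := exists_forall_eval_ne_zero_imp hg (d := C d)
    ((MvPolynomial.C_injective _ D).ne_iff' C.map_zero |>.2 hd)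
  have hgen' (Y : MvPolynomial (Option (sᶜ : Set ι)) D →ₐ[ℝ] ℝ)
      (hY : MvPolynomial.eval (Y ∘ discOffset y p E) (h * h') ≠ 0) : Y (C d) ≠ 0 :=
    hgen Y (right_ne_zero_of_mul (by rwa [map_mul] at hY))
  refine ⟨h * h', mul_ne_zero hh hh', hgen', ?_⟩
  let shell : Set ((sᶜ : Set ι) → ℝ) := {x | ∑ k, x k ^ 2 ∈ Set.Icc c₀ c₁}
  have hshell_compact : IsCompact shell := by
    have hball := isCompact_setOf_sum_sq_sub_le (0 : (sᶜ : Set ι) → ℝ) c₁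
    refine hball.of_isClosed_subset (isClosed_Icc.preimage (by fun_prop)) fun x hx ↦ ?_
    simpa using hx.2
  have hG := isOpen_setOf_forall_mem (continuous_deformedDisc_add (p := p) (E := E))
    hshell_compact hU
  have hsegment : segment ℝ (0 : Option ι → ℝ) (fun o ↦ o.elim 1 0) ⊆
      {c | ∀ x ∈ shell, deformedDisc p E (c none) x + c ∘ some ∈ U} := by
    rw [segment_eq_image]
    rintro _ ⟨τ, hτ, rfl⟩ x hx
    convert hshell x hx τ hτ using 1
    funext i
    simp
  filter_upwards [eventually_segment_subset hG hsegment] with q hq ha hb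
  refine hparity _ (dvd_mul_right h h') _ _ ha hb fun c hc hcw Y hY hYx ↦ ?_
  exact deformedDisc_add_notMem hdU hY (hgen' Y (hY ▸ hcw)) (hq hc _ (Set.Ioo_subset_Icc_self hYx))

/- Near `(τ, b) = (0, 0)` the variety meets the displaced disc in exactly one point. -/
theorem exists_deformedDisc_notMem [IsDomain D] [Fintype ι] [Fintype s] [Fintype (sᶜ : Set ι)]
    (hy : Algebra.adjoin ℝ (Set.range y) = ⊤) (hs : IsTranscendenceBasis ℝ (s.domRestrict y))
    (hp : IsCentralPoint y p) {U : Set (ι → ℝ)} (hU : IsOpen U) {d : D} (hd : d ≠ 0)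
    (hdU : ∀ z : D →ₐ[ℝ] ℝ, z d ≠ 0 → z ∘ y ∉ U) {W : Set (ι → ℝ)} (hW : IsOpen W) {K : NNReal}
    (hK : AntilipschitzWith K
      ((zeroLocus ℝ (RingHom.ker (MvPolynomial.aeval (R := ℝ) y)) ∩ W).domRestrict s.domRestrict))
    {c₀ c₁ : ℝ} (hc₀ : 0 < c₀) (hc : c₀ < c₁)
    (hdisc : ∀ x : (sᶜ : Set ι) → ℝ, ∑ k, x k ^ 2 ≤ c₀ → p + extendCompl x ∈ W)
    (hshell : ∀ x : (sᶜ : Set ι) → ℝ, ∑ k, x k ^ 2 ∈ Set.Icc c₀ c₁ → ∀ τ ∈ Set.Icc (0 : ℝ) 1,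
      deformedDisc p E τ x ∈ U) :
    ∃ x : (sᶜ : Set ι) → ℝ, ∑ k, x k ^ 2 ≤ c₀ ∧ deformedDisc p E 1 x ∉ U := by
  by_contra! hend
  obtain ⟨h, hh, hgen, hparity⟩ :=
    exists_eventually_even_ncard_iff hy hs hU hd hdU hc hshell
  obtain ⟨N₀, hN₀, N₁, hN₁, hN⟩ := mem_nhds_prod_iff.1 hparity
  have hg := isTranscendenceBasis_discOffset (p := p) (E := E) hs
  obtain ⟨Y, ⟨hYN, hY_one⟩, hYh, hYc⟩ := exists_comp_discOffset_mem hp hg.1 hh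
    (Filter.inter_mem hN₀ (eventually_ncard_eq_one (E := E) hy hW hK hdisc)) hc₀
  have hball : IsCompact {x : (sᶜ : Set ι) → ℝ | ∑ k, x k ^ 2 ≤ c₀} := by
    simpa using isCompact_setOf_sum_sq_sub_le (0 : (sᶜ : Set ι) → ℝ) c₀
  have hG := isOpen_setOf_forall_mem (continuous_deformedDisc_add (p := p) (E := E)) hball hU
  have hend' : ∀ x ∈ {x : (sᶜ : Set ι) → ℝ | ∑ k, x k ^ 2 ≤ c₀},
      deformedDisc p E 1 x + (0 : ι → ℝ) ∈ U := by simpa using hend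
  obtain ⟨b, hbh, hbN, hbU⟩ := (dense_setOf_eval_ne_zero hh).inter_nhds_nonempty
    (Filter.inter_mem hN₁ (hG.mem_nhds hend'))
  have hempty : {Y : MvPolynomial (Option (sᶜ : Set ι)) D →ₐ[ℝ] ℝ |
      Y ∘ discOffset y p E = b ∧ ∑ k, Y (X (some k)) ^ 2 ≤ c₀} = ∅ :=
    Set.eq_empty_of_forall_notMem fun Y' ⟨hY'b, hY'c⟩ ↦
      deformedDisc_add_notMem hdU hY'b (hgen Y' (hY'b ▸ hbh)) (hbU _ hY'c)
  have hiff := hN (Set.mk_mem_prod hYN hbN) hYh hbh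
  simp [hempty, hY_one Y rfl hYc] at hiff

end Linking

/-! ### Polynomial approximation -/

section Approximation

variable {κ : Type*} {K : Set (κ → ℝ)} {ε : ℝ}

theorem exists_mvPolynomial_forall_abs_eval_sub_lt (hK : IsCompact K) {g : (κ → ℝ) → ℝ}
    (hg : ContinuousOn g K) (hε : 0 < ε) :
    ∃ w : MvPolynomial κ ℝ, ∀ x ∈ K, |MvPolynomial.eval x w - g x| < ε := by
  have : CompactSpace K := isCompact_iff_compactSpace.1 hK
  let coord (k : κ) : C(K, ℝ) := ⟨fun x ↦ x.1 k, (continuous_apply k).comp continuous_subtype_val⟩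
  let Φ : MvPolynomial κ ℝ →ₐ[ℝ] C(K, ℝ) := MvPolynomial.aeval coord
  have hΦ (w : MvPolynomial κ ℝ) (x : K) : Φ w x = MvPolynomial.eval x.1 w := by
    simpa [MvPolynomial.aeval_eq_eval, Function.comp_def, coord] using
      MvPolynomial.comp_aeval_apply coord (ContinuousMap.evalAlgHom ℝ ℝ x) w
  have hsep : Φ.range.SeparatesPoints := fun x y hxy ↦ by
    obtain ⟨k, hk⟩ := Function.ne_iff.1 (Subtype.coe_injective.ne hxy)
    exact ⟨_, ⟨Φ (MvPolynomial.X k), ⟨_, rfl⟩, rfl⟩, by simpa [hΦ] using hk⟩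
  obtain ⟨⟨_, w, rfl⟩, hw⟩ :=
    ContinuousMap.exists_mem_subalgebra_near_continuous_of_separatesPoints Φ.range hsep
      (K.domRestrict g) hg.domRestrict ε hε
  exact ⟨w, fun x hx ↦ by simpa [hΦ] using hw ⟨x, hx⟩⟩

theorem exists_forall_dist_polynomialMap_comp_lt {ι : Type*} [Fintype ι]
    {f : ι → MvPolynomial ι ℝ} (hf : Function.Injective (polynomialMap f)) (hK : IsCompact K)
    {g : (κ → ℝ) → ι → ℝ} (hg : ContinuousOn g K)
    (hgK : ∀ x ∈ K, g x ∈ Set.range (polynomialMap f)) (hε : 0 < ε) :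
    ∃ w : ι → MvPolynomial κ ℝ, ∀ x ∈ K,
      dist (polynomialMap f (polynomialMap w x)) (g x) < ε := by
  have hemb : Topology.IsOpenEmbedding (polynomialMap f) :=
    .of_continuous_injective_isOpenMap (continuous_polynomialMap f) hf (isOpenMap_polynomialMap hf)
  choose! G hG using hgK
  have hGK : ContinuousOn G K := hemb.isInducing.continuousOn_iff.2 (hg.congr hG)
  obtain ⟨δ, hδ, hfδ⟩ := Metric.mem_uniformity_dist.1 <|
    (hK.image_of_continuousOn hGK).uniformContinuousAt_of_continuousAt (polynomialMap f)
      (fun _ _ ↦ (continuous_polynomialMap f).continuousAt) (Metric.dist_mem_uniformity hε)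
  choose w hw using fun i ↦ exists_mvPolynomial_forall_abs_eval_sub_lt hK
    ((continuous_apply i).comp_continuousOn hGK) hδ
  refine ⟨w, fun x hx ↦ ?_⟩
  have hwG : dist (G x) (polynomialMap w x) < δ := by
    rw [dist_comm, dist_pi_lt_iff hδ]
    exact fun i ↦ hw i x hx
  rw [← hG x hx, dist_comm]
  exact hfδ hwG (Set.mem_image_of_mem G hx)

end Approximation

/-! ### Surjectivity of injective polynomial maps -/

section Surjectivity

open MvPolynomial (C X aeval zeroLocus vanishingIdeal)

theorem exists_pos_forall_sum_sq_le_mem {κ : Type*} [Fintype κ] {N : Set (κ → ℝ)} (hN : N ∈ 𝓝 0) :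
    ∃ c > 0, ∀ x : κ → ℝ, ∑ k, x k ^ 2 ≤ c → x ∈ N := by
  obtain ⟨ε, hε, hεN⟩ := Metric.nhds_basis_closedBall.mem_iff.1 hN
  refine ⟨ε ^ 2, by positivity, fun x hx ↦ hεN ?_⟩
  rw [mem_closedBall_zero_iff, pi_norm_le_iff_of_nonneg hε.le]
  intro k
  exact abs_le_of_sq_le_sq ((Finset.single_le_sum (f := fun k ↦ x k ^ 2)
    (fun _ _ ↦ sq_nonneg _) (Finset.mem_univ k)).trans hx) hε.le

variable {ι : Type*} {f : ι → MvPolynomial ι ℝ} {s : Set ι} {p : ι → ℝ}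

/- Let `E x = f (w x) - (p + x)`, where `f ∘ w` approximates the undeformed disc on `K`. -/
theorem exists_deformedDisc_mem_range [Finite ι] (hf : Function.Injective (polynomialMap f))
    {K : Set ((sᶜ : Set ι) → ℝ)} (hK : IsCompact K)
    (hKf : ∀ x ∈ K, p + extendCompl x ∈ Set.range (polynomialMap f)) :
    ∃ E : ι → MvPolynomial (sᶜ : Set ι) ℝ,
      (∀ x, deformedDisc p E 1 x ∈ Set.range (polynomialMap f)) ∧
      ∀ x ∈ K, ∀ τ ∈ Set.Icc (0 : ℝ) 1, deformedDisc p E τ x ∈ Set.range (polynomialMap f) := by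
  cases nonempty_fintype ι
  have hdisc : Continuous fun x : (sᶜ : Set ι) → ℝ ↦ p + extendCompl x :=
    continuous_const.add continuous_extendCompl
  obtain ⟨ε, hε, hthick⟩ := (hK.image hdisc).exists_thickening_subset_open
    (isOpenMap_polynomialMap hf).isOpen_range (Set.image_subset_iff.2 hKf)
  obtain ⟨w, hw⟩ := exists_forall_dist_polynomialMap_comp_lt hf hK hdisc.continuousOn hKf hε
  let E (i : ι) : MvPolynomial (sᶜ : Set ι) ℝ := aeval w (f i) - (C (p i) + extendCompl X i)
  have hE (τ : ℝ) (x) : deformedDisc p E τ x = AffineMap.lineMap (p + extendCompl x)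
      (polynomialMap f (polynomialMap w x)) τ := by
    funext i
    simp only [deformedDisc, polynomialMap, E, map_sub, map_add, eval_aeval, MvPolynomial.eval_C,
      MvPolynomial.eval_X, map_extendCompl, AffineMap.lineMap_apply_module, Pi.add_apply,
      Pi.smul_apply, smul_eq_mul]
    ring
  refine ⟨E, fun x ↦ ⟨polynomialMap w x, by simp [hE]⟩, fun x hx τ hτ ↦ hthick ?_⟩
  refine Metric.mem_thickening_iff.2 ⟨_, Set.mem_image_of_mem _ hx, ?_⟩
  rw [hE, dist_lineMap_left, Real.norm_of_nonneg hτ.1, dist_comm]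
  exact (mul_le_of_le_one_left dist_nonneg hτ.2).trans_lt (hw x hx)

theorem mem_range_polynomialMap_of_isCentralPoint [Fintype ι] [Fintype s]
    (hf : Function.Injective (polynomialMap f))
    {D : Type*} [CommRing D] [IsDomain D] [Algebra ℝ D] {y : ι → D}
    (hy : Algebra.adjoin ℝ (Set.range y) = ⊤) (hs : IsTranscendenceBasis ℝ (s.domRestrict y))
    (hp : IsCentralPoint y p) {d : D} (hd : d ≠ 0)
    (hdf : ∀ z : D →ₐ[ℝ] ℝ, z d ≠ 0 → z ∘ y ∉ Set.range (polynomialMap f)) {W : Set (ι → ℝ)}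
    (hW : IsOpen W) (hpW : p ∈ W) {K : NNReal} (hK : AntilipschitzWith K
      ((zeroLocus ℝ (RingHom.ker (aeval (R := ℝ) y)) ∩ W).domRestrict s.domRestrict))
    (hWf : ∀ v ∈ W, v ∉ Set.range (polynomialMap f) →
      v ∈ zeroLocus ℝ (RingHom.ker (aeval (R := ℝ) y))) :
    p ∈ Set.range (polynomialMap f) := by
  classical
  by_contra hpf
  have hdisc : Continuous fun x : (sᶜ : Set ι) → ℝ ↦ p + extendCompl x :=
    continuous_const.add continuous_extendCompl
  obtain ⟨c, hc, hcW⟩ := exists_pos_forall_sum_sq_le_mem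
    (hdisc.continuousAt.preimage_mem_nhds (hW.mem_nhds (by simpa using hpW)))
  have hshell (x : (sᶜ : Set ι) → ℝ) (hx : ∑ k, x k ^ 2 ∈ Set.Icc (c / 2) c) :
      p + extendCompl x ∈ Set.range (polynomialMap f) := by
    by_contra hxf
    have hxp := hK.injective (a₁ := ⟨_, hWf _ (hcW x hx.2) hxf, hcW x hx.2⟩)
      (a₂ := ⟨p, hWf p hpW hpf, hpW⟩) (funext fun i ↦ by simp [extendCompl_of_mem _ i.2])
    have hx0 : x = 0 := funext fun k ↦ by simpa using congrFun (congrArg Subtype.val hxp) k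
    have := hx.1
    simp only [hx0, Pi.zero_apply, ne_eq, OfNat.ofNat_ne_zero, not_false_eq_true, zero_pow,
      Finset.sum_const_zero] at this
    linarith
  have hcompact : IsCompact {x : (sᶜ : Set ι) → ℝ | ∑ k, x k ^ 2 ∈ Set.Icc (c / 2) c} := by
    have hball := isCompact_setOf_sum_sq_sub_le (0 : (sᶜ : Set ι) → ℝ) c
    refine hball.of_isClosed_subset (isClosed_Icc.preimage (by fun_prop)) fun x hx ↦ ?_
    simpa using hx.2
  obtain ⟨E, hE, hEshell⟩ := exists_deformedDisc_mem_range hf hcompact hshell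
  obtain ⟨x, -, hx⟩ := exists_deformedDisc_notMem hy hs hp
    (isOpenMap_polynomialMap hf).isOpen_range hd hdf hW hK (half_pos hc) (half_lt_self hc)
    (fun x hx ↦ hcW x (hx.trans (half_le_self hc.le))) hEshell
  exact hx (hE x)

theorem quotientEval_comp_mk_X {P : Ideal (MvPolynomial ι ℝ)} {v : ι → ℝ}
    (hv : v ∈ zeroLocus ℝ P) : (quotientEval hv ∘ fun i ↦ Ideal.Quotient.mk P (X i)) = v :=
  funext fun i ↦ MvPolynomial.eval_X i

theorem isCentralPoint_mk {S B : Set (ι → ℝ)} (hB : IsOpen B) (hp : p ∈ S ∩ B)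
    (hloc : ∀ B' ⊆ B, IsOpen B' → (S ∩ B').Nonempty →
      vanishingIdeal ℝ (S ∩ B') = vanishingIdeal ℝ (S ∩ B)) :
    IsCentralPoint (fun i ↦ Ideal.Quotient.mk (vanishingIdeal ℝ (S ∩ B)) (X i)) p := by
  intro d hd N hN
  obtain ⟨q, rfl⟩ := Ideal.Quotient.mk_surjective d
  obtain ⟨N', hN'N, hN', hpN'⟩ := mem_nhds_iff.1 hN
  have hq : q ∉ vanishingIdeal ℝ (S ∩ (B ∩ N')) := by
    rw [hloc _ Set.inter_subset_left (hB.inter hN') ⟨p, hp.1, hp.2, hpN'⟩]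
    rwa [Ne, Ideal.Quotient.eq_zero_iff_mem] at hd
  rw [MvPolynomial.mem_vanishingIdeal_iff] at hq
  push Not at hq
  obtain ⟨v, ⟨hvS, hvB, hvN⟩, hvq⟩ := hq
  have hv : v ∈ zeroLocus ℝ (vanishingIdeal ℝ (S ∩ B)) := fun q hq ↦ hq v ⟨hvS, hvB⟩
  exact ⟨quotientEval hv, hN'N (by rwa [quotientEval_comp_mk_X]), hvq⟩

theorem aeval_quotientMk_X (P : Ideal (MvPolynomial ι ℝ)) (q : MvPolynomial ι ℝ) :
    aeval (fun i ↦ Ideal.Quotient.mk P (X i)) q = Ideal.Quotient.mk P q :=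
  (MvPolynomial.comp_aeval_apply X (Ideal.Quotient.mkₐ ℝ P) q).symm.trans (by simp)

theorem surjective_polynomialMap_of_injective [Finite ι]
    (hf : Function.Injective (polynomialMap f)) : Function.Surjective (polynomialMap f) := by
  classical
  cases nonempty_fintype ι
  rw [← Set.range_eq_univ, ← Set.compl_empty_iff, ← Set.not_nonempty_iff_eq_empty]
  intro hne
  obtain ⟨B, hB, -, hprime, hloc⟩ := exists_isOpen_isPrime_vanishingIdeal_inter hne
  set S := (Set.range (polynomialMap f))ᶜ
  set P := vanishingIdeal ℝ (S ∩ B)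
  let y (i : ι) : MvPolynomial ι ℝ ⧸ P := Ideal.Quotient.mk P (X i)
  have haeval (q : MvPolynomial ι ℝ) : aeval y q = Ideal.Quotient.mk P q := aeval_quotientMk_X P q
  have hker : RingHom.ker (aeval (R := ℝ) y) = P := Ideal.ext fun q ↦ by
    rw [RingHom.mem_ker, haeval, Ideal.Quotient.eq_zero_iff_mem]
  have hy : Algebra.adjoin ℝ (Set.range y) = ⊤ := by
    rw [Algebra.adjoin_range_eq_range_aeval, AlgHom.range_eq_top]
    exact fun d ↦ (Ideal.Quotient.mk_surjective d).imp fun q hq ↦ (haeval q).trans hq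
  obtain ⟨h, hhP, hh⟩ := exists_notMem_range_polynomialMap hf
    (disjoint_compl_left.mono_left Set.inter_subset_left) hprime
  obtain ⟨s, hs⟩ := exists_isTranscendenceBasis_domRestrict hy
  obtain ⟨g, hg, hgW⟩ := exists_aeval_ne_zero_forall_antilipschitzWith hs
  obtain ⟨p, hp, hpg⟩ : ∃ p ∈ S ∩ B, MvPolynomial.eval p g ≠ 0 := by
    rw [haeval, Ne, Ideal.Quotient.eq_zero_iff_mem, MvPolynomial.mem_vanishingIdeal_iff] at hg
    push Not at hg
    exact hg
  obtain ⟨W, hW, K, hK⟩ := hgW p hpg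
  refine hp.1 (mem_range_polynomialMap_of_isCentralPoint hf hy hs (isCentralPoint_mk hB hp hloc)
    (d := Ideal.Quotient.mk P h) ?_ ?_ (isOpen_interior.inter hB)
    ⟨mem_interior_iff_mem_nhds.2 hW, hp.2⟩ (K := K) ?_ ?_)
  · rwa [Ne, Ideal.Quotient.eq_zero_iff_mem]
  · intro z hz
    obtain ⟨v, hv, rfl⟩ := exists_eq_quotientEval z
    rw [quotientEval_comp_mk_X]
    exact hh v hv hz
  · exact fun v v' ↦ hK ⟨v, v.2.1, interior_subset v.2.2.1⟩ ⟨v', v'.2.1, interior_subset v'.2.2.1⟩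
  · intro v hv hvf
    rw [hker]
    exact fun q hq ↦ hq v ⟨hvf, hv.2⟩

end Surjectivity

theorem exists_polynomialMap_eq_sum_prod_smul {ι κ : Type*} [Fintype ι] [DecidableEq ι]
    (u : (ι → Bool) → κ → ℝ) :
    ∃ q : κ → MvPolynomial ι ℝ,
      ∀ z, polynomialMap q z = ∑ δ, (∏ i, if δ i then z i else 1) • u δ := by
  refine ⟨fun k ↦ ∑ δ : ι → Bool, (∏ i, if δ i then MvPolynomial.X i else 1) *
    MvPolynomial.C (u δ k), fun z ↦ funext fun k ↦ ?_⟩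
  simp only [polynomialMap, map_sum, map_mul, map_prod, apply_ite (MvPolynomial.eval z), map_one,
    MvPolynomial.eval_X, MvPolynomial.eval_C, Finset.sum_apply, Pi.smul_apply, smul_eq_mul]

theorem card_le_of_injective_polynomialMap {ι κ : Type*} [Fintype ι] [Fintype κ]
    {q : κ → MvPolynomial ι ℝ} (hq : Function.Injective (polynomialMap q)) :
    Fintype.card ι ≤ Fintype.card κ := by
  classical
  by_contra! hlt
  obtain ⟨j⟩ := Function.Embedding.nonempty_of_card_le hlt.le
  obtain ⟨i₀, hi₀⟩ : ∃ i₀, ∀ k, j k ≠ i₀ := by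
    by_contra! hj
    exact hlt.not_ge (Fintype.card_le_of_surjective j hj)
  let q₀ : ι → MvPolynomial ι ℝ := Function.extend j q 0
  have hq₀ : Function.Injective (polynomialMap q₀) := by
    refine fun z z' h ↦ hq (funext fun k ↦ ?_)
    simpa [polynomialMap, q₀, j.injective.extend_apply] using congrFun h (j k)
  obtain ⟨z, hz⟩ := surjective_polynomialMap_of_injective hq₀ 1
  have hzero : q₀ i₀ = 0 := Function.extend_apply' _ _ _ fun ⟨k, hk⟩ ↦ hi₀ k hk
  simpa [polynomialMap, hzero] using congrFun hz i₀

end RealPolynomialMap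

namespace Collineation

theorem linearCombination_update {R M ι : Type*} [Semiring R] [AddCommMonoid M] [Module R M]
    [Fintype ι] [DecidableEq ι] (v : ι → M) (α : ι → R) (i : ι) (t : R) :
    Fintype.linearCombination R v (Function.update α i t) =
      Fintype.linearCombination R v (Function.update α i 0) + t • v i := by
  have hup : Function.update α i t = Function.update α i 0 + Pi.single i t := by
    ext j
    obtain rfl | hj := eq_or_ne j i <;> simp [*]
  rw [hup, map_add, Fintype.linearCombination_apply_single]

theorem lineThru_eq_range {k : ℕ} (a b : Fin k → ℝ) :
    lineThru a b = Set.range fun t : ℝ ↦ a + t • b :=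
  Set.ext fun _ ↦ exists_congr fun _ ↦ eq_comm

theorem exists_isLineCoordinate_linearCombination {n m : ℕ} {v : Fin n → Fin n → ℝ}
    {F : (Fin n → ℝ) → Fin m → ℝ}
    (hF : Function.Injective (F ∘ Fintype.linearCombination ℝ v))
    (hline : ∀ i a, IsLine (F '' lineThru a (v i))) (i : Fin n) (α : Fin n → ℝ) :
    ∃ g, IsLineCoordinate
      (fun t ↦ (F ∘ Fintype.linearCombination ℝ v) (Function.update α i t)) g := by
  obtain ⟨a, b, -, hab⟩ := hline i (Fintype.linearCombination ℝ v (Function.update α i 0))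
  refine exists_isLineCoordinate (hF.comp (Function.update_injective α i)) (p := a) (q := a + b) ?_
  have hlineMap : (AffineMap.lineMap a (a + b) : ℝ → Fin m → ℝ) = fun t ↦ a + t • b :=
    funext fun t ↦ by simp [AffineMap.lineMap_apply, add_comm]
  rw [hlineMap, ← lineThru_eq_range, ← hab, lineThru_eq_range, ← Set.range_comp]
  exact congrArg Set.range (funext fun t ↦ congrArg F (linearCombination_update v α i t))

end Collineation

/-- **Theorem (polynomial form for collineations in n directions).**
If `m, n ≥ 2`, `v₁,…,vₙ ∈ ℝⁿ` are linearly independent and `F : ℝⁿ → ℝᵐ` is an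
injection mapping each line in `ℒ(v₁,…,vₙ)` onto a line, then (taking `uᵢ = vᵢ` as
the basis) there are coefficients `u_δ ∈ ℝᵐ` for `δ ∈ {0,1}ⁿ` and bijections
`fᵢ : ℝ → ℝ` with `fᵢ 0 = 0`, `fᵢ 1 = 1`, such that
`F (∑ αᵢ vᵢ) = ∑_δ (∏ᵢ fᵢ(αᵢ)^{δᵢ}) u_δ`. Moreover `m ≥ n`, and if `m = n` then
`F` is a bijection. -/
theorem polynomial_form_of_collineation_n_directions
    {n m : ℕ} (hn : 2 ≤ n) (hm : 2 ≤ m)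
    (v : Fin n → (Fin n → ℝ)) (hv : LinearIndependent ℝ v)
    (F : (Fin n → ℝ) → (Fin m → ℝ))
    (hinj : Function.Injective F)
    (honto : ∀ (i : Fin n) (a : Fin n → ℝ), IsLine (F '' lineThru a (v i))) :
    (∃ (u : (Fin n → Bool) → (Fin m → ℝ)) (f : Fin n → ℝ → ℝ),
      (∀ i, Function.Bijective (f i) ∧ f i 0 = 0 ∧ f i 1 = 1) ∧
      ∀ α : Fin n → ℝ,
        F (∑ i, α i • v i) =
          ∑ δ : Fin n → Bool, (∏ i, if δ i then f i (α i) else 1) • u δ) ∧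
    n ≤ m ∧ (m = n → Function.Surjective F) := by
  have hG : Function.Injective (F ∘ Fintype.linearCombination ℝ v) :=
    hinj.comp hv.fintypeLinearCombination_injective
  obtain ⟨u, f, hf, hform⟩ :=
    Collineation.exists_eq_sum_prod_smul hG <|
      Collineation.exists_isLineCoordinate_linearCombination hG honto
  obtain ⟨q, hq⟩ := RealPolynomialMap.exists_polynomialMap_eq_sum_prod_smul u
  have hfactor : RealPolynomialMap.polynomialMap q ∘ Pi.map f = F ∘ Fintype.linearCombination ℝ v :=
    funext fun α ↦ (hq _).trans (hform α).symm
  have hf_surj : Function.Surjective (Pi.map f) := .piMap fun i ↦ (hf i).1.surjective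
  have hq_inj : Function.Injective (RealPolynomialMap.polynomialMap q) :=
    .of_comp_right (hfactor ▸ hG) hf_surj
  refine ⟨⟨u, f, hf, hform⟩, ?_, ?_⟩
  · simpa using RealPolynomialMap.card_le_of_injective_polynomialMap hq_inj
  · rintro rfl
    have hq_surj := RealPolynomialMap.surjective_polynomialMap_of_injective hq_inj
    exact .of_comp (hfactor ▸ hq_surj.comp hf_surj)
end
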